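/- arXiv:2010.01583 — 7 statements merged into one kernel-verified Lean document; each statement's English description precedes it below -/
import Mathlib

section
/- Let β ∈ 𝒦 and let γ : [0,1] → ℂ be a continuous map with γ(1) = β and f(γ(t)) = t·f(β) for all t ∈ [0,1]. Then γ(t) ∈ 𝒦 for every t ∈ [0,1]. -/
open Polynomial Complex Set

/-!
Since a closed convex set is an intersection of half-planes, it suffices to show that a path of
steepest descent cannot leave a closed half-plane `Re (c w) ≤ u` which contains the roots of `f`
and the point `γ 1`. If it did, `Re (c γ)` would have an interior maximum at some `τ`, with all
roots `w` on the strictly lower side of `z = γ τ`. Then every `c (z - w)` has positive real part,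
hence so does `c f(z) / f'(z)`, because `f'(z) / (c f(z))` is the sum of the `(c (z - w))⁻¹`. But
differentiating `f ∘ γ` gives `τ γ'(τ) = f(z) / f'(z)`, so `Re (c γ)` has positive derivative
at `τ`.
-/

theorem re_inv_pos {z : ℂ} (hz : 0 < z.re) : 0 < (z⁻¹).re := by
  have hz0 : z ≠ 0 := by
    rintro rfl
    exact hz.ne rfl
  rw [inv_re]
  exact div_pos hz (normSq_pos.mpr hz0)

theorem multiset_sum_re_pos {ι : Type*} {S : Multiset ι} (hS : S ≠ 0) {g : ι → ℂ}
    (hg : ∀ i ∈ S, 0 < (g i).re) : 0 < ((S.map g).sum).re := by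
  calc
    0 = (S.map fun _ ↦ (0 : ℝ)).sum := Multiset.sum_map_zero.symm
    _ < (S.map fun i ↦ (g i).re).sum := Multiset.sum_lt_sum_of_nonempty hS hg
    _ = ((S.map g).sum).re := (S.sum_hom' reAddGroupHom g)

theorem re_mul_eval_div_eval_derivative_pos {f : ℂ[X]} (hf : 0 < f.degree) {c z : ℂ}
    (hz : ∀ w, f.IsRoot w → 0 < (c * (z - w)).re) :
    0 < (c * (f.eval z / f.derivative.eval z)).re := by
  have hfz : f.eval z ≠ 0 := fun h ↦ by simpa using hz z h
  have hroots : f.roots ≠ 0 :=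
    (IsAlgClosed.splits f).roots_ne_zero (natDegree_pos_iff_degree_pos.mpr hf).ne'
  have hlogDeriv : f.derivative.eval z / f.eval z / c =
      (f.roots.map fun w ↦ (c * (z - w))⁻¹).sum := by
    rw [(IsAlgClosed.splits f).eval_derivative_div_eval_of_ne_zero hfz, div_eq_mul_inv,
      ← Multiset.sum_map_mul_right]
    simp only [one_div, mul_inv_rev]
  have hpos : 0 < (f.derivative.eval z / f.eval z / c).re := by
    rw [hlogDeriv]
    exact multiset_sum_re_pos hroots fun w hw ↦ re_inv_pos (hz w (isRoot_of_mem_roots hw))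
  simpa only [inv_div, div_eq_mul_inv, mul_inv_rev, inv_inv] using re_inv_pos hpos

theorem hasDerivAt_of_comp_left {𝕜 𝕜' : Type*} [NontriviallyNormedField 𝕜]
    [NontriviallyNormedField 𝕜'] [NormedAlgebra 𝕜 𝕜'] {f : 𝕜' → 𝕜'} {g h : 𝕜 → 𝕜'} {f' h' : 𝕜'}
    {a : 𝕜} (hg : ContinuousAt g a) (hf : HasDerivAt f f' (g a)) (hf' : f' ≠ 0)
    (hh : HasDerivAt h h' a) (hcomp : f ∘ g =ᶠ[nhds a] h) : HasDerivAt g (h' / f') a := by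
  have hleft : Function.LeftInverse
      ((ContinuousLinearMap.toSpanSingleton 𝕜' f'⁻¹).restrictScalars 𝕜)
      ((ContinuousLinearMap.toSpanSingleton 𝕜' f').restrictScalars 𝕜) := fun x ↦ by
    simp [hf']
  simpa [div_eq_mul_inv] using
    ((hf.hasFDerivAt.restrictScalars 𝕜).of_comp_of_leftInverse hg hh.hasFDerivAt hcomp
      hleft).hasDerivAt

/-- A path of steepest descent for `|f|`, run backwards from the root `γ 0` to the starting
point `γ 1`. -/
structure IsReverseDescentPath (f : ℂ[X]) (γ : ℝ → ℂ) : Prop where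
  continuousOn : ContinuousOn γ (Icc 0 1)
  eval_eq : ∀ t ∈ Icc (0 : ℝ) 1, f.eval (γ t) = t * f.eval (γ 1)

namespace IsReverseDescentPath

variable {f : ℂ[X]} {γ : ℝ → ℂ} {τ : ℝ}

theorem isRoot_zero (hγ : IsReverseDescentPath f γ) : f.IsRoot (γ 0) := by
  simpa using hγ.eval_eq 0 (left_mem_Icc.mpr zero_le_one)

theorem hasDerivAt (hγ : IsReverseDescentPath f γ) (hτ : τ ∈ Ioo 0 1)
    (hf' : f.derivative.eval (γ τ) ≠ 0) :
    HasDerivAt γ (f.eval (γ 1) / f.derivative.eval (γ τ)) τ := by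
  have hIcc : Icc 0 1 ∈ nhds τ := Icc_mem_nhds hτ.1 hτ.2
  refine hasDerivAt_of_comp_left (hγ.continuousOn.continuousAt hIcc) (f.hasDerivAt (γ τ)) hf'
    (h := fun t : ℝ ↦ t * f.eval (γ 1)) ?_ ?_
  · simpa using (hasDerivAt_id τ).ofReal_comp.mul_const (f.eval (γ 1))
  · filter_upwards [hIcc] with t ht using hγ.eval_eq t ht

theorem not_isLocalMax_re_mul (hγ : IsReverseDescentPath f γ) (hτ : τ ∈ Ioo 0 1) {c : ℂ}
    (hroots : ∀ w, f.IsRoot w → 0 < (c * (γ τ - w)).re) :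
    ¬ IsLocalMax (fun t ↦ (c * γ t).re) τ := by
  intro hmax
  have hf0 : f ≠ 0 := by
    rintro rfl
    simpa using hroots (γ τ) (by simp)
  have hpos : 0 < (c * (f.eval (γ τ) / f.derivative.eval (γ τ))).re :=
    re_mul_eval_div_eval_derivative_pos (degree_pos_of_root hf0 hγ.isRoot_zero) hroots
  have hf' : f.derivative.eval (γ τ) ≠ 0 := fun h ↦ by simp [h] at hpos
  have hderiv : (c * (f.eval (γ 1) / f.derivative.eval (γ τ))).re = 0 :=
    hmax.hasDerivAt_eq_zero
      (reCLM.hasFDerivAt.comp_hasDerivAt τ ((hγ.hasDerivAt hτ hf').const_mul c))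
  rw [hγ.eval_eq τ (Ioo_subset_Icc_self hτ), mul_div_assoc, mul_left_comm, re_ofReal_mul, hderiv,
    mul_zero] at hpos
  exact hpos.false

theorem re_mul_le (hγ : IsReverseDescentPath f γ) {c : ℂ} {u : ℝ}
    (hroots : ∀ w, f.IsRoot w → (c * w).re ≤ u) (hγ1 : (c * γ 1).re ≤ u) :
    ∀ t ∈ Icc (0 : ℝ) 1, (c * γ t).re ≤ u := by
  obtain ⟨τ, hτ, hmax⟩ := isCompact_Icc.exists_isMaxOn (nonempty_Icc.mpr zero_le_one)
    (continuous_re.comp_continuousOn (hγ.continuousOn.const_mul c))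
  suffices hle : (c * γ τ).re ≤ u from fun t ht ↦ (hmax ht).trans hle
  by_contra! hlt
  have hτ0 : τ ≠ 0 := by
    rintro rfl
    exact hlt.not_ge (hroots _ hγ.isRoot_zero)
  have hτ1 : τ ≠ 1 := by
    rintro rfl
    exact hlt.not_ge hγ1
  have hτ' : τ ∈ Ioo 0 1 := ⟨hτ.1.lt_of_ne' hτ0, hτ.2.lt_of_ne hτ1⟩
  refine hγ.not_isLocalMax_re_mul hτ' (fun w hw ↦ ?_)
    (hmax.isLocalMax (Icc_mem_nhds hτ'.1 hτ'.2))
  rw [mul_sub, sub_re, sub_pos]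
  exact (hroots w hw).trans_lt hlt

theorem mapsTo_of_isClosed (hγ : IsReverseDescentPath f γ) {K : Set ℂ} (hK : Convex ℝ K)
    (hKc : IsClosed K) (hroots : ∀ w, f.IsRoot w → w ∈ K) (hγ1 : γ 1 ∈ K) :
    MapsTo γ (Icc 0 1) K := by
  intro t ht
  by_contra hnot
  obtain ⟨l, u, hlK, hlt⟩ := RCLike.geometric_hahn_banach_closed_point (𝕜 := ℂ) hK hKc hnot
  obtain ⟨c, hl⟩ : ∃ c : ℂ, ∀ w, l w = c * w :=
    ⟨l 1, fun w ↦ by rw [mul_comm, ← smul_eq_mul, ← map_smul, smul_eq_mul, mul_one]⟩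
  simp only [hl, RCLike.re_to_complex] at hlK hlt
  exact hlt.not_ge
    (hγ.re_mul_le (fun w hw ↦ (hlK w (hroots w hw)).le) (hlK _ hγ1).le t ht)

end IsReverseDescentPath

theorem steepest_descent_stays_in_hull_general {f : ℂ[X]} {γ : ℝ → ℂ}
    (hγ : IsReverseDescentPath f γ) {K : Set ℂ} (hK : Convex ℝ K)
    (hroots : ∀ w, f.IsRoot w → w ∈ K) (hγ1 : γ 1 ∈ K) : MapsTo γ (Icc 0 1) K := by
  rcases eq_or_ne f 0 with rfl | hf
  · exact fun t _ ↦ hroots (γ t) (by simp)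
  have hfin : (insert (γ 1) {w | f.IsRoot w}).Finite := (finite_setOfPred_isRoot hf).insert _
  have hsub : insert (γ 1) {w | f.IsRoot w} ⊆ K := insert_subset hγ1 hroots
  have hhull := subset_convexHull ℝ (insert (γ 1) {w | f.IsRoot w})
  exact (hγ.mapsTo_of_isClosed (convex_convexHull ℝ _) (hfin.isCompact_convexHull ℝ).isClosed
    (fun w hw ↦ hhull (mem_insert_of_mem _ hw)) (hhull (mem_insert _ _))).mono_right
    (convexHull_min hsub hK)

theorem mem_range_of_isRoot_prod {R ι : Type*} [CommRing R] [IsDomain R] [Fintype ι] {α : ι → R}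
    {n : ι → ℕ} {w : R} (hw : (∏ j, (X - C (α j)) ^ n j).IsRoot w) : w ∈ range α := by
  rw [isRoot_prod] at hw
  obtain ⟨j, -, hj⟩ := hw
  rw [IsRoot, eval_pow] at hj
  exact ⟨j, root_X_sub_C.mp (eq_zero_of_pow_eq_zero hj)⟩

/-- Any path of steepest descent for `|f|` (parameterized in
reverse by `γ` with `f (γ t) = t • f β`) starting from a point `β` of the
convex hull `K` of the roots of `f` remains in `K`. -/
theorem steepest_descent_stays_in_hull
    (s : ℕ) (hs : 2 ≤ s)
    (α : Fin s → ℂ) (hα : Function.Injective α)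
    (n : Fin s → ℕ) (hn : ∀ j, 1 ≤ n j)
    (f : Polynomial ℂ) (hf : f = ∏ j, (X - C (α j)) ^ n j)
    (K : Set ℂ) (hK : K = convexHull ℝ (Set.range α))
    (β : ℂ) (hβ : β ∈ K)
    (γ : ℝ → ℂ) (hγcont : ContinuousOn γ (Set.Icc 0 1))
    (hγ1 : γ 1 = β)
    (hγf : ∀ t ∈ Set.Icc (0 : ℝ) 1, f.eval (γ t) = (t : ℂ) * f.eval β) :
    ∀ t ∈ Set.Icc (0 : ℝ) 1, γ t ∈ K := by
  subst hf hK hγ1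
  exact steepest_descent_stays_in_hull_general ⟨hγcont, hγf⟩ (convex_convexHull ℝ _)
    (fun _ hw ↦ subset_convexHull ℝ _ (mem_range_of_isRoot_prod hw)) hβ
end

section
/- Let β ∈ 𝒦 and let γ : [0,1] → ℂ be a continuous, piecewise continuously differentiable map with γ(1) = β and f(γ(t)) = t·f(β) for all t ∈ [0,1]. Then the length of γ satisfies ∫₀¹ |γ′(t)| dt ≤ π·N·R. -/
open Polynomial Complex Set

/-- A map `γ : ℝ → ℂ` is continuous and piecewise continuously differentiable
on `[a, b]` if it is continuous on `[a, b]` and there is a finite partition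
`a = t₀ < t₁ < ⋯ < t_k = b` such that `γ` is `C¹` on each subinterval
`[tᵢ, tᵢ₊₁]`. -/
def PiecewiseC1On (γ : ℝ → ℂ) (a b : ℝ) : Prop :=
  ContinuousOn γ (Set.Icc a b) ∧
    ∃ (k : ℕ) (t : Fin (k + 1) → ℝ), StrictMono t ∧ t 0 = a ∧ t (Fin.last k) = b ∧
      ∀ i : Fin k, ContDiffOn ℝ 1 γ (Set.Icc (t i.castSucc) (t i.succ))

/-!
Project the path to the line through the origin in direction `i * e`, `|e| = 1`. The points of the
path with a given projection lie on a line `{e * (x + i * y) | x ∈ ℝ}`, and since `f / w` takes real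
values along the path, they correspond to real zeros of the imaginary part of the degree `N`
polynomial `f (e * (x + i * y)) / w` in `x`. For all but countably many `e` its leading coefficient
is not real, so there are at most `N` such points. Moreover the path stays in the disk: it satisfies
`γ' = f(γ) / (t * f'(γ))`, and, as in the proof of the Gauss–Lucas theorem, the Newton step `f / f'`
points away from a disk containing the roots at every point outside it, so that `|γ - z₀|` has no
interior maximum exceeding `R`. Hence by Banach's indicatrix theorem the projection of the path has
variation at most `2 * N * R`, and averaging over the direction (Cauchy–Crofton) bounds the length
of the path by `π * N * R`.
-/

open MeasureTheory Filter Metric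
open scoped ENNReal Topology ComplexConjugate

/-! ### Fibres of the projections -/

lemma encard_real_im_eval_eq_zero_le (p : ℂ[X]) (hp : p.leadingCoeff.im ≠ 0) :
    {x : ℝ | (p.eval (x : ℂ)).im = 0}.encard ≤ p.natDegree := by
  set q := p - p.map (starRingEnd ℂ)
  have hq : q ≠ 0 := by
    refine fun h ↦ hp (conj_eq_iff_im.1 ?_)
    have hcoeff := congr_arg (coeff · p.natDegree) h
    rwa [coeff_sub, coeff_map, coeff_zero, sub_eq_zero, eq_comm] at hcoeff
  have hroot : ∀ x : ℝ, (p.eval (x : ℂ)).im = 0 → (x : ℂ) ∈ q.roots.toFinset := by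
    intro x hx
    have hconj : (p.map (starRingEnd ℂ)).eval (x : ℂ) = conj (p.eval (x : ℂ)) := by
      simpa only [conj_ofReal] using eval_map_apply (starRingEnd ℂ) (x : ℂ) (p := p)
    rw [Multiset.mem_toFinset, mem_roots hq, IsRoot.def, eval_sub, hconj, conj_eq_iff_im.2 hx,
      sub_self]
  calc {x : ℝ | (p.eval (x : ℂ)).im = 0}.encard
      ≤ (q.roots.toFinset : Set ℂ).encard :=
        encard_le_encard_of_injOn hroot ofReal_injective.injOn
    _ ≤ q.natDegree := by
        rw [encard_coe_eq_coe_finsetCard]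
        exact_mod_cast (Multiset.toFinset_card_le _).trans q.card_roots'
    _ ≤ p.natDegree := by
        exact_mod_cast natDegree_sub_le_of_le le_rfl natDegree_map_le |>.trans (max_self _).le

lemma encard_fiber_im_div_le {f : ℂ[X]} {γ : ℝ → ℂ} {s : Set ℝ} {w e : ℂ}
    (hγf : ∀ t ∈ s, f.eval (γ t) = t * w) (he0 : e ≠ 0)
    (he : (f.leadingCoeff / w * e ^ f.natDegree).im ≠ 0) (y : ℝ) :
    (s ∩ (fun t ↦ (γ t / e).im) ⁻¹' {y}).encard ≤ f.natDegree := by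
  have hw : w ≠ 0 := by rintro rfl; simp at he
  set p := C w⁻¹ * f.comp (C e * X + C (e * (y * I)))
  have hdeg : p.natDegree = f.natDegree := by
    rw [natDegree_C_mul (inv_ne_zero hw), natDegree_comp, natDegree_linear he0, mul_one]
  have hlead : p.leadingCoeff = f.leadingCoeff / w * e ^ f.natDegree := by
    rw [leadingCoeff_mul, leadingCoeff_C,
      leadingCoeff_comp (by rw [natDegree_linear he0]; exact one_ne_zero),
      leadingCoeff_linear he0, div_eq_inv_mul, mul_assoc]
  have heval : ∀ t ∈ s ∩ (fun t ↦ (γ t / e).im) ⁻¹' {y}, p.eval ((γ t / e).re : ℂ) = t := by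
    rintro t ⟨hts, rfl : _ = y⟩
    have hpoint : e * (γ t / e).re + e * ((γ t / e).im * I) = γ t := by
      rw [← mul_add, re_add_im, mul_div_cancel₀ _ he0]
    simp only [p, eval_mul, eval_C, eval_comp, eval_add, eval_X, hpoint, hγf t hts]
    rw [mul_comm, mul_assoc, mul_inv_cancel₀ hw, mul_one]
  rw [← hdeg]
  refine le_trans (encard_le_encard_of_injOn (f := fun t ↦ (γ t / e).re) ?_ ?_)
    (encard_real_im_eval_eq_zero_le p (hlead ▸ he))
  · intro t ht
    rw [mem_ofPred_eq, heval t ht, ofReal_im]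
  · intro t ht t' ht' h
    have h' : (γ t / e).re = (γ t' / e).re := h
    exact ofReal_injective (by rw [← heval t ht, ← heval t' ht', h'])

lemma countable_im_mul_exp_pow_eq_zero {c : ℂ} (hc : c ≠ 0) {n : ℕ} (hn : n ≠ 0) :
    {θ : ℝ | (c * exp (θ * I) ^ n).im = 0}.Countable := by
  refine (countable_range fun k : ℤ ↦ (k * Real.pi - arg c) / n).mono fun θ hθ ↦ ?_
  have hpolar : c * exp (θ * I) ^ n = (‖c‖ : ℂ) * exp ((arg c + n * θ : ℝ) * I) := by
    nth_rw 1 [← norm_mul_exp_arg_mul_I c]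
    rw [mul_assoc, ← exp_nat_mul, ← exp_add]
    push_cast
    ring_nf
  rw [mem_ofPred_eq, hpolar, im_ofReal_mul, exp_ofReal_mul_I_im] at hθ
  obtain ⟨k, hk⟩ := Real.sin_eq_zero_iff.1 ((mul_eq_zero.1 hθ).resolve_left (norm_ne_zero_iff.2 hc))
  refine ⟨k, ?_⟩
  rw [div_eq_iff (Nat.cast_ne_zero.2 hn)]
  linarith

/-! ### Banach's indicatrix inequality -/

section Indicatrix

variable {α : Type*} [ConditionallyCompleteLinearOrder α] [TopologicalSpace α] [OrderTopology α]
  [DenselyOrdered α] {u : α → ℝ} {s : Set α}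

lemma exists_mem_Ioo_eq_of_mem_uIoo {a b : α} {y : ℝ} (hab : a ≤ b)
    (hu : ContinuousOn u (Icc a b)) (hy : y ∈ uIoo (u a) (u b)) : ∃ t ∈ Ioo a b, u t = y := by
  obtain ⟨t, ht, rfl⟩ := intermediate_value_uIcc (uIcc_of_le hab ▸ hu) (uIoo_subset_uIcc_self hy)
  rw [uIcc_of_le hab] at ht
  refine ⟨t, ⟨ht.1.lt_of_ne ?_, ht.2.lt_of_ne ?_⟩, rfl⟩
  · rintro rfl
    exact left_notMem_uIoo hy
  · rintro rfl
    exact right_notMem_uIoo hy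

lemma sum_indicator_uIoo_le_encard_fiber [hs : s.OrdConnected] (hu : ContinuousOn u s) {p : ℕ → α}
    (hp : Monotone p) (hps : ∀ i, p i ∈ s) (m : ℕ) (y : ℝ) :
    ∑ i ∈ Finset.range m, (uIoo (u (p i)) (u (p (i + 1)))).indicator (1 : ℝ → ℝ≥0∞) y ≤
      (s ∩ u ⁻¹' {y}).encard := by
  classical
  have hcross : ∀ i, y ∈ uIoo (u (p i)) (u (p (i + 1))) →
      ∃ t ∈ Ioo (p i) (p (i + 1)), u t = y := fun i ↦
    exists_mem_Ioo_eq_of_mem_uIoo (hp i.le_succ) (hu.mono (hs.out (hps i) (hps (i + 1))))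
  choose! τ hτ hτy using hcross
  set T := (Finset.range m).filter fun i ↦ y ∈ uIoo (u (p i)) (u (p (i + 1)))
  have hmem : ∀ i ∈ T, y ∈ uIoo (u (p i)) (u (p (i + 1))) := fun i hi ↦ (Finset.mem_filter.1 hi).2
  have hτmono : StrictMonoOn τ T := fun i hi j hj hij ↦
    (hτ i (hmem i hi)).2.trans_le ((hp hij).trans (hτ j (hmem j hj)).1.le)
  have hτmaps : MapsTo τ T (s ∩ u ⁻¹' {y}) := fun i hi ↦
    ⟨hs.out (hps i) (hps (i + 1)) (Ioo_subset_Icc_self (hτ i (hmem i hi))), hτy i (hmem i hi)⟩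
  calc ∑ i ∈ Finset.range m, (uIoo (u (p i)) (u (p (i + 1)))).indicator (1 : ℝ → ℝ≥0∞) y
      = ((T : Set ℕ).encard : ℝ≥0∞) := by
        simp only [indicator_apply, Pi.one_apply, Finset.sum_boole, encard_coe_eq_coe_finsetCard,
          ENat.toENNReal_coe, T]
    _ ≤ (s ∩ u ⁻¹' {y}).encard := by
        exact_mod_cast encard_le_encard_of_injOn hτmaps hτmono.injOn

lemma eVariationOn_le_lintegral_encard_fiber [s.OrdConnected] (hu : ContinuousOn u s) :
    eVariationOn u s ≤ ∫⁻ y, ((s ∩ u ⁻¹' {y}).encard : ℝ≥0∞) := by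
  refine iSup_le fun ⟨m, p, hp, hps⟩ ↦ ?_
  calc ∑ i ∈ Finset.range m, edist (u (p (i + 1))) (u (p i))
      = ∑ i ∈ Finset.range m, ∫⁻ y, (uIoo (u (p i)) (u (p (i + 1)))).indicator 1 y := by
        refine Finset.sum_congr rfl fun i _ ↦ ?_
        rw [lintegral_indicator_one (s := uIoo _ _) measurableSet_Ioo, Real.volume_uIoo, edist_dist,
          Real.dist_eq]
    _ = ∫⁻ y, ∑ i ∈ Finset.range m, (uIoo (u (p i)) (u (p (i + 1)))).indicator 1 y :=
        (lintegral_finsetSum _ fun i _ ↦ measurable_one.indicator measurableSet_Ioo).symm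
    _ ≤ ∫⁻ y, ((s ∩ u ⁻¹' {y}).encard : ℝ≥0∞) :=
        lintegral_mono fun y ↦ sum_indicator_uIoo_le_encard_fiber hu hp hps m y

lemma eVariationOn_le_of_encard_fiber_le [s.OrdConnected] {a b : ℝ} {n : ℕ}
    (hu : ContinuousOn u s) (hmaps : MapsTo u s (Icc a b))
    (hfiber : ∀ y, (s ∩ u ⁻¹' {y}).encard ≤ n) :
    eVariationOn u s ≤ n * ENNReal.ofReal (b - a) := by
  have hsupp (y : ℝ) :
      ((s ∩ u ⁻¹' {y}).encard : ℝ≥0∞) ≤ (Icc a b).indicator (fun _ ↦ (n : ℝ≥0∞)) y := by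
    by_cases hy : y ∈ Icc a b
    · rw [indicator_of_mem hy]
      exact_mod_cast hfiber y
    · have hempty : s ∩ u ⁻¹' {y} = ∅ := by
        rw [eq_empty_iff_forall_notMem]
        rintro t ⟨hts, rfl⟩
        exact hy (hmaps hts)
      rw [hempty, encard_empty, ENat.toENNReal_zero]
      exact zero_le
  calc eVariationOn u s ≤ ∫⁻ y, ((s ∩ u ⁻¹' {y}).encard : ℝ≥0∞) :=
        eVariationOn_le_lintegral_encard_fiber hu
    _ ≤ ∫⁻ y, (Icc a b).indicator (fun _ ↦ (n : ℝ≥0∞)) y := lintegral_mono hsupp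
    _ = n * ENNReal.ofReal (b - a) := by
        rw [lintegral_indicator_const measurableSet_Icc, Real.volume_Icc]

end Indicatrix

/-! ### The Cauchy–Crofton inequality -/

lemma intervalIntegral_abs_sin_sub (a : ℝ) : ∫ θ in 0..Real.pi, |Real.sin (a - θ)| = 2 := by
  have hper : Function.Periodic (fun x ↦ |Real.sin x|) Real.pi := fun x ↦ by
    simp only [Real.sin_add_pi, abs_neg]
  calc ∫ θ in 0..Real.pi, |Real.sin (a - θ)|
      = ∫ x in (a - Real.pi)..(a - Real.pi + Real.pi), |Real.sin x| := by
        rw [intervalIntegral.integral_comp_sub_left (fun x ↦ |Real.sin x|), sub_zero,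
          sub_add_cancel]
    _ = ∫ x in 0..Real.pi, |Real.sin x| := by
        rw [hper.intervalIntegral_add_eq _ 0, zero_add]
    _ = ∫ x in 0..Real.pi, Real.sin x := by
        refine intervalIntegral.integral_congr fun x hx ↦ abs_of_nonneg ?_
        rw [uIcc_of_le Real.pi_nonneg] at hx
        exact Real.sin_nonneg_of_mem_Icc hx
    _ = 2 := by
        rw [integral_sin, Real.cos_zero, Real.cos_pi]
        norm_num

lemma abs_im_div_exp_mul_I (w : ℂ) (θ : ℝ) :
    |(w / exp (θ * I)).im| = ‖w‖ * |Real.sin (arg w - θ)| := by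
  have hpolar : w / exp (θ * I) = (‖w‖ : ℂ) * exp ((arg w - θ : ℝ) * I) := by
    nth_rw 1 [← norm_mul_exp_arg_mul_I w]
    rw [mul_div_assoc, ← exp_sub, ofReal_sub, sub_mul]
  rw [hpolar, im_ofReal_mul, exp_ofReal_mul_I_im, abs_mul, abs_norm]

lemma lintegral_enorm_im_div_exp_mul_I (w : ℂ) :
    ∫⁻ θ : ℝ in Ioc 0 Real.pi, ‖(w / exp (θ * I)).im‖ₑ = 2 * ‖w‖ₑ := by
  have hint : IntegrableOn (fun θ : ℝ ↦ (w / exp (θ * I)).im) (Ioc 0 Real.pi) :=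
    Continuous.integrableOn_Ioc (by fun_prop (disch := intro; exact exp_ne_zero _))
  have hreal : ∫ θ : ℝ in Ioc 0 Real.pi, ‖(w / exp (θ * I)).im‖ = 2 * ‖w‖ := by
    simp only [Real.norm_eq_abs, abs_im_div_exp_mul_I]
    rw [← intervalIntegral.integral_of_le Real.pi_nonneg, intervalIntegral.integral_const_mul,
      intervalIntegral_abs_sin_sub, mul_comm]
  rw [← ofReal_integral_norm_eq_lintegral_enorm hint, hreal, ENNReal.ofReal_mul zero_le_two,
    ENNReal.ofReal_ofNat, ofReal_norm]

lemma two_mul_eVariationOn_le_lintegral_projection {α : Type*} [LinearOrder α] (γ : α → ℂ)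
    (s : Set α) :
    2 * eVariationOn γ s ≤
      ∫⁻ θ : ℝ in Ioc 0 Real.pi, eVariationOn (fun t ↦ (γ t / exp (θ * I)).im) s := by
  rw [eVariationOn, ENNReal.mul_iSup]
  refine iSup_le fun ⟨m, p, hp, hps⟩ ↦ ?_
  calc 2 * ∑ i ∈ Finset.range m, edist (γ (p (i + 1))) (γ (p i))
      = ∑ i ∈ Finset.range m, ∫⁻ θ : ℝ in Ioc 0 Real.pi,
          ‖((γ (p (i + 1)) - γ (p i)) / exp (θ * I)).im‖ₑ := by
        simp only [lintegral_enorm_im_div_exp_mul_I, edist_eq_enorm_sub, Finset.mul_sum]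
    _ = ∫⁻ θ : ℝ in Ioc 0 Real.pi, ∑ i ∈ Finset.range m,
          ‖((γ (p (i + 1)) - γ (p i)) / exp (θ * I)).im‖ₑ := by
        refine (lintegral_finsetSum _ fun i _ ↦ Measurable.enorm ?_).symm
        fun_prop
    _ ≤ ∫⁻ θ : ℝ in Ioc 0 Real.pi, eVariationOn (fun t ↦ (γ t / exp (θ * I)).im) s := by
        refine lintegral_mono fun θ ↦ ?_
        simp only [sub_div, sub_im, ← edist_eq_enorm_sub]
        exact eVariationOn.sum_le hp hps

/-! ### Confinement to the disk -/

lemma re_div_pos_iff_inner_pos {z w : ℂ} : 0 < (z / w).re ↔ 0 < inner ℝ w z := by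
  have hdiv : (z / w).re = inner ℝ w z / normSq w := by
    rw [div_eq_mul_inv, inv_def, ← mul_assoc, re_mul_ofReal, ← Complex.inner, div_eq_mul_inv]
  rcases eq_or_ne w 0 with rfl | hw
  · simp only [div_zero, zero_re, inner_zero_left]
  · rw [hdiv, div_pos_iff_of_pos_right (normSq_pos.2 hw)]

lemma inner_sub_left_pos_of_norm_lt {E : Type*} [NormedAddCommGroup E] [InnerProductSpace ℝ E]
    {u v : E} (h : ‖v‖ < ‖u‖) : 0 < inner ℝ (u - v) u := by
  have hvu : inner ℝ v u ≤ ‖v‖ * ‖u‖ := real_inner_le_norm v u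
  have hu : 0 < ‖u‖ := (norm_nonneg v).trans_lt h
  rw [inner_sub_left, real_inner_self_eq_norm_mul_norm]
  nlinarith

lemma multiset_sum_map_pos {ι : Type*} {s : Multiset ι} (hs : s ≠ 0) {g : ι → ℝ}
    (hg : ∀ i ∈ s, 0 < g i) : 0 < (s.map g).sum := by
  obtain ⟨a, ha⟩ := Multiset.exists_mem_of_ne_zero hs
  simpa only [Multiset.map_const', Multiset.sum_replicate, smul_zero] using
    Multiset.sum_lt_sum (f := fun _ ↦ (0 : ℝ)) (fun i hi ↦ (hg i hi).le) ⟨a, ha, hg a ha⟩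

lemma inner_sub_eval_div_eval_derivative_pos {f : ℂ[X]} {z₀ z : ℂ} {R : ℝ} (hdeg : 0 < f.degree)
    (hroots : ∀ a ∈ f.roots, a ∈ closedBall z₀ R) (hz : z ∉ closedBall z₀ R) :
    0 < inner ℝ (z - z₀) (f.eval z / f.derivative.eval z) := by
  have hf : f ≠ 0 := ne_zero_of_degree_gt hdeg
  have hfz : f.eval z ≠ 0 := fun h ↦ hz (hroots z ((mem_roots hf).2 h))
  have hsplits : f.Splits := IsAlgClosed.splits f
  have hnonempty : f.roots ≠ 0 := by
    obtain ⟨a, ha⟩ := exists_root hdeg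
    exact fun h ↦ Multiset.notMem_zero a (h ▸ (mem_roots hf).2 ha)
  have hterm : ∀ a ∈ f.roots, 0 < ((z - z₀) * (1 / (z - a))).re := by
    intro a ha
    have hlt : ‖a - z₀‖ < ‖z - z₀‖ := by
      rw [← dist_eq_norm, ← dist_eq_norm]
      exact (hroots a ha).trans_lt (not_le.1 hz)
    rw [mul_one_div, re_div_pos_iff_inner_pos, ← sub_sub_sub_cancel_right z a z₀]
    exact inner_sub_left_pos_of_norm_lt hlt
  rw [real_inner_comm, ← re_div_pos_iff_inner_pos, div_div_eq_mul_div, mul_div_assoc,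
    hsplits.eval_derivative_div_eval_of_ne_zero hfz, ← Multiset.sum_map_mul_left]
  calc 0 < (f.roots.map fun a ↦ ((z - z₀) * (1 / (z - a))).re).sum :=
        multiset_sum_map_pos hnonempty hterm
    _ = ((f.roots.map fun a ↦ (z - z₀) * (1 / (z - a))).sum).re := by
        rw [← reCLM_apply, map_multiset_sum, Multiset.map_map]
        rfl

lemma hasDerivAt_of_hasDerivAt_comp {F : ℂ → ℂ} {γ : ℝ → ℂ} {t : ℝ} {F' w : ℂ}
    (hγ : ContinuousAt γ t) (hF : HasDerivAt F F' (γ t)) (hF' : F' ≠ 0)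
    (hFγ : HasDerivAt (fun x ↦ F (γ x)) w t) : HasDerivAt γ (w / F') t := by
  have hinv : Function.LeftInverse
      ((ContinuousLinearMap.toSpanSingleton ℂ F'⁻¹).restrictScalars ℝ)
      ((ContinuousLinearMap.toSpanSingleton ℂ F').restrictScalars ℝ) := fun v ↦ by
    simp [hF']
  simpa [div_eq_mul_inv] using (HasFDerivAt.of_comp_of_leftInverse hγ
    (hF.hasFDerivAt.restrictScalars ℝ) hFγ.hasFDerivAt .rfl hinv).hasDerivAt

lemma hasDerivAt_of_eval_eq_mul {f : ℂ[X]} {γ : ℝ → ℂ} {t : ℝ} {w : ℂ} (hγ : ContinuousAt γ t)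
    (hf : f.derivative.eval (γ t) ≠ 0) (hγf : ∀ᶠ x : ℝ in 𝓝 t, f.eval (γ x) = x * w) :
    HasDerivAt γ (w / f.derivative.eval (γ t)) t := by
  have hlin : HasDerivAt (fun x : ℝ ↦ (x : ℂ) * w) w t := by
    simpa only [one_mul, ofReal_one] using (hasDerivAt_id' t).ofReal_comp.mul_const w
  exact hasDerivAt_of_hasDerivAt_comp hγ (f.hasDerivAt _) hf (hlin.congr_of_eventuallyEq hγf)

lemma mapsTo_closedBall_of_eval_eq_mul {f : ℂ[X]} (hf : f ≠ 0) {z₀ w : ℂ} {R : ℝ}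
    (hroots : ∀ a ∈ f.roots, a ∈ closedBall z₀ R) {γ : ℝ → ℂ}
    (hγ : ContinuousOn γ (Icc 0 1)) (hγ1 : γ 1 ∈ closedBall z₀ R)
    (hγf : ∀ t ∈ Icc (0 : ℝ) 1, f.eval (γ t) = t * w) :
    MapsTo γ (Icc 0 1) (closedBall z₀ R) := by
  obtain ⟨t, ht, hmax⟩ := isCompact_Icc.exists_isMaxOn (nonempty_Icc.2 zero_le_one)
    ((hγ.sub continuousOn_const).norm.pow 2 : ContinuousOn (fun t ↦ ‖γ t - z₀‖ ^ 2) (Icc 0 1))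
  have hroot0 : f.IsRoot (γ 0) := by
    rw [IsRoot.def, hγf 0 (left_mem_Icc.2 zero_le_one), ofReal_zero, zero_mul]
  suffices hball : γ t ∈ closedBall z₀ R by
    intro x hx
    rw [mem_closedBall_iff_norm] at hball ⊢
    exact ((sq_le_sq₀ (norm_nonneg _) (norm_nonneg _)).1 (hmax hx)).trans hball
  by_contra hout
  have ht0 : 0 < t := ht.1.lt_of_ne (by rintro rfl; exact hout (hroots _ ((mem_roots hf).2 hroot0)))
  have ht1 : t < 1 := ht.2.lt_of_ne (by rintro rfl; exact hout hγ1)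
  have hnhds : Icc (0 : ℝ) 1 ∈ 𝓝 t := Icc_mem_nhds ht0 ht1
  have houtward := inner_sub_eval_div_eval_derivative_pos (degree_pos_of_root hf hroot0) hroots hout
  have hf' : f.derivative.eval (γ t) ≠ 0 := by
    intro h
    rw [h, div_zero, inner_zero_right] at houtward
    exact houtward.false
  have hγ' := hasDerivAt_of_eval_eq_mul (hγ.continuousAt hnhds) hf' (eventually_of_mem hnhds hγf)
  have hstationary : inner ℝ (γ t - z₀) (w / f.derivative.eval (γ t)) = 0 := by
    simpa using (hmax.isLocalMax hnhds).hasDerivAt_eq_zero (hγ'.sub_const z₀).norm_sq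
  rw [hγf t ht, mul_div_assoc, ← real_smul, inner_smul_right, hstationary, mul_zero] at houtward
  exact houtward.false

/-! ### Length and variation -/

section Length

variable {E : Type*} [NormedAddCommGroup E] [NormedSpace ℝ E] {f : ℝ → E}

lemma norm_deriv_le_abs_deriv_of_dist_le {g : ℝ → ℝ} {x : ℝ} (hg : DifferentiableAt ℝ g x)
    (hfg : ∀ᶠ y in 𝓝 x, dist (f x) (f y) ≤ dist (g x) (g y)) : ‖deriv f x‖ ≤ |deriv g x| := by
  by_cases hf : DifferentiableAt ℝ f x
  · refine le_of_tendsto_of_tendsto (hasDerivAt_iff_tendsto_slope.1 hf.hasDerivAt).norm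
      (hasDerivAt_iff_tendsto_slope.1 hg.hasDerivAt).norm ?_
    filter_upwards [hfg.filter_mono nhdsWithin_le_nhds] with y hy
    rw [slope_def_module, slope_def_module, norm_smul, norm_smul, ← dist_eq_norm', ← dist_eq_norm']
    gcongr
  · rw [deriv_zero_of_not_differentiableAt hf, norm_zero]
    exact abs_nonneg _

lemma dist_le_dist_variationOnFromTo {α E : Type*} [LinearOrder α] [PseudoMetricSpace E] {f : α → E}
    {s : Set α} (hf : LocallyBoundedVariationOn f s) {a x y : α} (ha : a ∈ s) (hx : x ∈ s)
    (hy : y ∈ s) :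
    dist (f x) (f y) ≤ dist (variationOnFromTo f s a x) (variationOnFromTo f s a y) := by
  wlog hxy : x ≤ y generalizing x y
  · rw [dist_comm, dist_comm (variationOnFromTo _ _ _ x)]
    exact this hy hx (le_of_not_ge hxy)
  calc dist (f x) (f y) ≤ (eVariationOn f (s ∩ Icc x y)).toReal :=
        (hf x y hx hy).dist_le ⟨hx, left_mem_Icc.2 hxy⟩ ⟨hy, right_mem_Icc.2 hxy⟩
    _ = variationOnFromTo f s a y - variationOnFromTo f s a x := by
        rw [variationOnFromTo.sub_right hf ha hy hx, variationOnFromTo.eq_of_le f s hxy]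
    _ ≤ dist (variationOnFromTo f s a x) (variationOnFromTo f s a y) := by
        rw [dist_comm, Real.dist_eq]
        exact le_abs_self _

lemma ae_norm_deriv_le_deriv_variationOnFromTo {a b : ℝ} (hab : a ≤ b)
    (hf : BoundedVariationOn f (Icc a b)) :
    ∀ᵐ t, t ∈ Ioo a b → ‖deriv f t‖ ≤ deriv (variationOnFromTo f (Icc a b) a) t := by
  have ha : a ∈ Icc a b := left_mem_Icc.2 hab
  have hmono := variationOnFromTo.monotoneOn hf.locallyBoundedVariationOn ha
  filter_upwards [hmono.ae_differentiableWithinAt_of_mem] with t hdiff ht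
  have hnhds : Icc a b ∈ 𝓝 t := Icc_mem_nhds ht.1 ht.2
  have htIcc : t ∈ Icc a b := Ioo_subset_Icc_self ht
  have hnonneg : 0 ≤ deriv (variationOnFromTo f (Icc a b) a) t := by
    rw [← derivWithin_of_mem_nhds hnhds]
    exact hmono.derivWithin_nonneg
  rw [← abs_of_nonneg hnonneg]
  refine norm_deriv_le_abs_deriv_of_dist_le ((hdiff htIcc).differentiableAt hnhds) ?_
  filter_upwards [hnhds] with y hy
  exact dist_le_dist_variationOnFromTo hf.locallyBoundedVariationOn ha htIcc hy

lemma integral_norm_deriv_le_eVariationOn {a b : ℝ} (hab : a ≤ b)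
    (hf : BoundedVariationOn f (Icc a b)) :
    ∫ t in a..b, ‖deriv f t‖ ≤ (eVariationOn f (Icc a b)).toReal := by
  set v := variationOnFromTo f (Icc a b) a
  have ha : a ∈ Icc a b := left_mem_Icc.2 hab
  have hmono : MonotoneOn v (Icc a b) :=
    variationOnFromTo.monotoneOn hf.locallyBoundedVariationOn ha
  have hmono' : MonotoneOn v (uIcc a b) := (uIcc_of_le hab).symm ▸ hmono
  calc ∫ t in a..b, ‖deriv f t‖ ≤ ∫ t in a..b, deriv v t := by
        rw [intervalIntegral.integral_of_le hab, intervalIntegral.integral_of_le hab,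
          ← restrict_Ioo_eq_restrict_Ioc]
        refine integral_mono_of_nonneg (ae_of_all _ fun t ↦ norm_nonneg _) ?_
          ((ae_restrict_iff' measurableSet_Ioo).2 (ae_norm_deriv_le_deriv_variationOnFromTo hab hf))
        exact (intervalIntegrable_iff_integrableOn_Ioo_of_le hab).1 hmono'.intervalIntegrable_deriv
    _ ≤ v b - v a := by
        have hmem := hmono'.intervalIntegral_deriv_mem_uIcc
        rw [uIcc_of_le (sub_nonneg.2 (hmono ha (right_mem_Icc.2 hab) hab))] at hmem
        exact hmem.2
    _ = (eVariationOn f (Icc a b)).toReal := by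
        simp only [v, variationOnFromTo.self, sub_zero, variationOnFromTo.eq_of_le _ _ hab,
          inter_self]

end Length

/-! ### The length bound -/

lemma eVariationOn_eq_zero_of_mapsTo_countable {α E : Type*} [LinearOrder α] [TopologicalSpace α]
    [MetricSpace E] {f : α → E} {s : Set α} {t : Set E} (hs : IsPreconnected s)
    (hf : ContinuousOn f s) (ht : t.Countable) (hmaps : MapsTo f s t) : eVariationOn f s = 0 :=
  eVariationOn.constant_on
    (ht.isTotallyDisconnected _ hmaps.image_subset (hs.image f hf))

lemma eVariationOn_im_div_le {f : ℂ[X]} {γ : ℝ → ℂ} {s : Set ℝ} [s.OrdConnected] {z₀ w e : ℂ}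
    {R : ℝ} (hγ : ContinuousOn γ s) (hball : MapsTo γ s (closedBall z₀ R))
    (hγf : ∀ t ∈ s, f.eval (γ t) = t * w) (he1 : ‖e‖ = 1)
    (he : (f.leadingCoeff / w * e ^ f.natDegree).im ≠ 0) :
    eVariationOn (fun t ↦ (γ t / e).im) s ≤ f.natDegree * ENNReal.ofReal (2 * R) := by
  have hmaps : MapsTo (fun t ↦ (γ t / e).im) s (closedBall (z₀ / e).im R) := by
    intro t ht
    calc dist (γ t / e).im (z₀ / e).im = |((γ t - z₀) / e).im| := by
          rw [Real.dist_eq, sub_div, sub_im]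
      _ ≤ ‖(γ t - z₀) / e‖ := abs_im_le_norm _
      _ = ‖γ t - z₀‖ := by rw [norm_div, he1, div_one]
      _ ≤ R := mem_closedBall_iff_norm.1 (hball ht)
  have he0 : e ≠ 0 := norm_ne_zero_iff.1 (he1 ▸ one_ne_zero)
  rw [Real.closedBall_eq_Icc] at hmaps
  convert eVariationOn_le_of_encard_fiber_le (by fun_prop) hmaps
    (encard_fiber_im_div_le hγf he0 he) using 3
  ring

theorem steepest_descent_length_le_general {f : ℂ[X]} (hf : f ≠ 0) {z₀ w : ℂ} {R : ℝ}
    (hroots : ∀ a ∈ f.roots, a ∈ closedBall z₀ R) {γ : ℝ → ℂ} (hγ : ContinuousOn γ (Icc 0 1))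
    (hγ1 : γ 1 ∈ closedBall z₀ R) (hγf : ∀ t ∈ Icc (0 : ℝ) 1, f.eval (γ t) = t * w) :
    eVariationOn γ (Icc 0 1) ≤ ENNReal.ofReal (Real.pi * f.natDegree * R) := by
  rcases eq_or_ne w 0 with rfl | hw
  · have hzeros : MapsTo γ (Icc 0 1) {z | f.IsRoot z} := fun t ht ↦
      (hγf t ht).trans (mul_zero _)
    rw [eVariationOn_eq_zero_of_mapsTo_countable isPreconnected_Icc hγ
      (finite_setOfPred_isRoot hf).countable hzeros]
    exact zero_le
  have hN : f.natDegree ≠ 0 := by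
    refine (natDegree_pos_iff_degree_pos.2 (degree_pos_of_root hf (a := γ 0) ?_)).ne'
    rw [IsRoot.def, hγf 0 (left_mem_Icc.2 zero_le_one), ofReal_zero, zero_mul]
  have hball := mapsTo_closedBall_of_eval_eq_mul hf hroots hγ hγ1 hγf
  have hprojection : ∀ᵐ θ : ℝ, eVariationOn (fun t ↦ (γ t / exp (θ * I)).im) (Icc 0 1) ≤
      f.natDegree * ENNReal.ofReal (2 * R) := by
    filter_upwards [(countable_im_mul_exp_pow_eq_zero
      (div_ne_zero (leadingCoeff_ne_zero.2 hf) hw) hN).ae_notMem volume] with θ hθ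
    exact eVariationOn_im_div_le hγ hball hγf (norm_exp_ofReal_mul_I θ) hθ
  refine (ENNReal.mul_le_mul_iff_right two_ne_zero ENNReal.ofNat_ne_top).1 ?_
  calc 2 * eVariationOn γ (Icc 0 1)
      ≤ ∫⁻ θ : ℝ in Ioc 0 Real.pi, eVariationOn (fun t ↦ (γ t / exp (θ * I)).im) (Icc 0 1) :=
        two_mul_eVariationOn_le_lintegral_projection γ _
    _ ≤ ∫⁻ _ : ℝ in Ioc 0 Real.pi, f.natDegree * ENNReal.ofReal (2 * R) :=
        lintegral_mono_ae (ae_restrict_of_ae hprojection)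
    _ = 2 * ENNReal.ofReal (Real.pi * f.natDegree * R) := by
        rw [setLIntegral_const, Real.volume_Ioc, sub_zero, ENNReal.ofReal_mul zero_le_two,
          ENNReal.ofReal_mul (by positivity), ENNReal.ofReal_mul Real.pi_nonneg,
          ENNReal.ofReal_natCast, ENNReal.ofReal_ofNat]
        ring

lemma natDegree_prod_X_sub_C_pow {A ι : Type*} [CommRing A] [Nontrivial A] (s : Finset ι)
    (α : ι → A) (n : ι → ℕ) : (∏ j ∈ s, (X - C (α j)) ^ n j).natDegree = ∑ j ∈ s, n j := by
  rw [natDegree_prod_of_monic _ _ fun j _ ↦ (monic_X_sub_C _).pow _]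
  simp only [(monic_X_sub_C _).natDegree_pow, natDegree_X_sub_C, mul_one]

lemma mem_range_of_mem_roots_prod_X_sub_C_pow {A ι : Type*} [CommRing A] [IsDomain A]
    {s : Finset ι} {α : ι → A} {n : ι → ℕ} {a : A}
    (ha : a ∈ (∏ j ∈ s, (X - C (α j)) ^ n j).roots) : a ∈ range α := by
  have heval : ∏ j ∈ s, (a - α j) ^ n j = 0 := by
    simpa only [IsRoot.def, eval_prod, eval_pow, eval_sub, eval_X, eval_C] using
      isRoot_of_mem_roots ha
  obtain ⟨j, -, hj⟩ := Finset.prod_eq_zero_iff.1 heval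
  exact ⟨j, (sub_eq_zero.1 (eq_zero_of_pow_eq_zero hj)).symm⟩

/-- A path of steepest descent for `|f|` from a point `β` of
the convex hull `K` of the roots of `f` to a root of `f` has length at most
`π N R`, where `R` is the radius of a closed disk containing `K`. -/
theorem steepest_descent_length_le
    (s : ℕ) (hs : 2 ≤ s)
    (α : Fin s → ℂ) (hα : Function.Injective α)
    (n : Fin s → ℕ) (hn : ∀ j, 1 ≤ n j)
    (N : ℕ) (hN : N = ∑ j, n j)
    (f : Polynomial ℂ) (hf : f = ∏ j, (X - C (α j)) ^ n j)
    (K : Set ℂ) (hK : K = convexHull ℝ (Set.range α))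
    (z₀ : ℂ) (R : ℝ) (hR : 0 < R) (hKD : K ⊆ Metric.closedBall z₀ R)
    (β : ℂ) (hβ : β ∈ K)
    (γ : ℝ → ℂ) (hγpc : PiecewiseC1On γ 0 1)
    (hγ1 : γ 1 = β)
    (hγf : ∀ t ∈ Set.Icc (0 : ℝ) 1, f.eval (γ t) = (t : ℂ) * f.eval β) :
    ∫ t in (0 : ℝ)..1, ‖deriv γ t‖ ≤ Real.pi * N * R := by
  subst hf hK hγ1
  have hroots : ∀ a ∈ (∏ j, (X - C (α j)) ^ n j).roots, a ∈ Metric.closedBall z₀ R := fun a ha ↦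
    hKD (subset_convexHull ℝ _ (mem_range_of_mem_roots_prod_X_sub_C_pow ha))
  have hlength : eVariationOn γ (Icc 0 1) ≤ ENNReal.ofReal (Real.pi * N * R) := by
    rw [hN, ← natDegree_prod_X_sub_C_pow Finset.univ α n]
    exact steepest_descent_length_le_general
      (monic_prod_of_monic _ _ fun j _ ↦ (monic_X_sub_C _).pow _).ne_zero hroots hγpc.1
      (hKD hβ) hγf
  exact (integral_norm_deriv_le_eVariationOn zero_le_one
    (ne_top_of_le_ne_top ENNReal.ofReal_ne_top hlength)).trans
      (ENNReal.toReal_le_of_le_ofReal (by positivity) hlength)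
end

section
/- Let β ∈ 𝒦 and let γ : [0,1] → ℂ be a continuous, piecewise continuously differentiable map with γ(1) = β and f(γ(t)) = t·f(β) for all t ∈ [0,1]. If the root α = γ(0) of f lies on the topological boundary of 𝒦, then the length of γ satisfies ∫₀¹ |γ′(t)| dt ≤ 2π·s·R. -/
open Polynomial Complex Set

/-!
By the Cauchy–Crofton formula and Banach's indicatrix, the length of `γ` is at most `π R` times the
largest number of points in which `γ` meets a line, and only almost every line has to be considered.
On a line with direction `e⁻¹` the imaginary part of `f' / (e f)` is a rational function whose
numerator has degree at most `2 (d - 1)`, where `d` is the number of distinct roots of `f`. It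
therefore suffices that this function vanishes between any two neighbouring crossings `γ u` and
`γ v`.

If it did not, its sign would be constant on the chord, and by the argument principle the loop
formed by `γ` from `γ u` to `γ v` and the chord would have a winding number of that sign about
some root, because `f' / f · dγ` is real along `γ`. But `γ 0` is a boundary point of `K`, so the
initial piece of `γ` lies outside the loop; it arrives at `γ u` from the side of the chord which
that sign designates, hence the winding number near the chord never has this sign. The points
where the winding number has the sign would thus form a bounded open set whose frontier lies on
`γ`, where `f / f (γ 1)` is real, and the maximum principle would make `f` constant.
-/

namespace SteepestDescent

/-! ### Winding numbers of an arc closed by its chord -/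

theorem eq_of_continuousOn_of_intCast {X : Type*} [TopologicalSpace X] {S : Set X}
    (hS : IsPreconnected S) {g : X → ℝ} (hg : ContinuousOn g S)
    (hint : ∀ x ∈ S, ∃ k : ℤ, g x = k) {x y : X} (hx : x ∈ S) (hy : y ∈ S) : g x = g y := by
  have hdiscrete : IsDiscrete (range ((↑) : ℤ → ℝ)) :=
    Int.isClosedEmbedding_coe_real.isEmbedding.isDiscrete_range
  refine hS.constant_of_mapsTo hdiscrete hg (fun z hz => ?_) hx hy
  obtain ⟨k, hk⟩ := hint z hz
  exact ⟨k, hk.symm⟩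

/-- `γ` restricted to `[u, v]` is a continuously differentiable arc, with two-sided derivatives at
the endpoints so that the velocity is `deriv γ` throughout. -/
structure IsC1Arc (γ : ℝ → ℂ) (u v : ℝ) : Prop where
  le : u ≤ v
  differentiableAt : ∀ t ∈ Icc u v, DifferentiableAt ℝ γ t
  continuousOn_deriv : ContinuousOn (deriv γ) (Icc u v)

/-- The increment of a branch of `log (w - z)` as `w` runs along the arc `γ t`, `u ≤ t ≤ v`. -/
noncomputable def arcLog (γ : ℝ → ℂ) (u v : ℝ) (z : ℂ) : ℂ :=
  ∫ t in u..v, deriv γ t / (γ t - z)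

theorem sub_ne_zero_of_notMem_image {γ : ℝ → ℂ} {S : Set ℝ} {z : ℂ} (hz : z ∉ γ '' S) {t : ℝ}
    (ht : t ∈ S) : γ t - z ≠ 0 :=
  sub_ne_zero.2 fun h => hz ⟨t, ht, h⟩

namespace IsC1Arc

variable {γ : ℝ → ℂ} {u v : ℝ} {z : ℂ}

theorem continuousOn (h : IsC1Arc γ u v) : ContinuousOn γ (Icc u v) :=
  fun t ht => (h.differentiableAt t ht).continuousAt.continuousWithinAt

theorem isCompact_image (h : IsC1Arc γ u v) : IsCompact (γ '' Icc u v) :=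
  isCompact_Icc.image_of_continuousOn h.continuousOn

theorem continuousOn_deriv_div_sub (h : IsC1Arc γ u v) (hz : z ∉ γ '' Icc u v) :
    ContinuousOn (fun t => deriv γ t / (γ t - z)) (Icc u v) :=
  h.continuousOn_deriv.div (h.continuousOn.sub continuousOn_const)
    fun _ ht => sub_ne_zero_of_notMem_image hz ht

theorem intervalIntegrable_deriv_div_sub (h : IsC1Arc γ u v) (hz : z ∉ γ '' Icc u v) :
    IntervalIntegrable (fun t => deriv γ t / (γ t - z)) MeasureTheory.volume u v :=
  (h.continuousOn_deriv_div_sub hz).intervalIntegrable_of_Icc h.le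

theorem exp_arcLog (h : IsC1Arc γ u v) (hz : z ∉ γ '' Icc u v) :
    exp (arcLog γ u v z) = (γ v - z) / (γ u - z) := by
  have hcont := h.continuousOn_deriv_div_sub hz
  have hint := h.intervalIntegrable_deriv_div_sub hz
  have hprimitive : ContinuousOn (fun t => arcLog γ u t z) (Icc u v) := by
    have := intervalIntegral.continuousOn_primitive_interval' hint left_mem_uIcc
    rwa [uIcc_of_le h.le] at this
  have hderiv : ∀ t ∈ Ioo u v, HasDerivAt (fun t => exp (-arcLog γ u t z) * (γ t - z)) 0 t := by
    intro t ht
    have hlog : HasDerivAt (fun t => arcLog γ u t z) (deriv γ t / (γ t - z)) t :=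
      intervalIntegral.integral_hasDerivAt_right
        (hint.mono_set (uIcc_subset_uIcc_left (Icc_subset_uIcc (Ioo_subset_Icc_self ht))))
        ((hcont.mono Ioo_subset_Icc_self).stronglyMeasurableAtFilter isOpen_Ioo t ht)
        (hcont.continuousAt (Icc_mem_nhds ht.1 ht.2))
    have hsub := (h.differentiableAt t (Ioo_subset_Icc_self ht)).hasDerivAt.sub_const z
    refine (hlog.neg.cexp.mul hsub).congr_deriv ?_
    have hne := sub_ne_zero_of_notMem_image hz (Ioo_subset_Icc_self ht)
    field_simp
    ring
  have hconst : 0 = exp (-arcLog γ u v z) * (γ v - z) - exp (-arcLog γ u u z) * (γ u - z) := by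
    rw [← intervalIntegral.integral_zero (a := u) (b := v) (μ := MeasureTheory.volume)]
    exact intervalIntegral.integral_eq_sub_of_hasDerivAt_of_le h.le
      (hprimitive.neg.cexp.mul (h.continuousOn.sub continuousOn_const)) hderiv
      intervalIntegrable_const
  have hstart : arcLog γ u u z = 0 := intervalIntegral.integral_same
  rw [hstart, neg_zero, exp_zero, one_mul, exp_neg] at hconst
  rw [eq_div_iff (sub_ne_zero_of_notMem_image hz (left_mem_Icc.2 h.le)),
    ← sub_eq_zero.1 hconst.symm, mul_inv_cancel_left₀ (exp_ne_zero _)]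

theorem arcLog_eq_log_sub_log (h : IsC1Arc γ u v) {ν : ℂ}
    (hν : ∀ t ∈ Icc u v, ν * (γ t - z) ∈ slitPlane) :
    arcLog γ u v z = log (ν * (γ v - z)) - log (ν * (γ u - z)) := by
  have hne : ∀ t ∈ Icc u v, ν * (γ t - z) ≠ 0 := fun t ht => slitPlane_ne_zero (hν t ht)
  have hz : z ∉ γ '' Icc u v := by
    rintro ⟨t, ht, rfl⟩
    exact hne t ht (by rw [sub_self, mul_zero])
  refine intervalIntegral.integral_eq_sub_of_hasDerivAt (f := fun t => log (ν * (γ t - z)))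
    (fun t ht => ?_) (h.intervalIntegrable_deriv_div_sub hz)
  rw [uIcc_of_le h.le] at ht
  refine ((((h.differentiableAt t ht).hasDerivAt.sub_const z).const_mul ν).clog_real
    (hν t ht)).congr_deriv ?_
  exact mul_div_mul_left _ _ (left_ne_zero_of_mul (hne t ht))

theorem continuousAt_arcLog (h : IsC1Arc γ u v) (hz : z ∉ γ '' Icc u v) :
    ContinuousAt (arcLog γ u v) z := by
  obtain ⟨δ, hδ, hball⟩ :=
    Metric.isOpen_iff.1 h.isCompact_image.isClosed.isOpen_compl z hz
  obtain ⟨M, hM⟩ := isCompact_Icc.exists_bound_of_continuousOn h.continuousOn_deriv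
  have hnear : ∀ᶠ w in nhds z, dist w z < δ / 2 := Metric.ball_mem_nhds z (half_pos hδ)
  have hsub : uIoc u v ⊆ Icc u v := uIoc_of_le h.le ▸ Ioc_subset_Icc_self
  refine intervalIntegral.continuousAt_of_dominated_interval (bound := fun _ => M / (δ / 2))
    ?_ ?_ intervalIntegrable_const ?_
  · filter_upwards [hnear] with w hw
    have hw' : w ∉ γ '' Icc u v := hball (hw.trans (half_lt_self hδ))
    exact ((h.continuousOn_deriv_div_sub hw').mono hsub).aestronglyMeasurable measurableSet_uIoc
  · filter_upwards [hnear] with w hw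
    refine Filter.Eventually.of_forall fun t ht => ?_
    have hfar : δ ≤ dist (γ t) z :=
      not_lt.1 fun hlt => hball (Metric.mem_ball.2 hlt) ⟨t, hsub ht, rfl⟩
    have hfar' : δ / 2 ≤ ‖γ t - w‖ := by
      rw [← dist_eq_norm]
      linarith [dist_triangle (γ t) w z]
    rw [norm_div]
    exact div_le_div₀ ((norm_nonneg _).trans (hM t (hsub ht))) (hM t (hsub ht)) (half_pos hδ) hfar'
  · exact Filter.Eventually.of_forall fun t ht => continuousAt_const.div (by fun_prop)
      (sub_ne_zero_of_notMem_image hz (hsub ht))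

end IsC1Arc

section Chord

variable {p q z : ℂ}

theorem isC1Arc_lineMap (p q : ℂ) : IsC1Arc (AffineMap.lineMap p q : ℝ → ℂ) 0 1 where
  le := zero_le_one
  differentiableAt _ _ := AffineMap.hasDerivAt_lineMap.differentiableAt
  continuousOn_deriv := by
    have hderiv : deriv (AffineMap.lineMap p q : ℝ → ℂ) = fun _ => q - p :=
      funext fun _ => AffineMap.hasDerivAt_lineMap.deriv
    exact hderiv ▸ continuousOn_const

theorem div_sub_mem_slitPlane (hz : z ∉ segment ℝ p q) : (p - z) / (q - z) ∈ slitPlane := by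
  contrapose! hz
  rw [mem_slitPlane_iff, not_or, not_lt, not_not] at hz
  have harg : arg ((z - p) / (q - z)) = 0 := by
    rw [arg_eq_zero_iff, ← neg_sub p z, neg_div, neg_re, neg_im, hz.2, neg_zero]
    exact ⟨neg_nonneg.2 hz.1, rfl⟩
  exact mem_segment_iff_sameRay.2 (sameRay_iff_arg_div_eq_zero.2 harg)

theorem neg_div_sub_mem_slitPlane (hpq : p ≠ q) (hz : z ∈ openSegment ℝ p q) :
    -((p - z) / (q - z)) ∈ slitPlane := by
  obtain ⟨a, b, ha, hb, hab, rfl⟩ := hz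
  have hb' : b = 1 - a := by linarith
  have : -((p - (a • p + b • q)) / (q - (a • p + b • q))) = ((b / a : ℝ) : ℂ) := by
    have hpz : p - (a • p + b • q) = -b * (q - p) := by
      simp only [real_smul, hb', ofReal_sub, ofReal_one]
      ring
    have hqz : q - (a • p + b • q) = a * (q - p) := by
      simp only [real_smul, hb', ofReal_sub, ofReal_one]
      ring
    rw [hpz, hqz, mul_div_mul_right _ _ (sub_ne_zero.2 hpq.symm), neg_div, neg_neg, ofReal_div]
  rw [this]
  exact ofReal_mem_slitPlane.2 (div_pos hb ha)

/-- The signed distance, in units of `dist p q`, from `z` to the line through `p` and `q`; it is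
positive to the left of the ray from `q` through `p`. -/
noncomputable def chordSide (p q z : ℂ) : ℝ := ((p - z) / (q - p)).im

theorem sign_div_sub_im (hpq : p ≠ q) (hzq : z ≠ q) :
    SignType.sign ((p - z) / (q - z)).im = SignType.sign (chordSide p q z) := by
  have hqz : normSq (q - z) ≠ 0 := by rwa [Ne, normSq_eq_zero, sub_eq_zero, eq_comm]
  have hqp : normSq (q - p) ≠ 0 := by rwa [Ne, normSq_eq_zero, sub_eq_zero, eq_comm]
  have key : chordSide p q z = ((p - z) / (q - z)).im * (normSq (q - z) / normSq (q - p)) := by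
    rw [chordSide, div_im, div_im]
    field_simp
    simp only [sub_re, sub_im]
    ring
  have hpos : 0 < normSq (q - z) / normSq (q - p) :=
    div_pos ((normSq_nonneg _).lt_of_ne' hqz) ((normSq_nonneg _).lt_of_ne' hqp)
  rw [key, sign_mul, sign_pos hpos, mul_one]

theorem arg_eq_arg_neg_add_sign {w : ℂ} (hw : w.im ≠ 0) :
    arg w = arg (-w) + SignType.sign w.im * Real.pi := by
  rcases hw.lt_or_gt with hneg | hpos
  · rw [sign_neg hneg, arg_neg_eq_arg_add_pi_of_im_neg hneg]
    simp
  · rw [sign_pos hpos, arg_neg_eq_arg_sub_pi_of_im_pos hpos]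
    simp

theorem exists_forall_re_mul_sub_pos {K : Set ℂ} (hconv : Convex ℝ K) (hclosed : IsClosed K)
    (hz : z ∉ K) : ∃ ν : ℂ, ∀ w ∈ K, 0 < (ν * (w - z)).re := by
  obtain ⟨φ, c, hc, hφ⟩ := RCLike.geometric_hahn_banach_point_closed (𝕜 := ℂ) hconv hclosed hz
  refine ⟨φ 1, fun w hw => ?_⟩
  have : φ 1 * (w - z) = φ w - φ z := by
    rw [← map_sub, mul_comm, ← smul_eq_mul, ← map_smul, smul_eq_mul, mul_one]
  rw [this, sub_re, sub_pos]
  exact hc.trans (hφ w hw)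

end Chord

/-- The closed curve that runs along `γ` from `γ u` to `γ v` and back along the chord. -/
def arcLoop (γ : ℝ → ℂ) (u v : ℝ) : Set ℂ :=
  γ '' Icc u v ∪ segment ℝ (γ u) (γ v)

/-- The winding number of `arcLoop γ u v` about `z`; meaningful for `z` off the loop. -/
noncomputable def loopWinding (γ : ℝ → ℂ) (u v : ℝ) (z : ℂ) : ℝ :=
  (arcLog γ u v z + arcLog (AffineMap.lineMap (γ v) (γ u)) 0 1 z).im / (2 * Real.pi)

/-- The branch of `loopWinding` that is continuous across the open chord: the logarithm along the
chord is replaced by the one that jumps on the two rays of the chord's line outside the chord. -/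
noncomputable def crossChordWinding (γ : ℝ → ℂ) (u v : ℝ) (z : ℂ) : ℝ :=
  (arcLog γ u v z + log (-((γ u - z) / (γ v - z)))).im / (2 * Real.pi)

theorem lineMap_image_Icc (p q : ℂ) :
    (AffineMap.lineMap q p : ℝ → ℂ) '' Icc 0 1 = segment ℝ p q := by
  rw [segment_symm, segment_eq_image_lineMap]

theorem arcLog_lineMap {p q z : ℂ} (hz : z ∉ segment ℝ p q) :
    arcLog (AffineMap.lineMap q p) 0 1 z = log ((p - z) / (q - z)) := by
  have hqz : q - z ≠ 0 := sub_ne_zero.2 fun h => hz (h ▸ right_mem_segment ℝ p q)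
  rw [(isC1Arc_lineMap q p).arcLog_eq_log_sub_log (ν := (q - z)⁻¹)]
  · simp [hqz, div_eq_inv_mul]
  · intro t ht
    rw [← div_eq_inv_mul]
    refine div_sub_mem_slitPlane fun hmem => hz ?_
    have ht' : AffineMap.lineMap q p t ∈ segment ℝ p q := by
      rw [← lineMap_image_Icc]
      exact mem_image_of_mem _ ht
    exact (convex_segment p q).segment_subset ht' (right_mem_segment ℝ p q) hmem

namespace IsC1Arc

variable {γ : ℝ → ℂ} {u v : ℝ} {z : ℂ}

theorem isCompact_arcLoop (h : IsC1Arc γ u v) : IsCompact (arcLoop γ u v) := by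
  rw [arcLoop, ← lineMap_image_Icc]
  exact h.isCompact_image.union (isC1Arc_lineMap _ _).isCompact_image

theorem loopWinding_intCast (h : IsC1Arc γ u v) (hz : z ∉ arcLoop γ u v) :
    ∃ k : ℤ, loopWinding γ u v z = k := by
  rw [arcLoop, ← lineMap_image_Icc, mem_union, not_or] at hz
  have hu := sub_ne_zero_of_notMem_image hz.1 (left_mem_Icc.2 h.le)
  have hv := sub_ne_zero_of_notMem_image hz.1 (right_mem_Icc.2 h.le)
  have hexp : exp (arcLog γ u v z + arcLog (AffineMap.lineMap (γ v) (γ u)) 0 1 z) = 1 := by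
    rw [exp_add, h.exp_arcLog hz.1, (isC1Arc_lineMap _ _).exp_arcLog hz.2,
      AffineMap.lineMap_apply_zero, AffineMap.lineMap_apply_one, div_mul_div_cancel₀ hu,
      div_self hv]
  obtain ⟨k, hk⟩ := exp_eq_one_iff.1 hexp
  refine ⟨k, ?_⟩
  have := Real.pi_pos.ne'
  rw [loopWinding, hk]
  simp [this]

theorem crossChordWinding_intCast (h : IsC1Arc γ u v) (hz : z ∉ γ '' Icc u v) :
    ∃ k : ℤ, crossChordWinding γ u v z - 1 / 2 = k := by
  have hu := sub_ne_zero_of_notMem_image hz (left_mem_Icc.2 h.le)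
  have hv := sub_ne_zero_of_notMem_image hz (right_mem_Icc.2 h.le)
  have hexp : exp (arcLog γ u v z + log (-((γ u - z) / (γ v - z))) - Real.pi * I) = 1 := by
    rw [exp_sub, exp_add, h.exp_arcLog hz, exp_log (neg_ne_zero.2 (div_ne_zero hu hv)),
      exp_pi_mul_I]
    field_simp
  obtain ⟨k, hk⟩ := exp_eq_one_iff.1 hexp
  refine ⟨k, ?_⟩
  have := Real.pi_pos.ne'
  have him : (k * (2 * Real.pi * I) + Real.pi * I : ℂ).im = k * (2 * Real.pi) + Real.pi := by
    simp
  rw [crossChordWinding, sub_eq_iff_eq_add.1 hk, him]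
  field_simp
  ring

theorem continuousAt_loopWinding (h : IsC1Arc γ u v) (hz : z ∉ arcLoop γ u v) :
    ContinuousAt (loopWinding γ u v) z := by
  rw [arcLoop, ← lineMap_image_Icc, mem_union, not_or] at hz
  exact (continuous_im.continuousAt.comp ((h.continuousAt_arcLog hz.1).add
    ((isC1Arc_lineMap _ _).continuousAt_arcLog hz.2))).div_const _

theorem continuousAt_crossChordWinding (h : IsC1Arc γ u v) (hz : z ∉ γ '' Icc u v)
    (hslit : -((γ u - z) / (γ v - z)) ∈ slitPlane) :
    ContinuousAt (crossChordWinding γ u v) z := by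
  have hratio : ContinuousAt (fun z => -((γ u - z) / (γ v - z))) z :=
    (ContinuousAt.div (by fun_prop) (by fun_prop)
      (sub_ne_zero_of_notMem_image hz (right_mem_Icc.2 h.le))).neg
  exact (continuous_im.continuousAt.comp
    ((h.continuousAt_arcLog hz).add (hratio.clog hslit))).div_const _

theorem loopWinding_eq_crossChordWinding_add (h : IsC1Arc γ u v) (hne : γ u ≠ γ v)
    (hz : z ∉ arcLoop γ u v) (hslit : -((γ u - z) / (γ v - z)) ∈ slitPlane) :
    loopWinding γ u v z =
      crossChordWinding γ u v z + SignType.sign (chordSide (γ u) (γ v) z) / 2 := by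
  have hzv : z ≠ γ v := fun hz' => hz (Or.inl ⟨v, right_mem_Icc.2 h.le, hz'.symm⟩)
  have hsign := sign_div_sub_im hne hzv
  have him : ((γ u - z) / (γ v - z)).im ≠ 0 := by
    intro him
    have hre := div_sub_mem_slitPlane fun hz' => hz (Or.inr hz')
    simp only [mem_slitPlane_iff, neg_re, neg_im, him, neg_zero, ne_eq, not_true_eq_false,
      or_false] at hre hslit
    linarith
  have := Real.pi_pos.ne'
  rw [loopWinding, crossChordWinding, arcLog_lineMap fun hz' => hz (Or.inr hz'), add_im, add_im,
    log_im, log_im, arg_eq_arg_neg_add_sign him, hsign]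
  field_simp
  ring

theorem loopWinding_eq_zero_of_notMem (h : IsC1Arc γ u v) {K : Set ℂ} (hconv : Convex ℝ K)
    (hclosed : IsClosed K) (hγK : MapsTo γ (Icc u v) K) (hz : z ∉ K) :
    loopWinding γ u v z = 0 := by
  obtain ⟨ν, hν⟩ := exists_forall_re_mul_sub_pos hconv hclosed hz
  have hchord : MapsTo (AffineMap.lineMap (γ v) (γ u) : ℝ → ℂ) (Icc 0 1) K := by
    rw [mapsTo_iff_image_subset, lineMap_image_Icc]
    exact hconv.segment_subset (hγK (left_mem_Icc.2 h.le)) (hγK (right_mem_Icc.2 h.le))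
  rw [loopWinding, h.arcLog_eq_log_sub_log fun t ht => Or.inl (hν _ (hγK ht)),
    (isC1Arc_lineMap _ _).arcLog_eq_log_sub_log fun t ht => Or.inl (hν _ (hchord ht))]
  simp

theorem crossChordWinding_eq_of_isPreconnected (h : IsC1Arc γ u v) {S : Set ℂ}
    (hS : IsPreconnected S)
    (hmem : ∀ z ∈ S, z ∉ γ '' Icc u v ∧ -((γ u - z) / (γ v - z)) ∈ slitPlane) {z w : ℂ}
    (hz : z ∈ S) (hw : w ∈ S) : crossChordWinding γ u v z = crossChordWinding γ u v w := by
  have hcont : ContinuousOn (fun z => crossChordWinding γ u v z - 1 / 2) S := fun z hz =>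
    ((h.continuousAt_crossChordWinding (hmem z hz).1 (hmem z hz).2).sub
      continuousAt_const).continuousWithinAt
  exact sub_left_inj.1 (eq_of_continuousOn_of_intCast hS hcont
    (fun z hz => h.crossChordWinding_intCast (hmem z hz).1) hz hw)

theorem exists_loopWinding_eq_add_sign (h : IsC1Arc γ u v) (hne : γ u ≠ γ v)
    (hdisj : Disjoint (γ '' Icc u v) (openSegment ℝ (γ u) (γ v))) :
    ∃ c : ℝ, ∀ z₀ ∈ openSegment ℝ (γ u) (γ v), ∀ᶠ z in nhds z₀, z ∉ arcLoop γ u v →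
      loopWinding γ u v z = c + SignType.sign (chordSide (γ u) (γ v) z) / 2 := by
  have hchord : ∀ z ∈ openSegment ℝ (γ u) (γ v),
      z ∉ γ '' Icc u v ∧ -((γ u - z) / (γ v - z)) ∈ slitPlane := fun z hz =>
    ⟨fun hzγ => disjoint_left.1 hdisj hzγ hz, neg_div_sub_mem_slitPlane hne hz⟩
  have hnear : ∀ z₀ ∈ openSegment ℝ (γ u) (γ v), ∀ᶠ z in nhds z₀,
      z ∉ γ '' Icc u v ∧ -((γ u - z) / (γ v - z)) ∈ slitPlane := by
    intro z₀ hz₀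
    have hratio : ContinuousAt (fun z => -((γ u - z) / (γ v - z))) z₀ :=
      (ContinuousAt.div (by fun_prop) (by fun_prop)
        (sub_ne_zero_of_notMem_image (hchord z₀ hz₀).1 (right_mem_Icc.2 h.le))).neg
    exact Filter.Eventually.and (h.isCompact_image.isClosed.isOpen_compl.mem_nhds (hchord z₀ hz₀).1)
      (hratio.eventually_mem (isOpen_slitPlane.mem_nhds (hchord z₀ hz₀).2))
  obtain ⟨m, hm⟩ : (openSegment ℝ (γ u) (γ v)).Nonempty :=
    ⟨_, midpoint_mem_openSegment _ _⟩
  refine ⟨crossChordWinding γ u v m, fun z₀ hz₀ => ?_⟩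
  obtain ⟨r, hr, hball⟩ := Metric.eventually_nhds_iff_ball.1 (hnear z₀ hz₀)
  filter_upwards [Metric.ball_mem_nhds z₀ hr] with z hz hzloop
  rw [h.loopWinding_eq_crossChordWinding_add hne hzloop (hball z hz).2,
    h.crossChordWinding_eq_of_isPreconnected (convex_ball z₀ r).isPreconnected hball hz
      (Metric.mem_ball_self hr),
    h.crossChordWinding_eq_of_isPreconnected (convex_openSegment _ _).isPreconnected hchord hz₀ hm]

end IsC1Arc

/-! ### Paths of steepest descent -/

theorem eval_derivative_div_eval_eq_sum {f : ℂ[X]} {z : ℂ} (hz : f.eval z ≠ 0) :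
    f.derivative.eval z / f.eval z =
      ∑ a ∈ f.roots.toFinset, (f.rootMultiplicity a : ℂ) / (z - a) := by
  rw [(IsAlgClosed.splits f).eval_derivative_div_eval_of_ne_zero hz,
    Finset.sum_multiset_map_count]
  simp only [count_roots, nsmul_eq_mul, mul_one_div]

theorem IsC1Arc.sum_rootMultiplicity_mul_arcLog {γ : ℝ → ℂ} {u v : ℝ} (h : IsC1Arc γ u v)
    {f : ℂ[X]} (hf : ∀ t ∈ Icc u v, f.eval (γ t) ≠ 0) :
    ∑ a ∈ f.roots.toFinset, (f.rootMultiplicity a : ℂ) * arcLog γ u v a =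
      ∫ t in u..v, deriv γ t * (f.derivative.eval (γ t) / f.eval (γ t)) := by
  have hroot : ∀ a ∈ f.roots.toFinset, a ∉ γ '' Icc u v := by
    rintro _ ha ⟨t, ht, rfl⟩
    exact hf t ht (isRoot_of_mem_roots (Multiset.mem_toFinset.1 ha))
  simp only [arcLog, ← intervalIntegral.integral_const_mul]
  rw [← intervalIntegral.integral_finsetSum fun a ha =>
    (h.intervalIntegrable_deriv_div_sub (hroot a ha)).const_mul _]
  refine intervalIntegral.integral_congr fun t ht => ?_
  rw [uIcc_of_le h.le] at ht
  simp only [eval_derivative_div_eval_eq_sum (hf t ht), Finset.mul_sum, mul_div_left_comm]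

theorem eq_of_im_eq_zero_on_frontier {G : ℂ → ℂ} (hG : Differentiable ℂ G) {U : Set ℂ}
    (hopen : IsOpen U) (hbdd : Bornology.IsBounded U) (hne : U.Nonempty)
    (hfr : ∀ z ∈ frontier U, (G z).im = 0) (z w : ℂ) : G z = G w := by
  have hre : ∀ r : ℝ, ∀ z ∈ U, (r * I * G z).re ≤ 0 := by
    intro r z hz
    have hexp : Differentiable ℂ fun z => exp (r * I * G z) := (hG.const_mul _).cexp
    have hle := norm_le_of_forall_mem_frontier_norm_le hbdd (C := 1) hexp.diffContOnCl
      (fun w hw => by simp [norm_exp, hfr w hw]) (subset_closure hz)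
    rwa [norm_exp, Real.exp_le_one_iff] at hle
  have him : G '' U ⊆ {w | w.im ≤ 0} := by
    rintro _ ⟨z, hz, rfl⟩
    simpa using hre (-1) z hz
  have him' : ∀ z ∈ U, 0 ≤ (G z).im := fun z hz => by simpa using hre 1 z hz
  rcases (hG.differentiableOn.analyticOnNhd isOpen_univ).is_constant_or_isOpenMap with
    ⟨c, hc⟩ | hmap
  · rw [hc z, hc w]
  · obtain ⟨z₁, hz₁⟩ := hne
    have hint := interior_maximal him (hmap U hopen) (mem_image_of_mem G hz₁)
    rw [interior_setOfPred_im_le] at hint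
    exact absurd hint (him' z₁ hz₁).not_gt

theorem eval_derivative_mul_derivWithin {f : ℂ[X]} {γ : ℝ → ℂ} {c : ℂ} {x : ℝ} {s : Set ℝ}
    (hs : UniqueDiffWithinAt ℝ s x) (hγ : DifferentiableWithinAt ℝ γ s x)
    (heq : ∀ᶠ t : ℝ in nhds x, f.eval (γ t) = t * c) :
    f.derivative.eval (γ x) * derivWithin γ s x = c := by
  have hcomp := (f.hasDerivAt (γ x)).comp_hasDerivWithinAt x hγ.hasDerivWithinAt
  have hline : HasDerivWithinAt (fun t : ℝ => t * c) (1 * c) s x :=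
    (ofRealCLM.hasDerivAt.mul_const c).hasDerivWithinAt
  rw [← one_mul c]
  exact hs.eq_deriv s hcomp
    (hline.congr_of_eventuallyEq (heq.filter_mono nhdsWithin_le_nhds) heq.self_of_nhds)

/-- A path of steepest descent for `|f|`, traversed from the root `γ 0` up to the point `γ 1`. -/
structure IsDescentPath (f : ℂ[X]) (γ : ℝ → ℂ) : Prop where
  continuousOn : ContinuousOn γ (Icc 0 1)
  differentiableAt : ∀ t ∈ Ioo (0 : ℝ) 1, DifferentiableAt ℝ γ t
  eval_eq : ∀ t ∈ Icc (0 : ℝ) 1, f.eval (γ t) = t * f.eval (γ 1)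
  eval_one_ne_zero : f.eval (γ 1) ≠ 0

namespace IsDescentPath

variable {f : ℂ[X]} {γ : ℝ → ℂ}

theorem ne_zero (h : IsDescentPath f γ) : f ≠ 0 := by
  rintro rfl
  exact h.eval_one_ne_zero Polynomial.eval_zero

theorem injOn (h : IsDescentPath f γ) : InjOn γ (Icc 0 1) := by
  intro t ht r hr htr
  have heq : (t : ℂ) * f.eval (γ 1) = r * f.eval (γ 1) := by
    rw [← h.eval_eq t ht, htr, h.eval_eq r hr]
  exact_mod_cast mul_right_cancel₀ h.eval_one_ne_zero heq

theorem eval_zero (h : IsDescentPath f γ) : f.eval (γ 0) = 0 := by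
  simpa using h.eval_eq 0 (left_mem_Icc.2 zero_le_one)

theorem zero_mem_roots (h : IsDescentPath f γ) : γ 0 ∈ f.roots :=
  (mem_roots h.ne_zero).2 h.eval_zero

theorem eval_ne_zero (h : IsDescentPath f γ) {t : ℝ} (ht : t ∈ Ioc (0 : ℝ) 1) :
    f.eval (γ t) ≠ 0 := by
  rw [h.eval_eq t (Ioc_subset_Icc_self ht)]
  exact mul_ne_zero (ofReal_ne_zero.2 ht.1.ne') h.eval_one_ne_zero

theorem eval_derivative_mul_deriv (h : IsDescentPath f γ) {t : ℝ} (ht : t ∈ Ioo (0 : ℝ) 1) :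
    f.derivative.eval (γ t) * deriv γ t = f.eval (γ 1) := by
  rw [← derivWithin_univ]
  exact eval_derivative_mul_derivWithin uniqueDiffWithinAt_univ
    (h.differentiableAt t ht).differentiableWithinAt
    (Filter.mem_of_superset (Icc_mem_nhds ht.1 ht.2) h.eval_eq)

theorem deriv_mul_logDeriv (h : IsDescentPath f γ) {t : ℝ} (ht : t ∈ Ioo (0 : ℝ) 1) :
    deriv γ t * (f.derivative.eval (γ t) / f.eval (γ t)) = (t⁻¹ : ℝ) := by
  rw [mul_div_assoc', mul_comm, h.eval_derivative_mul_deriv ht,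
    h.eval_eq t (Ioo_subset_Icc_self ht), div_mul_cancel_right₀ h.eval_one_ne_zero, ofReal_inv]

theorem logDeriv_div_eq (h : IsDescentPath f γ) {t : ℝ} (ht : t ∈ Ioo (0 : ℝ) 1) (e : ℂ) :
    f.derivative.eval (γ t) / f.eval (γ t) / e = (t⁻¹ : ℝ) * (e * deriv γ t)⁻¹ := by
  have hne : deriv γ t ≠ 0 := left_ne_zero_of_mul
    ((h.deriv_mul_logDeriv ht).trans_ne (ofReal_ne_zero.2 (inv_ne_zero ht.1.ne')))
  rw [← h.deriv_mul_logDeriv ht]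
  field_simp

theorem continuousOn_deriv (h : IsDescentPath f γ) : ContinuousOn (deriv γ) (Ioo 0 1) := by
  have hne : ∀ t ∈ Ioo (0 : ℝ) 1, f.derivative.eval (γ t) ≠ 0 := fun t ht =>
    left_ne_zero_of_mul ((h.eval_derivative_mul_deriv ht).trans_ne h.eval_one_ne_zero)
  have hcont : ContinuousOn (fun t => f.eval (γ 1) / f.derivative.eval (γ t)) (Ioo 0 1) :=
    continuousOn_const.div (f.derivative.continuous.comp_continuousOn
      (h.continuousOn.mono Ioo_subset_Icc_self)) hne
  exact hcont.congr fun t ht => eq_div_of_mul_eq (hne t ht)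
    ((mul_comm _ _).trans (h.eval_derivative_mul_deriv ht))

theorem isC1Arc (h : IsDescentPath f γ) {u v : ℝ} (hu : 0 < u) (huv : u ≤ v) (hv : v < 1) :
    IsC1Arc γ u v where
  le := huv
  differentiableAt t ht := h.differentiableAt t ⟨hu.trans_le ht.1, ht.2.trans_lt hv⟩
  continuousOn_deriv := h.continuousOn_deriv.mono (Icc_subset_Ioo hu hv)

theorem frontier_not_subset_image (h : IsDescentPath f γ) {U : Set ℂ} (hopen : IsOpen U)
    (hbdd : Bornology.IsBounded U) (hne : U.Nonempty) : ¬ frontier U ⊆ γ '' Icc 0 1 := by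
  intro hfr
  have hreal : ∀ z ∈ frontier U, (f.eval z / f.eval (γ 1)).im = 0 := by
    intro z hz
    obtain ⟨t, ht, rfl⟩ := hfr hz
    rw [h.eval_eq t ht, mul_div_cancel_right₀ _ h.eval_one_ne_zero, ofReal_im]
  have hconst := eq_of_im_eq_zero_on_frontier (f.differentiable.div_const (f.eval (γ 1)))
    hopen hbdd hne hreal (γ 0) (γ 1)
  rw [h.eval_zero, zero_div, div_self h.eval_one_ne_zero] at hconst
  exact zero_ne_one hconst

end IsDescentPath

/-! ### Chords that meet the path only at their endpoints -/

theorem chordSide_eq_zero {p q z : ℂ} (hz : z ∈ segment ℝ p q) : chordSide p q z = 0 := by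
  rcases eq_or_ne p q with rfl | hpq
  · simp [chordSide]
  obtain ⟨s, -, rfl⟩ := (segment_eq_image_lineMap ℝ p q).subset hz
  have : (p - AffineMap.lineMap p q s) / (q - p) = ((-s : ℝ) : ℂ) := by
    rw [div_eq_iff (sub_ne_zero.2 hpq.symm), AffineMap.lineMap_apply, vsub_eq_sub, vadd_eq_add,
      real_smul, ofReal_neg]
    ring
  rw [chordSide, this, ofReal_im]

theorem convex_chordSide_pos (p q : ℂ) (σ : ℝ) : Convex ℝ {z | 0 < σ * chordSide p q z} := by
  have hlin : IsLinearMap ℝ fun z : ℂ => σ * (-z / (q - p)).im := by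
    refine ⟨fun z w => ?_, fun c z => ?_⟩
    · rw [neg_add, add_div, add_im, mul_add]
    · rw [← smul_neg, real_smul, mul_div_assoc, im_ofReal_mul, smul_eq_mul, mul_left_comm]
  have hset : {z | 0 < σ * chordSide p q z} =
      {z | -(σ * (p / (q - p)).im) < σ * (-z / (q - p)).im} := by
    ext z
    rw [mem_ofPred_eq, mem_ofPred_eq, chordSide, sub_eq_add_neg, add_div, add_im, mul_add,
      neg_lt_iff_pos_add']
  exact hset ▸ convex_halfSpace_gt hlin _

theorem frequently_chordSide_pos {p q : ℂ} (hpq : p ≠ q) {σ : ℝ} (hσ : σ ≠ 0) {z : ℂ}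
    (hz : z ∈ segment ℝ p q) : ∃ᶠ w in nhds z, 0 < σ * chordSide p q w := by
  have hside : ∀ ε : ℝ, chordSide p q (z - (ε * σ : ℝ) * (I * (q - p))) = ε * σ := by
    intro ε
    have : (p - (z - (ε * σ : ℝ) * (I * (q - p)))) / (q - p) =
        (p - z) / (q - p) + (ε * σ : ℝ) * I := by
      have := sub_ne_zero.2 hpq.symm
      field_simp
      ring
    rw [chordSide, this, add_im, ← chordSide, chordSide_eq_zero hz, zero_add, im_ofReal_mul, I_im,
      mul_one]
  have htendsto : Filter.Tendsto (fun ε : ℝ => z - (ε * σ : ℝ) * (I * (q - p)))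
      (nhdsWithin 0 (Ioi 0)) (nhds z) :=
    Filter.Tendsto.mono_left (Continuous.tendsto' (by fun_prop) 0 z (by simp)) nhdsWithin_le_nhds
  refine htendsto.frequently (Filter.Eventually.frequently ?_)
  filter_upwards [self_mem_nhdsWithin] with ε (hε : 0 < ε)
  rw [hside, mul_left_comm]
  exact mul_pos hε (mul_self_pos.2 hσ)

/-- The chord from `γ u` to `γ v` meets no further point of the path `γ`. -/
structure IsClearChord (f : ℂ[X]) (γ : ℝ → ℂ) (u v : ℝ) : Prop extends IsDescentPath f γ where
  pos : 0 < u
  lt : u < v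
  lt_one : v < 1
  disjoint : Disjoint (γ '' Icc 0 1) (openSegment ℝ (γ u) (γ v))

namespace IsClearChord

variable {f : ℂ[X]} {γ : ℝ → ℂ} {u v σ : ℝ}

theorem Icc_subset_Ioo (h : IsClearChord f γ u v) : Icc u v ⊆ Ioo 0 1 :=
  Set.Icc_subset_Ioo h.pos h.lt_one

theorem Icc_subset_Icc (h : IsClearChord f γ u v) : Icc u v ⊆ Icc 0 1 :=
  Set.Icc_subset_Icc h.pos.le h.lt_one.le

theorem ne (h : IsClearChord f γ u v) : γ u ≠ γ v := fun heq => h.lt.ne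
  (h.injOn (h.Icc_subset_Icc (left_mem_Icc.2 h.lt.le)) (h.Icc_subset_Icc (right_mem_Icc.2 h.lt.le))
    heq)

theorem isC1Arc_chord (h : IsClearChord f γ u v) : IsC1Arc γ u v :=
  h.isC1Arc h.pos h.lt.le h.lt_one

theorem sum_rootMultiplicity_mul_loopWinding (h : IsClearChord f γ u v)
    (hf : ∀ z ∈ segment ℝ (γ u) (γ v), f.eval z ≠ 0) :
    ∑ a ∈ f.roots.toFinset, (f.rootMultiplicity a : ℝ) * loopWinding γ u v a =
      (∫ s in (0 : ℝ)..1, (γ u - γ v) *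
        (f.derivative.eval (AffineMap.lineMap (γ v) (γ u) s) /
          f.eval (AffineMap.lineMap (γ v) (γ u) s))).im / (2 * Real.pi) := by
  have hpath := h.isC1Arc_chord.sum_rootMultiplicity_mul_arcLog (f := f) fun t ht =>
    h.eval_ne_zero (Ioo_subset_Ioc_self (h.Icc_subset_Ioo ht))
  have hchord := (isC1Arc_lineMap (γ v) (γ u)).sum_rootMultiplicity_mul_arcLog (f := f) fun s hs =>
    hf _ ((lineMap_image_Icc (γ u) (γ v)).subset (mem_image_of_mem _ hs))
  have hreal : (∫ t in u..v, deriv γ t * (f.derivative.eval (γ t) / f.eval (γ t))).im = 0 := by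
    have : ∫ t in u..v, deriv γ t * (f.derivative.eval (γ t) / f.eval (γ t)) =
        ∫ t in u..v, ((t⁻¹ : ℝ) : ℂ) :=
      intervalIntegral.integral_congr fun t ht => h.deriv_mul_logDeriv
        (h.Icc_subset_Ioo (uIcc_of_le h.lt.le ▸ ht))
    rw [this, intervalIntegral.integral_ofReal, ofReal_im]
  simp only [AffineMap.hasDerivAt_lineMap.deriv] at hchord
  rw [← hpath] at hreal
  rw [← hchord, ← zero_add (im _)]
  nth_rw 1 [← hreal]
  rw [← add_im, ← Finset.sum_add_distrib, im_sum, Finset.sum_div]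
  refine Finset.sum_congr rfl fun a _ => ?_
  rw [← mul_add, ← ofReal_natCast, im_ofReal_mul, mul_div_assoc, loopWinding]

theorem exists_loopWinding_pos (h : IsClearChord f γ u v)
    (hσ : ∀ z ∈ segment ℝ (γ u) (γ v),
      0 < σ * ((γ u - γ v) * (f.derivative.eval z / f.eval z)).im) :
    ∃ a ∉ arcLoop γ u v, 0 < σ * loopWinding γ u v a := by
  have hf : ∀ z ∈ segment ℝ (γ u) (γ v), f.eval z ≠ 0 := fun z hz heq => by
    simpa [heq] using hσ z hz
  set L : ℝ → ℂ := fun s => (γ u - γ v) *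
    (f.derivative.eval (AffineMap.lineMap (γ v) (γ u) s) /
      f.eval (AffineMap.lineMap (γ v) (γ u) s)) with hL
  have hseg : ∀ s ∈ Icc (0 : ℝ) 1, AffineMap.lineMap (γ v) (γ u) s ∈ segment ℝ (γ u) (γ v) :=
    fun s hs => (lineMap_image_Icc (γ u) (γ v)).subset (mem_image_of_mem _ hs)
  have hcont : ContinuousOn L (Icc 0 1) :=
    continuousOn_const.mul (ContinuousOn.div (by fun_prop) (by fun_prop)
      fun s hs => hf _ (hseg s hs))
  have hpos : 0 < ∫ s in (0 : ℝ)..1, σ * (L s).im :=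
    intervalIntegral.intervalIntegral_pos_of_pos_on
      ((continuousOn_const.mul (continuous_im.comp_continuousOn hcont)).intervalIntegrable_of_Icc
        zero_le_one)
      (fun s hs => hσ _ (hseg s (Ioo_subset_Icc_self hs))) zero_lt_one
  have hsum : ∑ _ ∈ f.roots.toFinset, (0 : ℝ) < ∑ a ∈ f.roots.toFinset,
      (f.rootMultiplicity a : ℝ) * (σ * loopWinding γ u v a) := by
    simp only [mul_left_comm _ σ, ← Finset.mul_sum]
    rw [Finset.sum_const_zero, h.sum_rootMultiplicity_mul_loopWinding hf, ← hL, ← mul_div_assoc]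
    have him : (∫ s in (0 : ℝ)..1, L s).im = ∫ s in (0 : ℝ)..1, (L s).im :=
      (intervalIntegral.intervalIntegral_im (hcont.intervalIntegrable_of_Icc zero_le_one)).symm
    rw [him, ← intervalIntegral.integral_const_mul]
    exact div_pos hpos Real.two_pi_pos
  obtain ⟨a, ha, hpos⟩ := Finset.exists_lt_of_sum_lt hsum
  have hroot : f.eval a = 0 := isRoot_of_mem_roots (Multiset.mem_toFinset.1 ha)
  refine ⟨a, ?_, pos_of_mul_pos_right hpos (Nat.cast_nonneg _)⟩
  rintro (⟨t, ht, rfl⟩ | hseg)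
  · exact h.eval_ne_zero (Ioo_subset_Ioc_self (h.Icc_subset_Ioo ht)) hroot
  · exact hf a hseg hroot

end IsClearChord

theorem mul_pos_of_isPreconnected {X : Type*} [TopologicalSpace X] {S : Set X}
    (hS : IsPreconnected S) {g : X → ℝ} (hg : ContinuousOn g S) (hne : ∀ x ∈ S, g x ≠ 0) {x y : X}
    (hx : x ∈ S) (hy : y ∈ S) : 0 < g x * g y := by
  by_contra! hle
  obtain ⟨z, hz, h0⟩ : (0 : ℝ) ∈ g '' S := by
    rcases mul_nonpos_iff.1 hle with ⟨hgx, hgy⟩ | ⟨hgx, hgy⟩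
    · exact hS.intermediate_value hy hx hg ⟨hgy, hgx⟩
    · exact hS.intermediate_value hx hy hg ⟨hgx, hgy⟩
  exact hne z hz h0

namespace IsClearChord

variable {f : ℂ[X]} {γ : ℝ → ℂ} {u v σ : ℝ} {K : Set ℂ}

theorem notMem_arcLoop (h : IsClearChord f γ u v) {t : ℝ} (ht : t ∈ Ico 0 u) :
    γ t ∉ arcLoop γ u v := by
  have hu := h.Icc_subset_Icc (left_mem_Icc.2 h.lt.le)
  have hv := h.Icc_subset_Icc (right_mem_Icc.2 h.lt.le)
  have ht' : t ∈ Icc (0 : ℝ) 1 := ⟨ht.1, ht.2.le.trans hu.2⟩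
  rintro (⟨r, hr, hrt⟩ | hseg)
  · exact (ht.2.trans_le hr.1).ne' (h.injOn (h.Icc_subset_Icc hr) ht' hrt)
  · refine disjoint_left.1 h.disjoint (mem_image_of_mem γ ht') (mem_openSegment_of_ne_left_right
      (fun heq => ?_) (fun heq => ?_) hseg)
    · exact ht.2.ne (h.injOn hu ht' heq).symm
    · exact (ht.2.trans h.lt).ne (h.injOn hv ht' heq).symm

theorem loopWinding_eq_zero_of_lt (h : IsClearChord f γ u v) (hconv : Convex ℝ K)
    (hclosed : IsClosed K) (hγK : MapsTo γ (Icc 0 1) K) (h0 : γ 0 ∈ frontier K) {t : ℝ}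
    (ht : t ∈ Ico 0 u) : loopWinding γ u v (γ t) = 0 := by
  have harc := h.isC1Arc_chord
  have hstart : loopWinding γ u v (γ 0) = 0 := by
    have hcont := harc.continuousAt_loopWinding (h.notMem_arcLoop ⟨le_rfl, h.pos⟩)
    by_contra hne
    have houter : ∃ᶠ z in nhds (γ 0), z ∉ K :=
      mem_closure_iff_frequently.1 (frontier_eq_closure_inter_closure.subset h0).2
    exact houter ((hcont.eventually_ne hne).mono fun z hz hzK =>
      hz (harc.loopWinding_eq_zero_of_notMem hconv hclosed (hγK.mono_left h.Icc_subset_Icc) hzK))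
  have hcont : ContinuousOn (fun t => loopWinding γ u v (γ t)) (Ico 0 u) := fun t ht =>
    (harc.continuousAt_loopWinding (h.notMem_arcLoop ht)).comp_continuousWithinAt
      (h.continuousOn.mono (Ico_subset_Icc_self.trans
        (Set.Icc_subset_Icc_right (h.lt.trans h.lt_one).le)) t ht)
  rw [← hstart]
  exact eq_of_continuousOn_of_intCast isPreconnected_Ico hcont
    (fun t ht => harc.loopWinding_intCast (h.notMem_arcLoop ht)) ht ⟨le_rfl, h.pos⟩

theorem eventually_sign_chordSide (h : IsClearChord f γ u v)
    (hσ : 0 < σ * ((γ u - γ v) * (f.derivative.eval (γ u) / f.eval (γ u))).im) :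
    ∀ᶠ t in nhds u, SignType.sign (σ * chordSide (γ u) (γ v) (γ t)) = SignType.sign (u - t) := by
  have hu := h.Icc_subset_Ioo (left_mem_Icc.2 h.lt.le)
  have hderiv : HasDerivAt (fun t => σ * chordSide (γ u) (γ v) (γ t))
      (σ * (-deriv γ u / (γ v - γ u)).im) u :=
    (imCLM.hasFDerivAt.comp_hasDerivAt u
      (((h.differentiableAt u hu).hasDerivAt.const_sub _).div_const _)).const_mul σ
  refine eventually_nhdsWithin_sign_eq_of_deriv_neg ?_ ?_
  · rw [hderiv.deriv]
    set w := (γ u - γ v) * (f.derivative.eval (γ u) / f.eval (γ u)) with hw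
    have hw0 : w ≠ 0 := fun heq => by simp [heq] at hσ
    have hvelocity : -deriv γ u / (γ v - γ u) = (u⁻¹ : ℝ) * w⁻¹ := by
      rw [← h.deriv_mul_logDeriv hu, ← neg_sub (γ u), neg_div_neg_eq]
      obtain ⟨hf', hf⟩ := div_ne_zero_iff.1 (right_ne_zero_of_mul hw0)
      have := left_ne_zero_of_mul hw0
      rw [hw]
      field_simp
    have : σ * (-deriv γ u / (γ v - γ u)).im = -(u⁻¹ / normSq w * (σ * w.im)) := by
      rw [hvelocity, im_ofReal_mul, inv_im]
      ring
    rw [this]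
    exact neg_neg_of_pos (mul_pos (div_pos (inv_pos.2 h.pos) (normSq_pos.2 hw0)) hσ)
  · rw [chordSide, sub_self, zero_div, zero_im, mul_zero]

theorem eventually_notMem_arcLoop (h : IsClearChord f γ u v)
    (hσ : 0 < σ * ((γ u - γ v) * (f.derivative.eval (γ u) / f.eval (γ u))).im) :
    ∀ᶠ z in nhds (γ u), 0 < σ * chordSide (γ u) (γ v) z → z ∉ arcLoop γ u v := by
  obtain ⟨δ, hδ, hsign⟩ := Metric.eventually_nhds_iff_ball.1 (h.eventually_sign_chordSide hσ)
  have hrest : IsCompact (γ '' (Icc u v \ Metric.ball u δ)) :=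
    (isCompact_Icc.diff Metric.isOpen_ball).image_of_continuousOn
      (h.isC1Arc_chord.continuousOn.mono sdiff_subset)
  have hγu : γ u ∉ γ '' (Icc u v \ Metric.ball u δ) := by
    rintro ⟨t, ht, heq⟩
    have := h.injOn (h.Icc_subset_Icc ht.1) (h.Icc_subset_Icc (left_mem_Icc.2 h.lt.le)) heq
    exact ht.2 (this ▸ Metric.mem_ball_self hδ)
  filter_upwards [hrest.isClosed.isOpen_compl.mem_nhds hγu] with z hz hside
  rintro (⟨t, ht, rfl⟩ | hseg)
  · have htδ : t ∈ Metric.ball u δ := by_contra fun htδ => hz ⟨t, ⟨ht, htδ⟩, rfl⟩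
    have := hsign t htδ
    rw [sign_pos hside, eq_comm, sign_eq_one_iff] at this
    exact (sub_pos.1 this).not_ge ht.1
  · rw [chordSide_eq_zero hseg, mul_zero] at hside
    exact hside.false

theorem eventually_loopWinding_eq_zero (h : IsClearChord f γ u v) (hconv : Convex ℝ K)
    (hclosed : IsClosed K) (hγK : MapsTo γ (Icc 0 1) K) (h0 : γ 0 ∈ frontier K)
    (hσ : 0 < σ * ((γ u - γ v) * (f.derivative.eval (γ u) / f.eval (γ u))).im) :
    ∀ᶠ z in nhds (γ u), 0 < σ * chordSide (γ u) (γ v) z → loopWinding γ u v z = 0 := by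
  have harc := h.isC1Arc_chord
  obtain ⟨r, hr, hball⟩ := Metric.eventually_nhds_iff_ball.1 (h.eventually_notMem_arcLoop hσ)
  obtain ⟨t, ht, htball, htside⟩ : ∃ t ∈ Ico 0 u, γ t ∈ Metric.ball (γ u) r ∧
      0 < σ * chordSide (γ u) (γ v) (γ t) := by
    have hcont := (h.differentiableAt u (h.Icc_subset_Ioo (left_mem_Icc.2 h.lt.le))).continuousAt
    have hnear : ∀ᶠ t in nhdsWithin u (Iio u), γ t ∈ Metric.ball (γ u) r ∧
        SignType.sign (σ * chordSide (γ u) (γ v) (γ t)) = SignType.sign (u - t) :=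
      nhdsWithin_le_nhds ((hcont.eventually_mem (Metric.ball_mem_nhds _ hr)).and
        (h.eventually_sign_chordSide hσ))
    obtain ⟨t, ht, htball, htsign⟩ := (Filter.Eventually.and (Ico_mem_nhdsLT h.pos) hnear).exists
    rw [sign_pos (sub_pos.2 ht.2), sign_eq_one_iff] at htsign
    exact ⟨t, ht, htball, htsign⟩
  have hconvex := (convex_ball (γ u) r).inter (convex_chordSide_pos (γ u) (γ v) σ)
  have hoff : ∀ z ∈ Metric.ball (γ u) r ∩ {z | 0 < σ * chordSide (γ u) (γ v) z},
      z ∉ arcLoop γ u v := fun z hz => hball z hz.1 hz.2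
  filter_upwards [Metric.ball_mem_nhds _ hr] with z hz hside
  rw [← h.loopWinding_eq_zero_of_lt hconv hclosed hγK h0 ht]
  exact eq_of_continuousOn_of_intCast hconvex.isPreconnected
    (fun w hw => (harc.continuousAt_loopWinding (hoff w hw)).continuousWithinAt)
    (fun w hw => harc.loopWinding_intCast (hoff w hw)) ⟨hz, hside⟩ ⟨htball, htside⟩

theorem eventually_loopWinding_nonpos (h : IsClearChord f γ u v) (hconv : Convex ℝ K)
    (hclosed : IsClosed K) (hγK : MapsTo γ (Icc 0 1) K) (h0 : γ 0 ∈ frontier K)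
    (hσ : 0 < σ * ((γ u - γ v) * (f.derivative.eval (γ u) / f.eval (γ u))).im) {z₀ : ℂ}
    (hz₀ : z₀ ∈ openSegment ℝ (γ u) (γ v)) :
    ∀ᶠ z in nhds z₀, z ∉ arcLoop γ u v → σ * loopWinding γ u v z ≤ 0 := by
  have hσ0 : σ ≠ 0 := left_ne_zero_of_mul hσ.ne'
  obtain ⟨c, hc⟩ := h.isC1Arc_chord.exists_loopWinding_eq_add_sign h.ne
    (h.disjoint.mono_left (image_mono h.Icc_subset_Icc))
  have hconst : c = -SignType.sign σ / 2 := by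
    have hnear := ((h.eventually_notMem_arcLoop hσ).and
      (h.eventually_loopWinding_eq_zero hconv hclosed hγK h0 hσ)).eventually_nhds
    have hchord : γ u ∈ closure (openSegment ℝ (γ u) (γ v)) :=
      segment_subset_closure_openSegment (left_mem_segment ℝ _ _)
    obtain ⟨z₁, hz₁, hnear₁⟩ := ((mem_closure_iff_frequently.1 hchord).and_eventually hnear).exists
    obtain ⟨z, hside, ⟨hoff, hzero⟩, hjump⟩ :=
      ((frequently_chordSide_pos h.ne hσ0 (openSegment_subset_segment _ _ _ hz₁)).and_eventually
        (hnear₁.and (hc z₁ hz₁))).exists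
    have hsame : SignType.sign (chordSide (γ u) (γ v) z) = SignType.sign σ := by
      rcases pos_and_pos_or_neg_and_neg_of_mul_pos hside with ⟨hσ, hz⟩ | ⟨hσ, hz⟩
      · rw [sign_pos hσ, sign_pos hz]
      · rw [sign_neg hσ, sign_neg hz]
    rw [hzero hside, hsame] at hjump
    linarith [hjump (hoff hside)]
  filter_upwards [hc z₀ hz₀] with z hz hzloop
  have hle : σ * SignType.sign (chordSide (γ u) (γ v) z) ≤ σ * SignType.sign σ := by
    rw [self_mul_sign]
    cases SignType.sign (chordSide (γ u) (γ v) z) <;> simp [le_abs_self, neg_le_abs]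
  rw [hz hzloop, hconst]
  linarith

theorem isOpen_setOf_loopWinding_pos (h : IsClearChord f γ u v) (σ : ℝ) :
    IsOpen {z | z ∉ arcLoop γ u v ∧ 0 < σ * loopWinding γ u v z} :=
  isOpen_iff_mem_nhds.2 fun _ hz =>
    Filter.Eventually.and (h.isC1Arc_chord.isCompact_arcLoop.isClosed.isOpen_compl.mem_nhds hz.1)
      ((continuousAt_const.mul (h.isC1Arc_chord.continuousAt_loopWinding hz.1)).eventually_const_lt
        hz.2)

theorem isBounded_setOf_loopWinding_pos (h : IsClearChord f γ u v) (σ : ℝ) :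
    Bornology.IsBounded {z | z ∉ arcLoop γ u v ∧ 0 < σ * loopWinding γ u v z} := by
  obtain ⟨M, hM⟩ := h.isC1Arc_chord.isCompact_image.isBounded.subset_closedBall 0
  refine (Metric.isBounded_closedBall (x := (0 : ℂ)) (r := M)).subset fun z hz => ?_
  by_contra hzM
  have := h.isC1Arc_chord.loopWinding_eq_zero_of_notMem (convex_closedBall 0 M)
    Metric.isClosed_closedBall (mapsTo_iff_image_subset.2 hM) hzM
  simpa [this] using hz.2

theorem frontier_setOf_loopWinding_pos_subset (h : IsClearChord f γ u v) (σ : ℝ) :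
    frontier {z | z ∉ arcLoop γ u v ∧ 0 < σ * loopWinding γ u v z} ⊆ arcLoop γ u v := by
  intro z hz
  by_contra hzloop
  have harc := h.isC1Arc_chord
  obtain ⟨r, hr, hball⟩ := Metric.isOpen_iff.1 harc.isCompact_arcLoop.isClosed.isOpen_compl z hzloop
  rw [(h.isOpen_setOf_loopWinding_pos σ).frontier_eq] at hz
  obtain ⟨w, hwball, -, hw⟩ := mem_closure_iff_nhds.1 hz.1 _ (Metric.ball_mem_nhds z hr)
  have hconst := eq_of_continuousOn_of_intCast (convex_ball z r).isPreconnected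
    (fun w hw => (harc.continuousAt_loopWinding (hball hw)).continuousWithinAt)
    (fun w hw => harc.loopWinding_intCast (hball hw)) hwball (Metric.mem_ball_self hr)
  exact hz.2 ⟨hzloop, hconst ▸ hw⟩

/-- Otherwise the points where `σ * loopWinding` is positive would form a bounded open set whose
frontier avoids the open chord, so that `f / f (γ 1)` would be real on this frontier. -/
theorem mul_loopWinding_nonpos (h : IsClearChord f γ u v) (hconv : Convex ℝ K)
    (hclosed : IsClosed K) (hγK : MapsTo γ (Icc 0 1) K) (h0 : γ 0 ∈ frontier K)
    (hσ : 0 < σ * ((γ u - γ v) * (f.derivative.eval (γ u) / f.eval (γ u))).im) {z : ℂ}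
    (hz : z ∉ arcLoop γ u v) : σ * loopWinding γ u v z ≤ 0 := by
  by_contra! hpos
  refine h.frontier_not_subset_image (h.isOpen_setOf_loopWinding_pos σ)
    (h.isBounded_setOf_loopWinding_pos σ) ⟨z, hz, hpos⟩ fun w hw => ?_
  rcases h.frontier_setOf_loopWinding_pos_subset σ hw with hwγ | hwchord
  · exact image_mono h.Icc_subset_Icc hwγ
  by_contra hwγ
  have hwopen : w ∈ openSegment ℝ (γ u) (γ v) := mem_openSegment_of_ne_left_right
    (fun heq => hwγ ⟨u, h.Icc_subset_Icc (left_mem_Icc.2 h.lt.le), heq⟩)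
    (fun heq => hwγ ⟨v, h.Icc_subset_Icc (right_mem_Icc.2 h.lt.le), heq⟩) hwchord
  have hnonpos := h.eventually_loopWinding_nonpos hconv hclosed hγK h0 hσ hwopen
  obtain ⟨x, ⟨hxloop, hx⟩, hx'⟩ :=
    ((mem_closure_iff_frequently.1 (frontier_subset_closure hw)).and_eventually hnonpos).exists
  exact (hx' hxloop).not_gt hx

theorem exists_mem_segment_im_eq_zero (h : IsClearChord f γ u v) (hconv : Convex ℝ K)
    (hclosed : IsClosed K) (hγK : MapsTo γ (Icc 0 1) K) (h0 : γ 0 ∈ frontier K)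
    (hf : ∀ z ∈ segment ℝ (γ u) (γ v), f.eval z ≠ 0) :
    ∃ z ∈ segment ℝ (γ u) (γ v),
      ((γ u - γ v) * (f.derivative.eval z / f.eval z)).im = 0 := by
  by_contra! hne
  have hcont : ContinuousOn (fun z => ((γ u - γ v) * (f.derivative.eval z / f.eval z)).im)
      (segment ℝ (γ u) (γ v)) :=
    continuous_im.comp_continuousOn (continuousOn_const.mul
      (f.derivative.continuousOn.div f.continuousOn hf))
  have hσ := fun z (hz : z ∈ segment ℝ (γ u) (γ v)) => mul_pos_of_isPreconnected
    (convex_segment _ _).isPreconnected hcont hne (left_mem_segment ℝ (γ u) (γ v)) hz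
  obtain ⟨a, ha, hpos⟩ := h.exists_loopWinding_pos hσ
  exact (h.mul_loopWinding_nonpos hconv hclosed hγK h0 (hσ _ (left_mem_segment ℝ _ _))
    ha).not_gt hpos

end IsClearChord

theorem IsDescentPath.exists_mem_segment_im_eq_zero {f : ℂ[X]} {γ : ℝ → ℂ} {K : Set ℂ}
    (h : IsDescentPath f γ) (hconv : Convex ℝ K) (hclosed : IsClosed K)
    (hγK : MapsTo γ (Icc 0 1) K) (h0 : γ 0 ∈ frontier K) {u v : ℝ}
    (hu : u ∈ Ioo 0 1) (hv : v ∈ Ioo 0 1) (huv : u ≠ v)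
    (hdisj : Disjoint (γ '' Icc 0 1) (openSegment ℝ (γ u) (γ v)))
    (hf : ∀ z ∈ segment ℝ (γ u) (γ v), f.eval z ≠ 0) :
    ∃ z ∈ segment ℝ (γ u) (γ v),
      ((γ u - γ v) * (f.derivative.eval z / f.eval z)).im = 0 := by
  rcases huv.lt_or_gt with hlt | hgt
  · have hchord : IsClearChord f γ u v := ⟨h, hu.1, hlt, hv.2, hdisj⟩
    exact hchord.exists_mem_segment_im_eq_zero hconv hclosed hγK h0 hf
  · rw [segment_symm] at hf ⊢
    rw [openSegment_symm] at hdisj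
    have hchord : IsClearChord f γ v u := ⟨h, hv.1, hgt, hu.2, hdisj⟩
    obtain ⟨z, hz, him⟩ := hchord.exists_mem_segment_im_eq_zero hconv hclosed hγK h0 hf
    refine ⟨z, hz, ?_⟩
    rw [← neg_sub, neg_mul, neg_im, him, neg_zero]

/-! ### Counting the crossings of a line -/

section ImSum

variable {ι : Type*} (S : Finset ι) (m : ι → ℝ) (b : ι → ℂ)

/-- The imaginary part of `∑ m i / (x - b i)` as a function of the real number `x`, cleared of its
denominators `normSq (x - b i)`. -/
noncomputable def imSumNumerator [DecidableEq ι] : ℝ[X] :=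
  ∑ i ∈ S, C (m i * (b i).im) * ∏ j ∈ S.erase i, ((X - C (b j).re) ^ 2 + C ((b j).im ^ 2))

theorem natDegree_imSumNumerator_le [DecidableEq ι] :
    (imSumNumerator S m b).natDegree ≤ 2 * (S.card - 1) := by
  refine natDegree_sum_le_of_forall_le _ _ fun i hi => ?_
  have hfactor : ∀ j ∈ S.erase i,
      ((X - C (b j).re) ^ 2 + C ((b j).im ^ 2) : ℝ[X]).natDegree ≤ 2 := by
    intro j _
    compute_degree
  calc _ ≤ (∏ j ∈ S.erase i, ((X - C (b j).re) ^ 2 + C ((b j).im ^ 2))).natDegree :=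
        natDegree_C_mul_le _ _
    _ ≤ ∑ j ∈ S.erase i, ((X - C (b j).re) ^ 2 + C ((b j).im ^ 2) : ℝ[X]).natDegree :=
        natDegree_prod_le _ _
    _ ≤ (S.erase i).card • 2 := Finset.sum_le_card_nsmul _ _ 2 hfactor
    _ = 2 * (S.card - 1) := by rw [Finset.card_erase_of_mem hi, smul_eq_mul, mul_comm]

variable {S b}

theorem eval_imSumNumerator [DecidableEq ι] {x : ℝ} (hx : ∀ i ∈ S, (x : ℂ) ≠ b i) :
    (imSumNumerator S m b).eval x =
      (∑ i ∈ S, (m i : ℂ) / (x - b i)).im * ∏ i ∈ S, normSq (x - b i) := by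
  rw [im_sum, Finset.sum_mul, imSumNumerator, eval_finsetSum]
  refine Finset.sum_congr rfl fun i hi => ?_
  have hne : normSq (x - b i) ≠ 0 := normSq_eq_zero.not.2 (sub_ne_zero.2 (hx i hi))
  have hfactor : ∀ j, ((X - C (b j).re) ^ 2 + C ((b j).im ^ 2)).eval x = normSq (x - b j) := by
    intro j
    simp [normSq_apply, ← pow_two]
  have hterm : ((m i : ℂ) / (x - b i)).im = m i * (b i).im / normSq (x - b i) := by
    rw [div_im, ofReal_im, zero_mul, zero_div, zero_sub, ofReal_re, sub_im, ofReal_im, zero_sub]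
    ring
  rw [← Finset.mul_prod_erase S _ hi, hterm, ← mul_assoc, div_mul_cancel₀ _ hne]
  simp only [eval_mul, eval_C, eval_prod, hfactor]

theorem exists_finset_of_im_sum_div_eq_zero (hb : ∀ i ∈ S, (b i).im ≠ 0)
    (hne : ∃ x : ℝ, (∑ i ∈ S, (m i : ℂ) / (x - b i)).im ≠ 0) :
    ∃ T : Finset ℝ, T.card ≤ 2 * (S.card - 1) ∧
      ∀ x : ℝ, (∑ i ∈ S, (m i : ℂ) / (x - b i)).im = 0 → x ∈ T := by
  classical
  have hoff : ∀ x : ℝ, ∀ i ∈ S, (x : ℂ) ≠ b i := fun x i hi heq => hb i hi (by simp [← heq])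
  have hnumer : imSumNumerator S m b ≠ 0 := by
    intro heq
    obtain ⟨x, hx⟩ := hne
    have heval := eval_imSumNumerator m (hoff x)
    rw [heq, eval_zero, eq_comm] at heval
    refine mul_ne_zero hx (Finset.prod_ne_zero_iff.2 fun i hi => ?_) heval
    exact normSq_eq_zero.not.2 (sub_ne_zero.2 (hoff x i hi))
  refine ⟨(imSumNumerator S m b).roots.toFinset, ?_, fun x hx => ?_⟩
  · exact (Multiset.toFinset_card_le _).trans
      ((card_roots' _).trans (natDegree_imSumNumerator_le S m b))
  · rw [Multiset.mem_toFinset, mem_roots hnumer, IsRoot, eval_imSumNumerator m (hoff x), hx,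
      zero_mul]

end ImSum

theorem exists_finset_of_im_logDeriv_eq_zero {f : ℂ[X]} {e : ℂ} {y : ℝ}
    (hf : ∀ z : ℂ, (e * z).im = y → f.eval z ≠ 0)
    (hne : ∃ z : ℂ, (e * z).im = y ∧ (f.derivative.eval z / f.eval z / e).im ≠ 0) :
    ∃ T : Finset ℝ, T.card ≤ 2 * (f.roots.toFinset.card - 1) ∧
      ∀ z : ℂ, (e * z).im = y → (f.derivative.eval z / f.eval z / e).im = 0 → (e * z).re ∈ T := by
  have hsum : ∀ z : ℂ, (e * z).im = y → f.derivative.eval z / f.eval z / e =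
      ∑ a ∈ f.roots.toFinset,
        ((f.rootMultiplicity a : ℝ) : ℂ) / ((e * z).re - (e * a - y * I)) := by
    intro z hz
    rw [eval_derivative_div_eval_eq_sum (hf z hz), Finset.sum_div]
    refine Finset.sum_congr rfl fun a _ => ?_
    have hline : ((e * z).re : ℂ) - (e * a - y * I) = (z - a) * e := by
      have hez := re_add_im (e * z)
      rw [hz] at hez
      linear_combination hez
    rw [hline, div_div, ofReal_natCast]
  have hb : ∀ a ∈ f.roots.toFinset, (e * a - y * I).im ≠ 0 := by
    intro a ha him
    refine hf a ?_ (isRoot_of_mem_roots (Multiset.mem_toFinset.1 ha))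
    simpa [sub_eq_zero] using him
  obtain ⟨z₀, hz₀, hne⟩ := hne
  obtain ⟨T, hcard, hT⟩ := exists_finset_of_im_sum_div_eq_zero
    (fun a => (f.rootMultiplicity a : ℝ)) hb ⟨(e * z₀).re, hsum z₀ hz₀ ▸ hne⟩
  exact ⟨T, hcard, fun z hz him => hT _ (hsum z hz ▸ him)⟩

theorem finite_inter_preimage_of_deriv_ne_zero {g : ℝ → ℝ} {a b y : ℝ}
    (hg : ContinuousOn g (Icc a b)) (hreg : ∀ t ∈ Icc a b, g t = y → deriv g t ≠ 0) :
    (Icc a b ∩ g ⁻¹' {y}).Finite := by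
  by_contra hinf
  have hcompact : IsCompact (Icc a b ∩ g ⁻¹' {y}) := isCompact_Icc.of_isClosed_subset
    (hg.preimage_isClosed_of_isClosed isClosed_Icc isClosed_singleton) inter_subset_left
  obtain ⟨x, hx, hacc⟩ := Set.Infinite.exists_accPt_of_subset_isCompact hinf hcompact subset_rfl
  have hderiv := (differentiableAt_of_deriv_ne_zero (hreg x hx.1 hx.2)).hasDerivAt
  obtain ⟨t, ht, hty⟩ := ((accPt_iff_frequently_nhdsNE.1 hacc).and_eventually
    (hderiv.eventually_ne (c := y) (hreg x hx.1 hx.2))).exists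
  exact hty ht.2

theorem im_mul_eq_of_mem_segment {e p q z : ℂ} {y : ℝ} (hp : (e * p).im = y)
    (hq : (e * q).im = y) (hz : z ∈ segment ℝ p q) : (e * z).im = y := by
  have hmem := mem_image_of_mem (imLm ∘ₗ LinearMap.mulLeft ℝ e).toAffineMap hz
  rw [image_segment] at hmem
  simpa [hp, hq] using hmem

theorem re_mul_mem_Ioo_of_mem_openSegment {e p q z : ℂ} (hpq : (e * p).re < (e * q).re)
    (hz : z ∈ openSegment ℝ p q) : (e * z).re ∈ Ioo (e * p).re (e * q).re := by
  have hmem := mem_image_of_mem (reLm ∘ₗ LinearMap.mulLeft ℝ e).toAffineMap hz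
  rwa [image_openSegment, openSegment_eq_Ioo (by exact hpq)] at hmem

/-- The line `{z | (e * z).im = y}` is in general position with respect to the descent path `γ`. -/
structure IsTransverseLine (f : ℂ[X]) (γ : ℝ → ℂ) (e : ℂ) (y : ℝ) : Prop where
  eval_ne_zero : ∀ z : ℂ, (e * z).im = y → f.eval z ≠ 0
  im_one_ne : (e * γ 1).im ≠ y
  im_deriv_ne_zero : ∀ t ∈ Ioo (0 : ℝ) 1, (e * γ t).im = y → (e * deriv γ t).im ≠ 0

namespace IsDescentPath

variable {f : ℂ[X]} {γ : ℝ → ℂ} {e : ℂ} {y : ℝ}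

theorem hasDerivAt_im_mul (h : IsDescentPath f γ) (e : ℂ) {t : ℝ} (ht : t ∈ Ioo (0 : ℝ) 1) :
    HasDerivAt (fun t => (e * γ t).im) (e * deriv γ t).im t :=
  imCLM.hasFDerivAt.comp_hasDerivAt t ((h.differentiableAt t ht).hasDerivAt.const_mul e)

theorem continuousOn_im_mul (h : IsDescentPath f γ) (e : ℂ) :
    ContinuousOn (fun t => (e * γ t).im) (Icc 0 1) :=
  continuous_im.comp_continuousOn (continuousOn_const.mul h.continuousOn)

theorem mem_Ioo_of_im_eq (h : IsDescentPath f γ) (hl : IsTransverseLine f γ e y) {t : ℝ}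
    (ht : t ∈ Icc (0 : ℝ) 1) (hty : (e * γ t).im = y) : t ∈ Ioo (0 : ℝ) 1 := by
  refine ⟨ht.1.lt_of_ne' ?_, ht.2.lt_of_ne ?_⟩
  · rintro rfl
    exact hl.eval_ne_zero _ hty h.eval_zero
  · rintro rfl
    exact hl.im_one_ne hty

theorem finite_crossings (h : IsDescentPath f γ) (hl : IsTransverseLine f γ e y) :
    (Icc 0 1 ∩ (fun t => (e * γ t).im) ⁻¹' {y}).Finite :=
  finite_inter_preimage_of_deriv_ne_zero (h.continuousOn_im_mul e) fun t ht hty => by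
    have ht' := h.mem_Ioo_of_im_eq hl ht hty
    rw [(h.hasDerivAt_im_mul e ht').deriv]
    exact hl.im_deriv_ne_zero t ht' hty

theorem im_logDeriv_ne_zero (h : IsDescentPath f γ) (hl : IsTransverseLine f γ e y) {t : ℝ}
    (ht : t ∈ Icc (0 : ℝ) 1) (hty : (e * γ t).im = y) :
    (f.derivative.eval (γ t) / f.eval (γ t) / e).im ≠ 0 := by
  have ht' := h.mem_Ioo_of_im_eq hl ht hty
  have him := hl.im_deriv_ne_zero t ht' hty
  have hne : e * deriv γ t ≠ 0 := fun heq => him (by rw [heq, zero_im])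
  rw [h.logDeriv_div_eq ht', im_ofReal_mul, inv_im]
  exact mul_ne_zero (inv_ne_zero ht'.1.ne')
    (div_ne_zero (neg_ne_zero.2 him) (normSq_eq_zero.not.2 hne))

variable {K : Set ℂ}

theorem exists_im_logDeriv_eq_zero_between (h : IsDescentPath f γ) (hconv : Convex ℝ K)
    (hclosed : IsClosed K) (hγK : MapsTo γ (Icc 0 1) K) (h0 : γ 0 ∈ frontier K)
    (hl : IsTransverseLine f γ e y) {u v : ℝ} (hu : u ∈ Icc (0 : ℝ) 1) (hv : v ∈ Icc (0 : ℝ) 1)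
    (huy : (e * γ u).im = y) (hvy : (e * γ v).im = y) (huv : (e * γ u).re < (e * γ v).re)
    (hnext : ∀ t ∈ Icc (0 : ℝ) 1, (e * γ t).im = y →
      (e * γ t).re ∉ Ioo (e * γ u).re (e * γ v).re) :
    ∃ z : ℂ, (e * z).im = y ∧ (f.derivative.eval z / f.eval z / e).im = 0 ∧
      (e * z).re ∈ Ioo (e * γ u).re (e * γ v).re := by
  have hline : ∀ z ∈ segment ℝ (γ u) (γ v), (e * z).im = y :=
    fun z hz => im_mul_eq_of_mem_segment huy hvy hz
  have hbetween : ∀ z ∈ openSegment ℝ (γ u) (γ v), (e * z).re ∈ Ioo (e * γ u).re (e * γ v).re :=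
    fun z hz => re_mul_mem_Ioo_of_mem_openSegment huv hz
  have hdisj : Disjoint (γ '' Icc 0 1) (openSegment ℝ (γ u) (γ v)) := by
    rw [disjoint_left]
    rintro _ ⟨t, ht, rfl⟩ hseg
    exact hnext t ht (hline _ (openSegment_subset_segment _ _ _ hseg)) (hbetween _ hseg)
  have hne : u ≠ v := fun heq => huv.ne (by rw [heq])
  obtain ⟨z, hz, him⟩ := h.exists_mem_segment_im_eq_zero hconv hclosed hγK h0
    (h.mem_Ioo_of_im_eq hl hu huy) (h.mem_Ioo_of_im_eq hl hv hvy) hne hdisj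
    fun z hz => hl.eval_ne_zero z (hline z hz)
  have hzero : (f.derivative.eval z / f.eval z / e).im = 0 := by
    have he : e ≠ 0 := by
      rintro rfl
      simp at huv
    have hreal : e * (γ u - γ v) = ((e * γ u).re - (e * γ v).re : ℝ) := by
      apply Complex.ext <;> simp only [mul_sub, sub_re, sub_im, ofReal_re, ofReal_im, huy, hvy,
        sub_self]
    have hscale : (γ u - γ v) * (f.derivative.eval z / f.eval z) =
        ((e * γ u).re - (e * γ v).re : ℝ) * (f.derivative.eval z / f.eval z / e) := by
      rw [← hreal]
      field_simp
    rw [hscale, im_ofReal_mul] at him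
    exact (mul_eq_zero.1 him).resolve_left (sub_ne_zero.2 huv.ne)
  refine ⟨z, hline z hz, hzero, hbetween z (mem_openSegment_of_ne_left_right ?_ ?_ hz)⟩
  · rintro rfl
    exact h.im_logDeriv_ne_zero hl hu huy hzero
  · rintro rfl
    exact h.im_logDeriv_ne_zero hl hv hvy hzero

theorem encard_crossings_le (h : IsDescentPath f γ) (hconv : Convex ℝ K)
    (hclosed : IsClosed K) (hγK : MapsTo γ (Icc 0 1) K) (h0 : γ 0 ∈ frontier K) (he : e ≠ 0)
    (hl : IsTransverseLine f γ e y) :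
    (Icc 0 1 ∩ (fun t => (e * γ t).im) ⁻¹' {y}).encard ≤
      (2 * (f.roots.toFinset.card - 1) + 1 : ℕ) := by
  classical
  have hfin := h.finite_crossings hl
  rcases eq_empty_or_nonempty (Icc 0 1 ∩ (fun t => (e * γ t).im) ⁻¹' {y}) with hempty | ⟨t₀, ht₀⟩
  · rw [hempty, encard_empty]
    exact zero_le
  obtain ⟨Z, hZcard, hZ⟩ := exists_finset_of_im_logDeriv_eq_zero hl.eval_ne_zero
    ⟨γ t₀, ht₀.2, h.im_logDeriv_ne_zero hl ht₀.1 ht₀.2⟩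
  have hinj : InjOn (fun t => (e * γ t).re) hfin.toFinset := by
    intro t ht r hr heq
    rw [Finset.mem_coe, hfin.mem_toFinset] at ht hr
    exact h.injOn ht.1 hr.1 (mul_left_cancel₀ he (Complex.ext heq (ht.2.trans hr.2.symm)))
  have hcard : (hfin.toFinset.image fun t => (e * γ t).re).card ≤ Z.card + 1 := by
    refine Finset.card_le_of_interleaved fun x hx x' hx' hlt hnext => ?_
    obtain ⟨u, hu, rfl⟩ := Finset.mem_image.1 hx
    obtain ⟨v, hv, rfl⟩ := Finset.mem_image.1 hx'
    rw [hfin.mem_toFinset] at hu hv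
    obtain ⟨z, hzy, him, hzuv⟩ := h.exists_im_logDeriv_eq_zero_between hconv hclosed hγK h0 hl
      hu.1 hv.1 hu.2 hv.2 hlt fun t ht hty =>
        hnext _ (Finset.mem_image_of_mem _ (hfin.mem_toFinset.2 ⟨ht, hty⟩))
    exact ⟨_, hZ z hzy him, hzuv⟩
  rw [hfin.encard_eq_coe_toFinset_card, ← Finset.card_image_of_injOn hinj]
  exact_mod_cast hcard.trans (Nat.succ_le_succ hZcard)

theorem ae_isTransverseLine (h : IsDescentPath f γ) (e : ℂ) :
    ∀ᵐ y : ℝ, IsTransverseLine f γ e y := by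
  have hfinite : (insert (e * γ 1).im ((fun a => (e * a).im) '' f.roots.toFinset)).Finite :=
    (f.roots.toFinset.finite_toSet.image _).insert _
  have hsard : MeasureTheory.volume
      ((fun t => (e * γ t).im) '' {t ∈ Ioo (0 : ℝ) 1 | (e * deriv γ t).im = 0}) = 0 :=
    MeasureTheory.addHaar_image_eq_zero_of_det_fderivWithin_eq_zero MeasureTheory.volume
      (fun t ht => (h.hasDerivAt_im_mul e ht.1).hasFDerivAt.hasFDerivWithinAt)
      fun t ht => by simp [ht.2]
  filter_upwards [MeasureTheory.measure_eq_zero_iff_ae_notMem.1 hsard,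
    hfinite.countable.ae_notMem _] with y hregular hy
  refine ⟨fun z hz hz0 => hy (mem_insert_of_mem _ ⟨z, ?_, hz⟩), fun h1 => hy (Or.inl h1.symm),
    fun t ht hty him => hregular ⟨t, ⟨ht, him⟩, hty⟩⟩
  exact Multiset.mem_toFinset.2 ((mem_roots h.ne_zero).2 hz0)

end IsDescentPath

/-! ### Length and crossing numbers -/

section Variation

open MeasureTheory

variable {E : Type*} [NormedAddCommGroup E] [NormedSpace ℝ E] {γ : ℝ → E} {a b : ℝ}

theorem norm_deriv_le_deriv_of_forall_norm_sub_le {V : ℝ → ℝ} {s : Set ℝ}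
    (hV : ∀ u ∈ s, ∀ v ∈ s, u ≤ v → ‖γ v - γ u‖ ≤ V v - V u) {t : ℝ} (hs : s ∈ nhds t)
    (hVt : DifferentiableAt ℝ V t) : ‖deriv γ t‖ ≤ deriv V t := by
  have hright : nhdsWithin t (Ioi t) ≤ nhdsWithin t {t}ᶜ :=
    nhdsWithin_mono t fun x (hx : t < x) => hx.ne'
  have hV' := (hasDerivAt_iff_tendsto_slope.1 hVt.hasDerivAt).mono_left hright
  have hbound : ∀ᶠ x in nhdsWithin t (Ioi t), ‖slope γ t x‖ ≤ slope V t x := by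
    filter_upwards [self_mem_nhdsWithin, mem_nhdsWithin_of_mem_nhds hs] with x (hx : t < x) hxs
    rw [slope, slope, vsub_eq_sub, vsub_eq_sub, norm_smul, smul_eq_mul,
      Real.norm_of_nonneg (inv_nonneg.2 (sub_nonneg.2 hx.le))]
    exact mul_le_mul_of_nonneg_left (hV t (mem_of_mem_nhds hs) x hxs hx.le)
      (inv_nonneg.2 (sub_nonneg.2 hx.le))
  by_cases hγ : DifferentiableAt ℝ γ t
  · exact le_of_tendsto_of_tendsto
      ((hasDerivAt_iff_tendsto_slope.1 hγ.hasDerivAt).mono_left hright).norm hV' hbound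
  · rw [deriv_zero_of_not_differentiableAt hγ, norm_zero]
    exact ge_of_tendsto hV' (hbound.mono fun x hx => (norm_nonneg _).trans hx)

theorem integral_norm_deriv_le_eVariationOn (hab : a ≤ b) (hγ : BoundedVariationOn γ (Icc a b)) :
    ∫ t in a..b, ‖deriv γ t‖ ≤ (eVariationOn γ (Icc a b)).toReal := by
  set V := variationOnFromTo γ (Icc a b) a
  have ha : a ∈ Icc a b := left_mem_Icc.2 hab
  have hmono : MonotoneOn V (uIcc a b) := by
    rw [uIcc_of_le hab]
    exact variationOnFromTo.monotoneOn hγ.locallyBoundedVariationOn ha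
  have hV : ∀ u ∈ Icc a b, ∀ v ∈ Icc a b, u ≤ v → ‖γ v - γ u‖ ≤ V v - V u := by
    intro u hu v hv huv
    rw [variationOnFromTo.sub_right hγ.locallyBoundedVariationOn ha hv hu,
      variationOnFromTo.eq_of_le _ _ huv, ← dist_eq_norm]
    exact (hγ.mono inter_subset_left).dist_le ⟨hv, huv, le_rfl⟩ ⟨hu, le_rfl, huv⟩
  have hae : ∀ᵐ t ∂volume.restrict (Ioc a b), ‖deriv γ t‖ ≤ deriv V t := by
    rw [← restrict_Ioo_eq_restrict_Ioc, ae_restrict_iff' measurableSet_Ioo]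
    filter_upwards [hmono.ae_differentiableWithinAt_of_mem] with t htV ht
    rw [uIcc_of_le hab] at htV
    have hnhds := Icc_mem_nhds ht.1 ht.2
    exact norm_deriv_le_deriv_of_forall_norm_sub_le hV hnhds
      ((htV (Ioo_subset_Icc_self ht)).differentiableAt hnhds)
  calc ∫ t in a..b, ‖deriv γ t‖ ≤ ∫ t in a..b, deriv V t := by
        rw [intervalIntegral.integral_of_le hab, intervalIntegral.integral_of_le hab]
        exact integral_mono_of_nonneg (Filter.Eventually.of_forall fun t => norm_nonneg _)
          hmono.intervalIntegrable_deriv.1 hae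
    _ ≤ V b - V a := by
        have hmem := hmono.intervalIntegral_deriv_mem_uIcc
        rw [uIcc_of_le (sub_nonneg.2 (hmono left_mem_uIcc right_mem_uIcc hab))] at hmem
        exact hmem.2
    _ = (eVariationOn γ (Icc a b)).toReal := by
        simp only [V, variationOnFromTo.self, sub_zero, variationOnFromTo.eq_of_le _ _ hab,
          inter_self]

end Variation

section Crofton

open MeasureTheory

open scoped ENNReal

section Indicatrix

variable {ι : Type*} [ConditionallyCompleteLinearOrder ι] [DenselyOrdered ι] [TopologicalSpace ι]
  [OrderTopology ι] {g : ι → ℝ} {s : Set ι}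

theorem exists_mem_Ioo_eq_of_mem_uIoc {u v : ι} (huv : u ≤ v) (hg : ContinuousOn g (Icc u v))
    {y : ℝ} (hy : y ∈ uIoc (g u) (g v)) (hu : g u ≠ y) (hv : g v ≠ y) : ∃ t ∈ Ioo u v, g t = y := by
  rw [← uIcc_of_le huv] at hg
  obtain ⟨t, ht, rfl⟩ := intermediate_value_uIcc hg (uIoc_subset_uIcc hy)
  rw [uIcc_of_le huv] at ht
  exact ⟨t, ⟨ht.1.lt_of_ne fun h => hu (by rw [h]), ht.2.lt_of_ne fun h => hv (by rw [h])⟩, rfl⟩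

open scoped Classical in
theorem card_filter_mem_uIoc_le_encard (hs : s.OrdConnected) (hg : ContinuousOn g s) {τ : ℕ → ι}
    (hτ : Monotone τ) (hτs : ∀ i, τ i ∈ s) {y : ℝ} (hy : ∀ i, g (τ i) ≠ y) (k : ℕ) :
    ({i ∈ Finset.range k | y ∈ uIoc (g (τ i)) (g (τ (i + 1)))}.card : ℕ∞) ≤
      (s ∩ g ⁻¹' {y}).encard := by
  have hcross : ∀ i ∈ ({i ∈ Finset.range k | y ∈ uIoc (g (τ i)) (g (τ (i + 1)))} : Finset ℕ),
      ∃ t ∈ Ioo (τ i) (τ (i + 1)), g t = y := fun i hi =>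
    exists_mem_Ioo_eq_of_mem_uIoc (hτ i.le_succ) (hg.mono (hs.out (hτs i) (hτs (i + 1))))
      (Finset.mem_filter.1 hi).2 (hy i) (hy (i + 1))
  choose! t ht hty using hcross
  have hstrict : StrictMonoOn t
      ({i ∈ Finset.range k | y ∈ uIoc (g (τ i)) (g (τ (i + 1)))} : Finset ℕ) := fun i hi j hj hij =>
    (ht i hi).2.trans_le ((hτ hij).trans (ht j hj).1.le)
  rw [← encard_coe_eq_coe_finsetCard]
  refine encard_le_encard_of_injOn (fun i hi => ⟨?_, hty i hi⟩) hstrict.injOn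
  exact hs.out (hτs i) (hτs (i + 1)) (Ioo_subset_Icc_self (ht i hi))

theorem eVariationOn_le_lintegral_encard (hs : s.OrdConnected) (hg : ContinuousOn g s) :
    eVariationOn g s ≤ ∫⁻ y, ((s ∩ g ⁻¹' {y}).encard : ℝ≥0∞) := by
  classical
  refine iSup_le ?_
  rintro ⟨k, τ, hτ, hτs⟩
  have hedist : ∀ i, edist (g (τ (i + 1))) (g (τ i)) =
      ∫⁻ y, (uIoc (g (τ i)) (g (τ (i + 1)))).indicator 1 y := by
    intro i
    rw [lintegral_indicator_one measurableSet_uIoc, Real.volume_uIoc, edist_dist, Real.dist_eq]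
  simp_rw [hedist]
  rw [← lintegral_finsetSum _ fun i _ => measurable_one.indicator measurableSet_uIoc]
  have hpartition : ∀ᵐ y : ℝ, ∀ i, g (τ i) ≠ y :=
    ae_all_iff.2 fun i => (Measure.ae_ne volume _).mono fun y hy => hy.symm
  refine lintegral_mono_ae (hpartition.mono fun y hy => ?_)
  calc ∑ i ∈ Finset.range k, (uIoc (g (τ i)) (g (τ (i + 1)))).indicator 1 y
      = ((({i ∈ Finset.range k | y ∈ uIoc (g (τ i)) (g (τ (i + 1)))}.card : ℕ∞)) : ℝ≥0∞) := by
        simp [indicator_apply]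
    _ ≤ ((s ∩ g ⁻¹' {y}).encard : ℝ≥0∞) := by
        exact_mod_cast card_filter_mem_uIoc_le_encard hs hg hτ hτs hy k

theorem eVariationOn_le_of_ae_encard_le (hs : s.OrdConnected) (hg : ContinuousOn g s) {c R : ℝ}
    (hR : MapsTo g s (Metric.closedBall c R)) {m : ℕ}
    (hm : ∀ᵐ y : ℝ, (s ∩ g ⁻¹' {y}).encard ≤ m) :
    eVariationOn g s ≤ m * ENNReal.ofReal (2 * R) := by
  have hcount : ∀ᵐ y : ℝ, ((s ∩ g ⁻¹' {y}).encard : ℝ≥0∞) ≤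
      (Metric.closedBall c R).indicator (fun _ => (m : ℝ≥0∞)) y := by
    filter_upwards [hm] with y hy
    by_cases hyR : y ∈ Metric.closedBall c R
    · rw [indicator_of_mem hyR]
      exact_mod_cast hy
    · have hempty : s ∩ g ⁻¹' {y} = ∅ :=
        eq_empty_of_forall_notMem fun t ht => hyR (ht.2 ▸ hR ht.1)
      simp [hempty]
  calc eVariationOn g s ≤ ∫⁻ y, ((s ∩ g ⁻¹' {y}).encard : ℝ≥0∞) :=
        eVariationOn_le_lintegral_encard hs hg
    _ ≤ ∫⁻ y, (Metric.closedBall c R).indicator (fun _ => (m : ℝ≥0∞)) y := lintegral_mono_ae hcount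
    _ = m * ENNReal.ofReal (2 * R) := by
        rw [lintegral_indicator_const Metric.isClosed_closedBall.measurableSet,
          Real.volume_closedBall]

end Indicatrix

theorem integral_abs_im_exp_mul (w : ℂ) :
    ∫ θ in (0 : ℝ)..Real.pi, |(exp (θ * I) * w).im| = 2 * ‖w‖ := by
  have hpolar : ∀ θ : ℝ, |(exp (θ * I) * w).im| = ‖w‖ * |Real.sin (θ + w.arg)| := by
    intro θ
    have hrotate : exp (θ * I) * w = ‖w‖ * exp ((θ + w.arg : ℝ) * I) := by
      conv_lhs => rw [← norm_mul_exp_arg_mul_I w]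
      rw [mul_left_comm, ← exp_add, ofReal_add, add_mul]
    rw [hrotate, im_ofReal_mul, exp_ofReal_mul_I_im, abs_mul, abs_norm]
  have hperiodic : Function.Periodic (fun x => |Real.sin x|) Real.pi := fun x => by
    simp only [Real.sin_add_pi, abs_neg]
  have hsin : ∫ θ in (0 : ℝ)..Real.pi, |Real.sin (θ + w.arg)| = 2 := by
    rw [intervalIntegral.integral_comp_add_right (fun x => |Real.sin x|), zero_add,
      add_comm Real.pi, hperiodic.intervalIntegral_add_eq _ 0, zero_add]
    calc ∫ x in (0 : ℝ)..Real.pi, |Real.sin x| = ∫ x in (0 : ℝ)..Real.pi, Real.sin x :=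
          intervalIntegral.integral_congr fun x hx => abs_of_nonneg
            (Real.sin_nonneg_of_mem_Icc (uIcc_of_le Real.pi_pos.le ▸ hx))
      _ = 2 := by
          rw [integral_sin, Real.cos_zero, Real.cos_pi]
          norm_num
  simp_rw [hpolar]
  rw [intervalIntegral.integral_const_mul, hsin, mul_comm]

theorem lintegral_enorm_im_exp_mul (w : ℂ) :
    ∫⁻ θ : ℝ in Ioc 0 Real.pi, ‖(exp (θ * I) * w).im‖ₑ = 2 * ‖w‖ₑ := by
  have hcont : Continuous fun θ : ℝ => |(exp (θ * I) * w).im| := by fun_prop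
  simp_rw [← ofReal_norm, Real.norm_eq_abs]
  rw [← ofReal_integral_eq_lintegral_ofReal
      (hcont.integrableOn_Ioc) (Filter.Eventually.of_forall fun θ => abs_nonneg _),
    ← intervalIntegral.integral_of_le Real.pi_pos.le, integral_abs_im_exp_mul,
    ENNReal.ofReal_mul zero_le_two, ENNReal.ofReal_ofNat]

theorem two_mul_eVariationOn_le_lintegral {ι : Type*} [LinearOrder ι] (γ : ι → ℂ) (s : Set ι) :
    2 * eVariationOn γ s ≤
      ∫⁻ θ : ℝ in Ioc 0 Real.pi, eVariationOn (fun t => (exp (θ * I) * γ t).im) s := by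
  rw [eVariationOn, ENNReal.mul_iSup]
  refine iSup_le fun p => ?_
  have hchord : ∀ u v : ι, 2 * edist (γ u) (γ v) =
      ∫⁻ θ : ℝ in Ioc 0 Real.pi, edist (exp (θ * I) * γ u).im (exp (θ * I) * γ v).im := by
    intro u v
    simp_rw [edist_eq_enorm_sub, ← sub_im, ← mul_sub]
    exact (lintegral_enorm_im_exp_mul _).symm
  simp_rw [Finset.mul_sum, hchord]
  rw [← lintegral_finsetSum _ fun i _ => Continuous.measurable (by fun_prop)]
  exact lintegral_mono fun θ => eVariationOn.sum_le p.2.2.1 p.2.2.2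

theorem integral_norm_deriv_le_of_ae_encard_le {γ : ℝ → ℂ} {a b R : ℝ} {z₀ : ℂ} (hab : a ≤ b)
    (hγ : ContinuousOn γ (Icc a b)) (hR : MapsTo γ (Icc a b) (Metric.closedBall z₀ R)) {m : ℕ}
    (hm : ∀ e : ℂ, ‖e‖ = 1 → ∀ᵐ y : ℝ,
      (Icc a b ∩ (fun t => (e * γ t).im) ⁻¹' {y}).encard ≤ m) :
    ∫ t in a..b, ‖deriv γ t‖ ≤ Real.pi * m * R := by
  have hR0 : 0 ≤ R := dist_nonneg.trans (hR (left_mem_Icc.2 hab))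
  have hproj : ∀ θ : ℝ, eVariationOn (fun t => (exp (θ * I) * γ t).im) (Icc a b) ≤
      m * ENNReal.ofReal (2 * R) := by
    intro θ
    refine eVariationOn_le_of_ae_encard_le ordConnected_Icc
      (continuous_im.comp_continuousOn (continuousOn_const.mul hγ))
      (c := (exp (θ * I) * z₀).im) (fun t ht => ?_) (hm _ (norm_exp_ofReal_mul_I θ))
    calc |(exp (θ * I) * γ t).im - (exp (θ * I) * z₀).im| = |(exp (θ * I) * (γ t - z₀)).im| := by
          rw [← sub_im, ← mul_sub]
      _ ≤ ‖exp (θ * I) * (γ t - z₀)‖ := abs_im_le_norm _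
      _ = dist (γ t) z₀ := by rw [norm_mul, norm_exp_ofReal_mul_I, one_mul, dist_eq_norm]
      _ ≤ R := hR ht
  have htwo : 2 * eVariationOn γ (Icc a b) ≤ 2 * ENNReal.ofReal (Real.pi * m * R) := calc
    2 * eVariationOn γ (Icc a b)
      ≤ ∫⁻ θ : ℝ in Ioc 0 Real.pi, eVariationOn (fun t => (exp (θ * I) * γ t).im) (Icc a b) :=
        two_mul_eVariationOn_le_lintegral γ _
    _ ≤ ∫⁻ _ : ℝ in Ioc 0 Real.pi, m * ENNReal.ofReal (2 * R) := lintegral_mono hproj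
    _ = 2 * ENNReal.ofReal (Real.pi * m * R) := by
        rw [setLIntegral_const, Real.volume_Ioc, sub_zero, ENNReal.ofReal_mul zero_le_two,
          mul_assoc Real.pi, ENNReal.ofReal_mul Real.pi_pos.le, ENNReal.ofReal_mul m.cast_nonneg,
          ENNReal.ofReal_natCast, ENNReal.ofReal_ofNat]
        ring
  have hvar : eVariationOn γ (Icc a b) ≤ ENNReal.ofReal (Real.pi * m * R) :=
    (ENNReal.mul_le_mul_iff_right two_ne_zero ENNReal.ofNat_ne_top).1 htwo
  refine (integral_norm_deriv_le_eVariationOn hab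
    (ne_top_of_le_ne_top ENNReal.ofReal_ne_top hvar)).trans ?_
  exact ENNReal.toReal_le_of_le_ofReal (by positivity) hvar

end Crofton

/-! ### The length of a path of steepest descent -/

theorem re_logDeriv_div_neg {f : ℂ[X]} (hf : f.roots ≠ 0) {ν z : ℂ}
    (hz : ∀ a ∈ f.roots, 0 < (ν * (a - z)).re) : (f.derivative.eval z / f.eval z / ν).re < 0 := by
  have hf0 : f ≠ 0 := by
    rintro rfl
    exact hf roots_zero
  have hfz : f.eval z ≠ 0 := by
    intro heval
    simpa using hz z ((mem_roots hf0).2 heval)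
  rw [eval_derivative_div_eval_eq_sum hfz, Finset.sum_div, re_sum]
  refine Finset.sum_neg (fun a ha => ?_) (Multiset.toFinset_nonempty.2 hf)
  have hmem : a ∈ f.roots := Multiset.mem_toFinset.1 ha
  have hpos := hz a hmem
  have hterm : (f.rootMultiplicity a : ℂ) / (z - a) / ν =
      (-(f.rootMultiplicity a : ℝ) : ℝ) * (ν * (a - z))⁻¹ := by
    rw [div_div, div_eq_mul_inv, mul_comm ν, ← neg_sub z a, neg_mul, inv_neg]
    push_cast
    ring
  rw [hterm, re_ofReal_mul, inv_re]
  refine mul_neg_of_neg_of_pos (neg_neg_of_pos ?_) (div_pos hpos (normSq_pos.2 ?_))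
  · exact_mod_cast (rootMultiplicity_pos hf0).2 (isRoot_of_mem_roots hmem)
  · rintro heq
    rw [heq, zero_re] at hpos
    exact hpos.false

namespace IsDescentPath

variable {f : ℂ[X]} {γ : ℝ → ℂ} {K : Set ℂ}

theorem mapsTo_of_roots_mem (h : IsDescentPath f γ) (hconv : Convex ℝ K) (hclosed : IsClosed K)
    (hroots : ∀ a ∈ f.roots, a ∈ K) (h1 : γ 1 ∈ K) : MapsTo γ (Icc 0 1) K := by
  intro t ht
  by_contra hout
  obtain ⟨ν, hν⟩ := exists_forall_re_mul_sub_pos hconv hclosed hout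
  have hcont : ContinuousOn (fun t => (ν * γ t).re) (Icc 0 1) :=
    continuous_re.comp_continuousOn (continuousOn_const.mul h.continuousOn)
  obtain ⟨u, hu, hmin⟩ := isCompact_Icc.exists_isMinOn (nonempty_Icc.2 zero_le_one) hcont
  have hbelow : ∀ w ∈ K, 0 < (ν * (w - γ u)).re := by
    intro w hw
    have hlt := hν w hw
    have hle : (ν * γ u).re ≤ (ν * γ t).re := hmin ht
    rw [mul_sub, sub_re] at hlt ⊢
    linarith
  have hu' : u ∈ Ioo (0 : ℝ) 1 := by
    refine ⟨hu.1.lt_of_ne' ?_, hu.2.lt_of_ne ?_⟩ <;> rintro rfl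
    · simpa using hbelow _ (hroots _ h.zero_mem_roots)
    · simpa using hbelow _ h1
  have hcritical : (ν * deriv γ u).re = 0 :=
    (hmin.isLocalMin (Icc_mem_nhds hu'.1 hu'.2)).hasDerivAt_eq_zero
      (reCLM.hasFDerivAt.comp_hasDerivAt u ((h.differentiableAt u hu').hasDerivAt.const_mul ν))
  have hneg : (f.derivative.eval (γ u) / f.eval (γ u) / ν).re < 0 :=
    re_logDeriv_div_neg (Multiset.card_pos.1 (Multiset.card_pos_iff_exists_mem.2
      ⟨_, h.zero_mem_roots⟩)) fun a ha => hbelow a (hroots a ha)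
  rw [h.logDeriv_div_eq hu', re_ofReal_mul, inv_re, hcritical, zero_div, mul_zero] at hneg
  exact hneg.false

end IsDescentPath

section Differentiability

variable {f : ℂ[X]} {γ : ℝ → ℂ} {c : ℂ} {x : ℝ}

/-- Near a regular point of `f`, the path is `t ↦ f⁻¹ (t * c)` for a local inverse of `f`. -/
theorem differentiableAt_of_eval_derivative_ne_zero (hγ : ContinuousAt γ x)
    (heq : ∀ᶠ t : ℝ in nhds x, f.eval (γ t) = t * c) (hne : f.derivative.eval (γ x) ≠ 0) :
    DifferentiableAt ℝ γ x := by
  have hf := f.hasStrictDerivAt (γ x)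
  have hinv := (hf.to_localInverse hne).hasDerivAt
  rw [heq.self_of_nhds] at hinv
  have hline : HasDerivAt (fun t : ℝ => t * c) (1 * c) x := ofRealCLM.hasDerivAt.mul_const c
  refine (hinv.comp x hline).differentiableAt.congr_of_eventuallyEq ?_
  filter_upwards [hγ.eventually (hf.hasStrictFDerivAt_equiv hne).eventually_left_inverse, heq]
    with t hleft ht
  rw [Function.comp_apply, ← ht]
  exact hleft.symm

theorem differentiableAt_of_differentiableWithinAt_Ici (hc : c ≠ 0) (hγ : ContinuousAt γ x)
    (hright : DifferentiableWithinAt ℝ γ (Ici x) x)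
    (heq : ∀ᶠ t : ℝ in nhds x, f.eval (γ t) = t * c) : DifferentiableAt ℝ γ x := by
  refine differentiableAt_of_eval_derivative_ne_zero hγ heq fun hzero => hc ?_
  rw [← eval_derivative_mul_derivWithin (uniqueDiffWithinAt_Ici x) hright heq, hzero, zero_mul]

theorem deriv_eq_zero_of_eval_eq_zero (hf : f ≠ 0) {a b : ℝ} (hγ : ContinuousOn γ (Icc a b))
    (heq : ∀ t ∈ Icc a b, f.eval (γ t) = 0) (hx : x ∈ Ioo a b) : deriv γ x = 0 := by
  have hroots : MapsTo γ (Icc a b) f.roots.toFinset := fun t ht =>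
    Multiset.mem_toFinset.2 ((mem_roots hf).2 (heq t ht))
  have hconst : γ =ᶠ[nhds x] fun _ => γ x := by
    filter_upwards [Icc_mem_nhds hx.1 hx.2] with t ht
    exact isPreconnected_Icc.constant_of_mapsTo f.roots.toFinset.finite_toSet.isDiscrete hγ hroots
      ht (Ioo_subset_Icc_self hx)
  rw [hconst.deriv_eq, deriv_const]

end Differentiability

theorem IsDescentPath.integral_norm_deriv_le {f : ℂ[X]} {γ : ℝ → ℂ} {K : Set ℂ} {z₀ : ℂ} {R : ℝ}
    (h : IsDescentPath f γ) (hconv : Convex ℝ K) (hclosed : IsClosed K)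
    (hroots : ∀ a ∈ f.roots, a ∈ K) (hKR : K ⊆ Metric.closedBall z₀ R) (h1 : γ 1 ∈ K)
    (h0 : γ 0 ∈ frontier K) :
    ∫ t in (0 : ℝ)..1, ‖deriv γ t‖ ≤ Real.pi * (2 * f.roots.toFinset.card - 1) * R := by
  have hγK := h.mapsTo_of_roots_mem hconv hclosed hroots h1
  have hcount : (2 * f.roots.toFinset.card - 1 : ℝ) =
      (2 * (f.roots.toFinset.card - 1) + 1 : ℕ) := by
    have hcard : 1 ≤ f.roots.toFinset.card :=
      Finset.card_pos.2 ⟨γ 0, Multiset.mem_toFinset.2 h.zero_mem_roots⟩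
    push_cast [hcard]
    ring
  rw [hcount]
  refine integral_norm_deriv_le_of_ae_encard_le zero_le_one h.continuousOn (hγK.mono_right hKR)
    fun e he => ?_
  filter_upwards [h.ae_isTransverseLine e] with y hl
  exact h.encard_crossings_le hconv hclosed hγK h0 (norm_ne_zero_iff.1 (he ▸ one_ne_zero)) hl

theorem mem_range_of_mem_roots_prod {ι : Type*} [Fintype ι] {α : ι → ℂ} {n : ι → ℕ} {a : ℂ}
    (ha : a ∈ (∏ j, (X - C (α j)) ^ n j).roots) : a ∈ range α := by
  have heval := isRoot_of_mem_roots ha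
  rw [IsRoot, eval_prod, Finset.prod_eq_zero_iff] at heval
  obtain ⟨j, -, hj⟩ := heval
  rw [eval_pow, eval_sub, eval_X, eval_C] at hj
  exact ⟨j, (sub_eq_zero.1 (eq_zero_of_pow_eq_zero hj)).symm⟩

end SteepestDescent

theorem PiecewiseC1On.differentiableWithinAt_Ici {γ : ℝ → ℂ} {a b x : ℝ}
    (h : PiecewiseC1On γ a b) (hx : x ∈ Ico a b) : DifferentiableWithinAt ℝ γ (Ici x) x := by
  obtain ⟨-, k, t, -, ht0, htk, hC⟩ := h
  obtain ⟨i, hi, hi'⟩ : ∃ i : Fin k, t i.castSucc ≤ x ∧ x < t i.succ := by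
    by_contra! hnext
    refine hx.2.not_ge (htk ▸ ?_)
    exact Fin.induction (motive := fun j => t j ≤ x) (ht0 ▸ hx.1) hnext (Fin.last k)
  exact ((hC i).differentiableOn one_ne_zero x ⟨hi, hi'.le⟩).mono_of_mem_nhdsWithin
    (Icc_mem_nhdsGE_of_mem ⟨hi, hi'⟩)

theorem steepest_descent_length_le_of_boundary_root_general {f : ℂ[X]} (hf : f ≠ 0) {K : Set ℂ}
    (hconv : Convex ℝ K) (hclosed : IsClosed K) (hroots : ∀ a ∈ f.roots, a ∈ K) {z₀ : ℂ} {R : ℝ}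
    (hKR : K ⊆ Metric.closedBall z₀ R) {γ : ℝ → ℂ} (hγ : ContinuousOn γ (Icc 0 1))
    (hright : ∀ t ∈ Ioo (0 : ℝ) 1, DifferentiableWithinAt ℝ γ (Ici t) t)
    (heq : ∀ t ∈ Icc (0 : ℝ) 1, f.eval (γ t) = t * f.eval (γ 1)) (h1 : γ 1 ∈ K)
    (h0 : γ 0 ∈ frontier K) :
    ∫ t in (0 : ℝ)..1, ‖deriv γ t‖ ≤ Real.pi * (2 * f.roots.toFinset.card - 1) * R := by
  by_cases hc : f.eval (γ 1) = 0
  · have hzero : ∀ t ∈ Ioo (0 : ℝ) 1, ‖deriv γ t‖ = 0 := fun t ht => by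
      rw [SteepestDescent.deriv_eq_zero_of_eval_eq_zero hf hγ
        (fun t ht => by rw [heq t ht, hc, mul_zero]) ht, norm_zero]
    have hR : 0 ≤ R := dist_nonneg.trans (hKR h1)
    have hcard : (1 : ℝ) ≤ f.roots.toFinset.card := by
      exact_mod_cast Finset.card_pos.2 ⟨γ 1, Multiset.mem_toFinset.2 ((mem_roots hf).2 hc)⟩
    rw [intervalIntegral.integral_of_le zero_le_one, MeasureTheory.integral_Ioc_eq_integral_Ioo,
      MeasureTheory.setIntegral_congr_fun measurableSet_Ioo hzero, MeasureTheory.integral_zero]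
    exact mul_nonneg (mul_nonneg Real.pi_pos.le (by linarith)) hR
  · have h : SteepestDescent.IsDescentPath f γ :=
      { continuousOn := hγ
        differentiableAt := fun t ht =>
          SteepestDescent.differentiableAt_of_differentiableWithinAt_Ici hc
            (hγ.continuousAt (Icc_mem_nhds ht.1 ht.2)) (hright t ht)
            (Filter.mem_of_superset (Icc_mem_nhds ht.1 ht.2) heq)
        eval_eq := heq
        eval_one_ne_zero := hc }
    exact h.integral_norm_deriv_le hconv hclosed hroots hKR h1 h0

/-- A path of steepest descent for `|f|` from a point `β` of
the convex hull `K` of the roots of `f` to a root of `f` lying on the boundary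
of `K` has length at most `2 π s R`. -/
theorem steepest_descent_length_le_of_boundary_root
    (s : ℕ) (hs : 2 ≤ s)
    (α : Fin s → ℂ) (hα : Function.Injective α)
    (n : Fin s → ℕ) (hn : ∀ j, 1 ≤ n j)
    (N : ℕ) (hN : N = ∑ j, n j)
    (f : Polynomial ℂ) (hf : f = ∏ j, (X - C (α j)) ^ n j)
    (K : Set ℂ) (hK : K = convexHull ℝ (Set.range α))
    (z₀ : ℂ) (R : ℝ) (hR : 0 < R) (hKD : K ⊆ Metric.closedBall z₀ R)
    (β : ℂ) (hβ : β ∈ K)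
    (γ : ℝ → ℂ) (hγpc : PiecewiseC1On γ 0 1)
    (hγ1 : γ 1 = β)
    (hγf : ∀ t ∈ Set.Icc (0 : ℝ) 1, f.eval (γ t) = (t : ℂ) * f.eval β)
    (hα0 : γ 0 ∈ frontier K) :
    ∫ t in (0 : ℝ)..1, ‖deriv γ t‖ ≤ 2 * Real.pi * s * R := by
  have hrange : ∀ a ∈ f.roots, a ∈ range α := fun a ha =>
    SteepestDescent.mem_range_of_mem_roots_prod (hf ▸ ha)
  have hf0 : f ≠ 0 := hf ▸ Finset.prod_ne_zero_iff.2 fun j _ => pow_ne_zero _ (X_sub_C_ne_zero _)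
  have hcard : f.roots.toFinset.card ≤ s := by
    have hsub : f.roots.toFinset ⊆ Finset.univ.image α := fun a ha => by
      simpa using hrange a (Multiset.mem_toFinset.1 ha)
    simpa using (Finset.card_le_card hsub).trans Finset.card_image_le
  subst hK hγ1
  refine (steepest_descent_length_le_of_boundary_root_general hf0 (convex_convexHull ℝ _)
    ((finite_range α).isCompact_convexHull ℝ).isClosed
    (fun a ha => subset_convexHull ℝ _ (hrange a ha)) hKD hγpc.1
    (fun t ht => hγpc.differentiableWithinAt_Ici ⟨ht.1.le, ht.2⟩) hγf hβ hα0).trans ?_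
  calc Real.pi * (2 * f.roots.toFinset.card - 1) * R ≤ Real.pi * (2 * s) * R := by
        gcongr
        have : (f.roots.toFinset.card : ℝ) ≤ s := mod_cast hcard
        linarith
    _ = 2 * Real.pi * s * R := by ring
end

section
/- For every β ∈ ℂ with f(β) ≠ 0 there exists a continuous map γ : ℝ → ℂ such that γ(1) = β and f(γ(t)) = t·f(β) for every t ∈ ℝ. -/
open Polynomial Complex Set

/-!
A nonconstant polynomial `f` of degree `N` over an algebraically closed normed field is uniformly
open: if `f x` is within `r` of `y`, then some solution of `f z = y` is within a constant multiple
of `r ^ (1 / N)` of `x`. So a sequence in the target lifts to a sequence with controlled steps, and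
these steps cannot accumulate: while the target stays in a set of diameter `r`, every point of the
lift is close to one of the at most `N` points of a single fibre, and once the lift has been near a
given one of them for the last time, that point can be discarded. Sampling a path on finer and finer
grids therefore gives approximate lifts with a common modulus of continuity up to the mesh, and
their limit along an ultrafilter is a continuous lift. The critical values of `f`, where it is not a
covering map, play no special role.
-/

open Filter Topology Metric
open scoped NNReal

theorem dist_le_of_forall_exists_dist_le {X : Type*} [PseudoMetricSpace X] {u : ℕ → X} {δ : ℝ}
    (S : Finset X) {k l : ℕ} (hkl : k ≤ l) (hS : ∀ i ∈ Icc k l, ∃ a ∈ S, dist (u i) a ≤ δ)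
    (hstep : ∀ i ∈ Ico k l, dist (u i) (u (i + 1)) ≤ δ) :
    dist (u k) (u l) ≤ 3 * S.card * δ := by
  classical
  induction S using Finset.strongInduction generalizing k with
  | H S ih =>
    obtain ⟨a, haS, hka⟩ := hS k ⟨le_rfl, hkl⟩
    have hδ : 0 ≤ δ := dist_nonneg.trans hka
    have hcard : ((S.erase a).card : ℝ) + 1 = S.card := mod_cast Finset.card_erase_add_one haS
    obtain ⟨j, hj, hlast⟩ := ((Finset.Icc k l).filter fun i ↦ dist (u i) a ≤ δ).exists_max_image id
      ⟨k, by simp [hkl, hka]⟩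
    simp only [Finset.mem_filter, Finset.mem_Icc, id_eq, and_imp] at hj hlast
    obtain ⟨⟨hkj, hjl⟩, hja⟩ := hj
    have hkj_dist : dist (u k) (u j) ≤ 2 * δ := by
      linarith [dist_triangle_right (u k) (u j) a]
    have hpos : 0 ≤ (S.erase a).card * δ := by positivity
    rcases hjl.eq_or_lt with rfl | hjl
    · rw [← hcard]
      linarith
    · have htail : dist (u (j + 1)) (u l) ≤ 3 * (S.erase a).card * δ := by
        refine ih _ (Finset.erase_ssubset haS) hjl (fun i hi ↦ ?_)
          fun i hi ↦ hstep i ⟨by grind, hi.2⟩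
        obtain ⟨b, hbS, hib⟩ := hS i ⟨by grind, hi.2⟩
        refine ⟨b, Finset.mem_erase.2 ⟨?_, hbS⟩, hib⟩
        rintro rfl
        have hij : i ≤ j := hlast i (by grind) hi.2 hib
        grind
      have hj_step := hstep j ⟨hkj, hjl⟩
      rw [← hcard]
      linarith [dist_triangle4 (u k) (u j) (u (j + 1)) (u l)]

/-- The largest multiple of the mesh `η` that is at most `t`. By the convention `t / 0 = 0` it is
`0` when `η = 0`. -/
noncomputable def gridFloor (η t : ℝ≥0) : ℝ≥0 := ⌊t / η⌋₊ * η

theorem gridFloor_zero (η : ℝ≥0) : gridFloor η 0 = 0 := by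
  simp [gridFloor]

theorem gridFloor_le (η t : ℝ≥0) : gridFloor η t ≤ t :=
  mul_le_of_le_div₀ zero_le zero_le (Nat.floor_le zero_le)

theorem sub_le_gridFloor {η : ℝ≥0} (hη : 0 < η) (t : ℝ≥0) : t - η ≤ gridFloor η t := by
  have hlt : t / η < ⌊t / η⌋₊ + 1 := Nat.lt_floor_add_one _
  rw [div_lt_iff₀ hη, add_mul, one_mul] at hlt
  exact tsub_le_iff_right.2 hlt.le

theorem tendsto_gridFloor (t : ℝ≥0) : Tendsto (gridFloor · t) (𝓝[>] 0) (𝓝 t) := by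
  have hsub : Tendsto (fun η : ℝ≥0 ↦ t - η) (𝓝[>] 0) (𝓝 t) := by
    have : Continuous fun η : ℝ≥0 ↦ t - η := by fun_prop
    simpa using (this.tendsto 0).mono_left nhdsWithin_le_nhds
  refine tendsto_of_tendsto_of_tendsto_of_le_of_le' hsub tendsto_const_nhds ?_
    (.of_forall (gridFloor_le · t))
  filter_upwards [self_mem_nhdsWithin] with η hη using sub_le_gridFloor hη t

/-- `ω` is a modulus of uniform openness for `p`: every point `y` of the target is the image of a
point within `ω (dist (p x) y)` of `x`. Only the values of `ω` on `[0, ∞)` matter. -/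
structure IsOpennessModulus {X Y : Type*} [PseudoMetricSpace X] [PseudoMetricSpace Y]
    (p : X → Y) (ω : ℝ → ℝ) : Prop where
  monotoneOn : MonotoneOn ω (Ici 0)
  tendsto_zero : Tendsto ω (𝓝[>] 0) (𝓝 0)
  exists_dist_le : ∀ x y, ∃ x', p x' = y ∧ dist x x' ≤ ω (dist (p x) y)

namespace IsOpennessModulus

section Discrete

variable {X Y : Type*} [PseudoMetricSpace X] [PseudoMetricSpace Y] {p : X → Y} {ω : ℝ → ℝ} {N : ℕ}

theorem exists_dist_le_of_le (h : IsOpennessModulus p ω) {x : X} {y : Y} {r : ℝ}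
    (hr : dist (p x) y ≤ r) : ∃ x', p x' = y ∧ dist x x' ≤ ω r := by
  obtain ⟨x', hx', hdist⟩ := h.exists_dist_le x y
  exact ⟨x', hx', hdist.trans (h.monotoneOn dist_nonneg (dist_nonneg.trans hr) hr)⟩

theorem dist_seq_le (h : IsOpennessModulus p ω) (hN : ∀ y, (p ⁻¹' {y}).encard ≤ N) {u : ℕ → X}
    (hu : ∀ i, dist (u i) (u (i + 1)) ≤ ω (dist (p (u i)) (p (u (i + 1))))) {k l : ℕ} (hkl : k ≤ l)
    {r : ℝ} (hr : ∀ i ∈ Icc k l, ∀ j ∈ Icc k l, dist (p (u i)) (p (u j)) ≤ r) :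
    dist (u k) (u l) ≤ 3 * N * ω r := by
  have hk : k ∈ Icc k l := ⟨le_rfl, hkl⟩
  have hr₀ : 0 ≤ r := dist_nonneg.trans (hr k hk k hk)
  obtain ⟨x', -, hx'⟩ := h.exists_dist_le_of_le (hr k hk k hk)
  have hω : 0 ≤ ω r := dist_nonneg.trans hx'
  have hfin : (p ⁻¹' {p (u k)}).Finite := finite_of_encard_le_coe (hN _)
  have hcard : hfin.toFinset.card ≤ N := by
    exact_mod_cast hfin.encard_eq_coe_toFinset_card ▸ hN (p (u k))
  calc dist (u k) (u l)
    _ ≤ 3 * hfin.toFinset.card * ω r := by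
        refine dist_le_of_forall_exists_dist_le _ hkl (fun i hi ↦ ?_) fun i hi ↦ ?_
        · obtain ⟨a, ha, hia⟩ := h.exists_dist_le_of_le (hr i hi k hk)
          exact ⟨a, by simpa using ha, hia⟩
        · exact (hu i).trans (h.monotoneOn dist_nonneg hr₀
            (hr i ⟨hi.1, hi.2.le⟩ (i + 1) ⟨by grind, hi.2⟩))
    _ ≤ 3 * N * ω r := by gcongr

theorem exists_seq_lift (h : IsOpennessModulus p ω) (hN : ∀ y, (p ⁻¹' {y}).encard ≤ N)
    (y : ℕ → Y) {x : X} (hx : p x = y 0) :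
    ∃ u : ℕ → X, u 0 = x ∧ (∀ k, p (u k) = y k) ∧ ∀ k l r, k ≤ l →
      (∀ i ∈ Icc k l, ∀ j ∈ Icc k l, dist (y i) (y j) ≤ r) → dist (u k) (u l) ≤ 3 * N * ω r := by
  choose next hnext hdist using h.exists_dist_le
  let u : ℕ → X := fun k ↦ Nat.rec x (fun i z ↦ next z (y (i + 1))) k
  have hpu : ∀ k, p (u k) = y k
    | 0 => hx
    | k + 1 => hnext _ _
  refine ⟨u, rfl, hpu, fun k l r hkl hr ↦ h.dist_seq_le hN (fun i ↦ ?_) hkl (by simpa only [hpu])⟩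
  rw [hpu (i + 1)]
  exact hdist _ _

theorem exists_lift_gridFloor (h : IsOpennessModulus p ω) (hN : ∀ y, (p ⁻¹' {y}).encard ≤ N)
    (c : ℝ≥0 → Y) {x : X} (hx : p x = c 0) (η : ℝ≥0) :
    ∃ g : ℝ≥0 → X, g 0 = x ∧ (∀ t, p (g t) = c (gridFloor η t)) ∧ ∀ s t r,
      (∀ a ∈ uIcc (gridFloor η s) (gridFloor η t), ∀ b ∈ uIcc (gridFloor η s) (gridFloor η t),
        dist (c a) (c b) ≤ r) → dist (g s) (g t) ≤ 3 * N * ω r := by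
  obtain ⟨u, hu₀, hpu, hdist⟩ :=
    h.exists_seq_lift hN (fun k ↦ c (k * η)) (x := x) (by simpa using hx)
  refine ⟨fun t ↦ u ⌊t / η⌋₊, by simpa using hu₀, fun t ↦ hpu _, fun s t r hr ↦ ?_⟩
  wlog hst : s ≤ t generalizing s t
  · rw [dist_comm]
    exact this t s (by rwa [uIcc_comm]) (le_of_not_ge hst)
  have hmem (i : ℕ) (hi : i ∈ Icc ⌊s / η⌋₊ ⌊t / η⌋₊) :
      i * η ∈ uIcc (gridFloor η s) (gridFloor η t) :=
    Icc_subset_uIcc ⟨mul_le_mul_left (Nat.cast_le.2 hi.1) η, mul_le_mul_left (Nat.cast_le.2 hi.2) η⟩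
  exact hdist _ _ r (by gcongr) fun i hi j hj ↦ hr _ (hmem i hi) _ (hmem j hj)

end Discrete

section Lift

variable {X Y : Type*} [MetricSpace X] [ProperSpace X] [MetricSpace Y] {p : X → Y} {ω : ℝ → ℝ}
  {N : ℕ}

theorem exists_lift_dist_le (h : IsOpennessModulus p ω) (hp : Continuous p)
    (hN : ∀ y, (p ⁻¹' {y}).encard ≤ N) {c : ℝ≥0 → Y} (hc : Continuous c) {x : X} (hx : p x = c 0) :
    ∃ γ : ℝ≥0 → X, γ 0 = x ∧ (∀ t, p (γ t) = c t) ∧ ∀ (A : Set ℝ≥0) (s t : ℝ≥0) (r : ℝ),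
      A.OrdConnected → A ∈ 𝓝 s → A ∈ 𝓝 t → (∀ a ∈ A, ∀ b ∈ A, dist (c a) (c b) ≤ r) →
        dist (γ s) (γ t) ≤ 3 * N * ω r := by
  choose g hg₀ hpg hdist using h.exists_lift_gridFloor hN c hx
  let U : Ultrafilter ℝ≥0 := .of (𝓝[>] 0)
  have hU : ↑U ≤ 𝓝[>] (0 : ℝ≥0) := Ultrafilter.of_le _
  have hfloor (t : ℝ≥0) : Tendsto (gridFloor · t) U (𝓝 t) := (tendsto_gridFloor t).mono_left hU
  have hlim (t : ℝ≥0) : ∃ z, Tendsto (g · t) U (𝓝 z) := by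
    obtain ⟨r, hr⟩ := isBounded_iff.1 ((isCompact_Icc (a := 0) (b := t)).image hc).isBounded
    have hball (η : ℝ≥0) : g η t ∈ closedBall x (3 * N * ω r) := by
      have hsub : uIcc (gridFloor η 0) (gridFloor η t) ⊆ Icc 0 t := by
        rw [gridFloor_zero, uIcc_of_le zero_le]
        exact Icc_subset_Icc_right (gridFloor_le η t)
      rw [mem_closedBall', ← hg₀ η]
      exact hdist η 0 t r fun a ha b hb ↦
        hr (mem_image_of_mem c (hsub ha)) (mem_image_of_mem c (hsub hb))
    obtain ⟨z, -, hz⟩ := (isCompact_closedBall x (3 * N * ω r)).ultrafilter_le_nhds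
      (U.map (g · t)) (tendsto_principal.2 (.of_forall hball))
    exact ⟨z, hz⟩
  choose γ hγ using hlim
  refine ⟨γ, tendsto_nhds_unique (hγ 0) (by simp [hg₀]), fun t ↦ ?_, fun A s t r hA hs ht hr ↦ ?_⟩
  · refine tendsto_nhds_unique ((hp.tendsto _).comp (hγ t)) ?_
    exact ((hc.tendsto t).comp (hfloor t)).congr fun η ↦ (hpg η t).symm
  · refine le_of_tendsto ((hγ s).dist (hγ t)) ?_
    filter_upwards [hfloor s hs, hfloor t ht] with η hηs hηt
    have hsub := hA.uIcc_subset hηs hηt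
    exact hdist η s t r fun a ha b hb ↦ hr a (hsub ha) b (hsub hb)

theorem exists_continuous_lift_nnreal (h : IsOpennessModulus p ω) (hp : Continuous p)
    (hN : ∀ y, (p ⁻¹' {y}).encard ≤ N) {c : ℝ≥0 → Y} (hc : Continuous c) {x : X} (hx : p x = c 0) :
    ∃ γ : ℝ≥0 → X, Continuous γ ∧ γ 0 = x ∧ ∀ t, p (γ t) = c t := by
  obtain ⟨γ, hγ₀, hpγ, hdist⟩ := h.exists_lift_dist_le hp hN hc hx
  refine ⟨γ, continuous_iff_continuousAt.2 fun s ↦ Metric.tendsto_nhds.2 fun ε hε ↦ ?_, hγ₀, hpγ⟩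
  obtain ⟨r, hr, hr₀⟩ : ∃ r, 3 * N * ω r < ε ∧ 0 < r := by
    have hω : Tendsto (3 * N * ω ·) (𝓝[>] 0) (𝓝 0) := by
      simpa using h.tendsto_zero.const_mul (3 * N : ℝ)
    exact ((hω.eventually_lt_const hε).and self_mem_nhdsWithin).exists
  let A := (c ⁻¹' ball (c s) (r / 2)).ordConnectedComponent s
  have hA : A ∈ 𝓝 s := ordConnectedComponent_mem_nhds.2
    (hc.continuousAt.preimage_mem_nhds (ball_mem_nhds _ (half_pos hr₀)))
  have hosc (a : ℝ≥0) (ha : a ∈ A) (b : ℝ≥0) (hb : b ∈ A) : dist (c a) (c b) ≤ r := by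
    have hball : A ⊆ c ⁻¹' ball (c s) (r / 2) := ordConnectedComponent_subset
    linarith [mem_ball.1 (hball ha), mem_ball.1 (hball hb),
      dist_triangle_right (c a) (c b) (c s)]
  filter_upwards [eventually_mem_nhds_iff.2 hA] with t ht
  exact (hdist A t s r inferInstance ht hA hosc).trans_lt hr

theorem exists_continuous_lift (h : IsOpennessModulus p ω) (hp : Continuous p)
    (hN : ∀ y, (p ⁻¹' {y}).encard ≤ N) {c : ℝ → Y} (hc : Continuous c) {t₀ : ℝ} {x : X}
    (hx : p x = c t₀) : ∃ γ : ℝ → X, Continuous γ ∧ γ t₀ = x ∧ ∀ t, p (γ t) = c t := by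
  obtain ⟨γ₁, hγ₁, h₁, hp₁⟩ := h.exists_continuous_lift_nnreal hp hN
    (c := fun t ↦ c (t₀ - t)) (by fun_prop) (x := x) (by simpa using hx)
  obtain ⟨γ₂, hγ₂, h₂, hp₂⟩ := h.exists_continuous_lift_nnreal hp hN
    (c := fun t ↦ c (t₀ + t)) (by fun_prop) (x := x) (by simpa using hx)
  refine ⟨fun t ↦ if t ≤ t₀ then γ₁ (t₀ - t).toNNReal else γ₂ (t - t₀).toNNReal, ?_, by simpa,
    fun t ↦ ?_⟩
  · refine Continuous.if_le (by fun_prop) (by fun_prop) continuous_id continuous_const ?_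
    rintro t rfl
    simp [h₁, h₂]
  · dsimp only
    split_ifs with ht
    · simp [hp₁, ht]
    · simp [hp₂, (not_le.1 ht).le]

end Lift

end IsOpennessModulus

theorem degree_pos_of_eval_ne {R : Type*} [Semiring R] {f : R[X]} {a b : R}
    (h : f.eval a ≠ f.eval b) : 0 < f.degree := by
  contrapose! h
  rw [eq_C_of_degree_le_zero h, eval_C, eval_C]

theorem exists_root_norm_sub_pow_le {K : Type*} [NormedField K] {f : K[X]} (hf : f.Splits)
    (hdeg : 0 < f.degree) (x : K) :
    ∃ a, f.IsRoot a ∧ ‖f.leadingCoeff‖ * ‖x - a‖ ^ f.natDegree ≤ ‖f.eval x‖ := by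
  classical
  obtain ⟨b, hb⟩ := hf.exists_eval_eq_zero hdeg.ne'
  obtain ⟨a, ha, hmin⟩ := f.roots.toFinset.exists_min_image (‖x - ·‖)
    ⟨b, by simpa [ne_zero_of_degree_gt hdeg] using hb⟩
  simp only [Multiset.mem_toFinset] at ha hmin
  refine ⟨a, isRoot_of_mem_roots ha, ?_⟩
  have hnorm : ‖f.eval x‖ = ‖f.leadingCoeff‖ * (f.roots.map (‖x - ·‖)).prod := by
    rw [hf.eval_eq_prod_roots, norm_mul, ← normHom_apply (Multiset.prod _), map_multiset_prod]
    simp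
  rw [hnorm, hf.natDegree_eq_card_roots]
  gcongr
  simpa using Multiset.prod_map_le_prod_map₀ (fun _ ↦ ‖x - a‖) (‖x - ·‖) (by simp) hmin

theorem isOpennessModulus_eval {K : Type*} [NormedField K] [IsAlgClosed K] {f : K[X]}
    (hf : 0 < f.degree) :
    IsOpennessModulus (f.eval ·) fun r ↦ (r / ‖f.leadingCoeff‖) ^ (f.natDegree : ℝ)⁻¹ where
  monotoneOn r hr s _ hrs := by
    have : 0 ≤ r := hr
    dsimp only
    gcongr
  tendsto_zero := by
    have hN : (0 : ℝ) < (f.natDegree : ℝ)⁻¹ := by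
      simpa [natDegree_pos_iff_degree_pos] using hf
    have hcont : Continuous fun r : ℝ ↦ (r / ‖f.leadingCoeff‖) ^ (f.natDegree : ℝ)⁻¹ :=
      (continuous_id.div_const _).rpow_const fun _ ↦ .inr hN.le
    simpa [Real.zero_rpow hN.ne'] using (hcont.tendsto 0).mono_left nhdsWithin_le_nhds
  exists_dist_le x y := by
    have hC : (C y).degree < f.degree := degree_C_le.trans_lt hf
    obtain ⟨a, ha, hdist⟩ := exists_root_norm_sub_pow_le (IsAlgClosed.splits (f - C y))
      (by rwa [degree_sub_eq_left_of_degree_lt hC]) x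
    rw [leadingCoeff_sub_of_degree_lt hC, natDegree_sub_C, eval_sub, eval_C] at hdist
    refine ⟨a, by simpa [sub_eq_zero] using ha, ?_⟩
    have hlead : 0 < ‖f.leadingCoeff‖ := by simpa using ne_zero_of_degree_gt hf
    have hN : f.natDegree ≠ 0 := (natDegree_pos_iff_degree_pos.2 hf).ne'
    rw [dist_eq_norm, dist_eq_norm, Real.le_rpow_inv_iff_of_pos (by positivity) (by positivity)
      (by positivity), Real.rpow_natCast, le_div_iff₀' hlead]
    exact hdist

theorem encard_preimage_eval_le {R : Type*} [CommRing R] [IsDomain R] {f : R[X]}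
    (hf : 0 < f.degree) (y : R) : ((f.eval ·) ⁻¹' {y}).encard ≤ f.natDegree := by
  classical
  have hroots : (f.eval ·) ⁻¹' {y} = ((f - C y).roots.toFinset : Set R) := by
    ext x
    simp [-mem_roots', mem_roots_sub_C hf]
  rw [hroots, encard_coe_eq_coe_finsetCard]
  exact_mod_cast (Multiset.toFinset_card_le _).trans (card_roots_sub_C' hf)

theorem exists_global_lift_general {f : ℂ[X]} (hf : 0 < f.degree) {c : ℝ → ℂ}
    (hc : Continuous c) {t₀ : ℝ} {β : ℂ} (hβ : f.eval β = c t₀) :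
    ∃ γ : ℝ → ℂ, Continuous γ ∧ γ t₀ = β ∧ ∀ t, f.eval (γ t) = c t :=
  (isOpennessModulus_eval hf).exists_continuous_lift f.continuous (encard_preimage_eval_le hf) hc hβ

/-- For every `β` with `f β ≠ 0`, there is a global continuous
lift `γ : ℝ → ℂ` of the line `t ↦ t • f β` through `f`, with `γ 1 = β`. -/
theorem exists_global_lift
    (s : ℕ) (hs : 2 ≤ s)
    (α : Fin s → ℂ) (hα : Function.Injective α)
    (n : Fin s → ℕ) (hn : ∀ j, 1 ≤ n j)
    (f : Polynomial ℂ) (hf : f = ∏ j, (X - C (α j)) ^ n j)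
    (β : ℂ) (hβ : f.eval β ≠ 0) :
    ∃ γ : ℝ → ℂ, Continuous γ ∧ γ 1 = β ∧
      ∀ t : ℝ, f.eval (γ t) = (t : ℂ) * f.eval β := by
  let j : Fin s := ⟨0, by lia⟩
  have hroot : f.eval (α j) = 0 := by
    rw [hf, eval_prod]
    exact Finset.prod_eq_zero (Finset.mem_univ j) (by simp [Nat.one_le_iff_ne_zero.1 (hn j)])
  exact exists_global_lift_general (degree_pos_of_eval_ne (hroot ▸ hβ)) (by fun_prop) (by simp)
end

section
/- Let β ∈ ℂ with f(β) ≠ 0 and let γ : [0,1] → ℂ be a continuous map with γ(1) = β and f(γ(t)) = t·f(β) for all t ∈ [0,1]. If t ∈ (0,1) is such that γ is differentiable at t and f′(γ(t)) ≠ 0, then there exists a real number λ > 0 such that γ′(t) = λ · f(γ(t)) · conj(f′(γ(t))); that is, γ′(t) is a positive real multiple of the gradient of the function z ↦ |f(z)| at the point γ(t). -/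
open Polynomial Complex Set

/-!
Differentiating `f (γ u) = u w` at `u = t` gives `t f'(γ t) γ'(t) = f (γ t)`. Dividing by
`f'(γ t)` amounts to multiplying by its conjugate over `|f'(γ t)|²`, so the positive factor is
`1 / (t |f'(γ t)|²)`.
-/

open scoped Topology ComplexConjugate

theorem smul_eq_of_hasDerivAt_of_eventuallyEq_smul {𝕜 F : Type*} [NontriviallyNormedField 𝕜]
    [NormedAddCommGroup F] [NormedSpace 𝕜 F] {g : 𝕜 → F} {g' w : F} {t : 𝕜}
    (hg : HasDerivAt g g' t) (hgw : g =ᶠ[𝓝 t] fun u => u • w) :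
    t • g' = g t := by
  have hray : HasDerivAt (fun u : 𝕜 => u • w) w t := by
    simpa only [id_eq, one_smul] using (hasDerivAt_id t).smul_const w
  rw [hg.unique (hray.congr_of_eventuallyEq hgw), hgw.eq_of_nhds]

theorem eq_inv_smul_mul_conj_of_smul_mul_eq {𝕜 : Type*} [RCLike 𝕜] {t : ℝ} {a b v : 𝕜}
    (ht : t ≠ 0) (ha : a ≠ 0) (h : t • (a * v) = b) :
    v = (t * ‖a‖ ^ 2)⁻¹ • (b * conj a) := by
  have hc : t * ‖a‖ ^ 2 ≠ 0 := by positivity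
  rw [eq_inv_smul_iff₀ hc, ← h]
  simp only [RCLike.real_smul_eq_coe_mul]
  push_cast
  rw [← RCLike.mul_conj a]
  ring

theorem deriv_is_positive_multiple_of_gradient_general {𝕜 : Type*} [RCLike 𝕜]
    {f : 𝕜 → 𝕜} {f' w γ' : 𝕜} {γ : ℝ → 𝕜} {t : ℝ} (ht : 0 < t) (hf : HasDerivAt f f' (γ t))
    (hf' : f' ≠ 0) (hγ : HasDerivAt γ γ' t) (hfγ : f ∘ γ =ᶠ[𝓝 t] fun u => u • w) :
    ∃ lam : ℝ, 0 < lam ∧ γ' = lam * f (γ t) * conj f' := by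
  have hvelocity : t • (f' * γ') = f (γ t) :=
    smul_eq_of_hasDerivAt_of_eventuallyEq_smul (hf.comp t hγ) hfγ
  refine ⟨(t * ‖f'‖ ^ 2)⁻¹, by positivity, ?_⟩
  rw [mul_assoc, ← RCLike.real_smul_eq_coe_mul]
  exact eq_inv_smul_mul_conj_of_smul_mul_eq ht.ne' hf' hvelocity

/-- Along a (reverse parameterized) path of steepest descent
`γ` for `|f|`, at any interior time `t` where `γ` is differentiable and
`f' (γ t) ≠ 0`, the velocity `γ'(t)` is a positive real multiple of
`f(γ(t)) ⬝ conj (f'(γ(t)))`, the gradient of `z ↦ |f z|` at `γ t` (up to a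
positive factor). -/
theorem deriv_is_positive_multiple_of_gradient
    (s : ℕ) (hs : 2 ≤ s)
    (α : Fin s → ℂ) (hα : Function.Injective α)
    (n : Fin s → ℕ) (hn : ∀ j, 1 ≤ n j)
    (f : Polynomial ℂ) (hf : f = ∏ j, (X - C (α j)) ^ n j)
    (β : ℂ) (hβ : f.eval β ≠ 0)
    (γ : ℝ → ℂ) (hγcont : ContinuousOn γ (Set.Icc 0 1))
    (hγ1 : γ 1 = β)
    (hγf : ∀ t ∈ Set.Icc (0 : ℝ) 1, f.eval (γ t) = (t : ℂ) * f.eval β)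
    (t : ℝ) (ht : t ∈ Set.Ioo (0 : ℝ) 1)
    (hdiff : DifferentiableAt ℝ γ t)
    (hf' : (derivative f).eval (γ t) ≠ 0) :
    ∃ lam : ℝ, 0 < lam ∧
      deriv γ t = (lam : ℂ) * f.eval (γ t) * starRingEnd ℂ ((derivative f).eval (γ t)) :=
  deriv_is_positive_multiple_of_gradient_general ht.1 (f.hasDerivAt (γ t)) hf' hdiff.hasDerivAt
    (Filter.eventually_of_mem (Icc_mem_nhds ht.1 ht.2) hγf)
end

section
/- Let z ∈ ℂ with z ∉ 𝒦. Then w := ∑_{j=1}^s n_j/(z − α_j) is nonzero, and the ray {z + t·conj(w) : t ≥ 0} meets 𝒦 only in ∅; that is, z + t·conj(w) ∉ 𝒦 for all t ≥ 0. -/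
open Polynomial Complex Set

/-!
Conjugation turns `c / (z - α)` into the nonnegative multiple `(c / ‖z - α‖²) • (z - α)` of the
vector from `α` to `z`. Summing, `conj w` is a positive multiple of `z - p`, where `p` is a weighted
mean of the `αⱼ` and hence a point of the hull. Were a point of the ray from `z` in the direction
`z - p` in the hull, then so would be `z`, which lies between that point and `p`.
-/

theorem sum_smul_sub_eq_smul_sub_centerMass {𝕜 E ι : Type*} [Field 𝕜] [AddCommGroup E] [Module 𝕜 E]
    {J : Finset ι} {m : ι → 𝕜} {a : ι → E} (z : E) (hm : ∑ j ∈ J, m j ≠ 0) :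
    ∑ j ∈ J, m j • (z - a j) = (∑ j ∈ J, m j) • (z - J.centerMass m a) := by
  simp only [smul_sub, Finset.sum_sub_distrib, Finset.sum_smul, Finset.centerMass,
    smul_inv_smul₀ hm]

section LinearOrderedField

variable {𝕜 E : Type*} [Field 𝕜] [LinearOrder 𝕜] [IsStrictOrderedRing 𝕜]
  [AddCommGroup E] [Module 𝕜 E] {s : Set E} {z : E}

theorem wbtw_add_smul_sub (p z : E) {t : 𝕜} (ht : 0 ≤ t) : Wbtw 𝕜 p z (z + t • (z - p)) := by
  have h := wbtw_smul_vadd_smul_vadd_of_nonneg_of_le p (z - p) zero_le_one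
    (le_add_of_nonneg_right ht : (1 : 𝕜) ≤ 1 + t)
  convert h using 1
  · simp
  · simp only [vadd_eq_add]
    module

theorem add_smul_sub_notMem_of_convex (hs : Convex 𝕜 s) {p : E} (hp : p ∈ s) (hz : z ∉ s)
    {t : 𝕜} (ht : 0 ≤ t) : z + t • (z - p) ∉ s :=
  fun hq ↦ hz (hs.segment_subset hp hq (wbtw_add_smul_sub p z ht).mem_segment)

variable {ι : Type*} {J : Finset ι} {m : ι → 𝕜} {a : ι → E}

theorem sum_smul_sub_ne_zero_of_convex (hs : Convex 𝕜 s) (ha : ∀ j ∈ J, a j ∈ s) (hz : z ∉ s)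
    (hm₀ : ∀ j ∈ J, 0 ≤ m j) (hm : 0 < ∑ j ∈ J, m j) : ∑ j ∈ J, m j • (z - a j) ≠ 0 := by
  rw [sum_smul_sub_eq_smul_sub_centerMass z hm.ne']
  have hp : J.centerMass m a ∈ s := hs.centerMass_mem hm₀ hm ha
  exact smul_ne_zero hm.ne' (sub_ne_zero.mpr (ne_of_mem_of_not_mem hp hz).symm)

theorem add_smul_sum_smul_sub_notMem_of_convex (hs : Convex 𝕜 s) (ha : ∀ j ∈ J, a j ∈ s)
    (hz : z ∉ s) (hm₀ : ∀ j ∈ J, 0 ≤ m j) (hm : 0 < ∑ j ∈ J, m j) {t : 𝕜} (ht : 0 ≤ t) :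
    z + t • ∑ j ∈ J, m j • (z - a j) ∉ s := by
  rw [sum_smul_sub_eq_smul_sub_centerMass z hm.ne', smul_smul]
  exact add_smul_sub_notMem_of_convex hs (hs.centerMass_mem hm₀ hm ha) hz (mul_nonneg ht hm.le)

end LinearOrderedField

theorem conj_ofReal_div_eq_smul (c : ℝ) (u : ℂ) :
    starRingEnd ℂ (c / u) = (c / normSq u) • u := by
  rw [div_eq_mul_inv, inv_def, real_smul, map_mul, map_mul, conj_conj, conj_ofReal, conj_ofReal]
  push_cast
  ring

theorem ray_away_from_hull_general {ι : Type*} {J : Finset ι} {α : ι → ℂ} {c : ι → ℝ} {K : Set ℂ}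
    {z : ℂ} (hK : Convex ℝ K) (hα : ∀ j ∈ J, α j ∈ K) (hz : z ∉ K) (hc₀ : ∀ j ∈ J, 0 ≤ c j)
    (hc : ∃ j ∈ J, 0 < c j) :
    (∑ j ∈ J, (c j : ℂ) / (z - α j)) ≠ 0 ∧
      ∀ t : ℝ, 0 ≤ t → z + (t : ℂ) * starRingEnd ℂ (∑ j ∈ J, (c j : ℂ) / (z - α j)) ∉ K := by
  set m : ι → ℝ := fun j ↦ c j / normSq (z - α j)
  have hm₀ : ∀ j ∈ J, 0 ≤ m j := fun j hj ↦ div_nonneg (hc₀ j hj) (normSq_nonneg _)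
  have hm : 0 < ∑ j ∈ J, m j := by
    obtain ⟨j, hj, hcj⟩ := hc
    have hzj : z - α j ≠ 0 := sub_ne_zero.mpr (ne_of_mem_of_not_mem (hα j hj) hz).symm
    exact Finset.sum_pos' hm₀ ⟨j, hj, div_pos hcj (normSq_pos.mpr hzj)⟩
  have hconj : starRingEnd ℂ (∑ j ∈ J, (c j : ℂ) / (z - α j)) = ∑ j ∈ J, m j • (z - α j) := by
    simp only [map_sum, conj_ofReal_div_eq_smul, m]
  rw [← _root_.map_ne_zero (starRingEnd ℂ), hconj]
  refine ⟨sum_smul_sub_ne_zero_of_convex hK hα hz hm₀ hm, fun t ht ↦ ?_⟩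
  rw [← real_smul]
  exact add_smul_sum_smul_sub_notMem_of_convex hK hα hz hm₀ hm ht

/-- If `z` lies outside the convex hull `K` of the roots of
`f`, then `w = ∑ⱼ nⱼ/(z − αⱼ)` is nonzero and the ray from `z` in the
direction `conj w` does not meet `K`. -/
theorem ray_away_from_hull
    (s : ℕ) (hs : 2 ≤ s)
    (α : Fin s → ℂ) (hα : Function.Injective α)
    (n : Fin s → ℕ) (hn : ∀ j, 1 ≤ n j)
    (K : Set ℂ) (hK : K = convexHull ℝ (Set.range α))
    (z : ℂ) (hz : z ∉ K) :
    (∑ j, (n j : ℂ) / (z - α j)) ≠ 0 ∧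
      ∀ t : ℝ, 0 ≤ t →
        z + (t : ℂ) * starRingEnd ℂ (∑ j, (n j : ℂ) / (z - α j)) ∉ K := by
  subst hK
  simpa only [ofReal_natCast] using
    ray_away_from_hull_general (J := .univ) (c := fun j ↦ n j) (convex_convexHull ℝ (range α))
      (fun j _ ↦ subset_convexHull ℝ _ (mem_range_self j)) hz (fun j _ ↦ (n j).cast_nonneg)
      ⟨⟨0, by omega⟩, Finset.mem_univ _, Nat.cast_pos.mpr (hn _)⟩
end

section
/- Let β ∈ ℂ with f(β) ≠ 0 and let γ : [0,∞) → ℂ be a continuous, piecewise continuously differentiable map with f(γ(t)) = t·f(β) for all t ≥ 0. If γ(t₀) ∉ 𝒦 for some t₀ > 0, then γ(t) ∉ 𝒦 for every t ≥ t₀. -/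
open Polynomial Complex Set

/-!
If `γ t₀ ∉ K`, some half-plane `{z | ⟪v, z⟫ ≥ ⟪v, γ t₀⟫}` contains no root of `f`. For `z` in it,
`f' z / f z = ∑ 1 / (z - a)` over the roots `a`, as in the Gauss–Lucas theorem, so
`Re (v * (f' z / f z)) > 0` and equivalently `⟪v, f z / f' z⟫ > 0`. Differentiating
`f (γ t) = t * f β` gives `γ' t = t⁻¹ * (f / f') (γ t)`, so `⟪v, γ t⟫` increases as long as `γ t`
stays in the half-plane, and `γ` can never leave it.
-/

open scoped RealInnerProductSpace Topology

lemma le_of_forall_le_imp_hasDerivWithinAt_pos {u u' : ℝ → ℝ} {a b : ℝ} (hab : a ≤ b)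
    (hu : ContinuousOn u (Icc a b))
    (hu' : ∀ t ∈ Ico a b, u a ≤ u t → HasDerivWithinAt u (u' t) (Ici t) t ∧ 0 < u' t) :
    u a ≤ u b := by
  have hclosed : IsClosed ({t | u a ≤ u t} ∩ Icc a b) := by
    rw [inter_comm]
    exact hu.preimage_isClosed_of_isClosed isClosed_Icc isClosed_Ici
  refine hclosed.Icc_subset_of_forall_mem_nhdsWithin (le_refl (u a)) ?_ (right_mem_Icc.2 hab)
  rintro t ⟨hat, ht⟩
  obtain ⟨hderiv, hpos⟩ := hu' t ht hat
  have hslope : ∀ᶠ r in 𝓝[>] t, 0 < slope u t r :=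
    ((hasDerivWithinAt_iff_tendsto_slope' self_notMem_Ioi).1 hderiv.Ioi_of_Ici).eventually
      (lt_mem_nhds hpos)
  filter_upwards [hslope, self_mem_nhdsWithin] with r hr htr
  exact hat.trans (slope_pos_iff_of_le htr.le |>.1 hr).le

lemma hasDerivWithinAt_of_comp_left {𝕜 𝕜' : Type*} [NontriviallyNormedField 𝕜]
    [NontriviallyNormedField 𝕜'] [NormedAlgebra 𝕜 𝕜'] {f : 𝕜' → 𝕜'} {γ h : 𝕜 → 𝕜'} {f' h' : 𝕜'}
    {s : Set 𝕜} {a : 𝕜} (hγ : ContinuousWithinAt γ s a) (hf : HasDerivAt f f' (γ a))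
    (hh : HasDerivWithinAt h h' s a) (hf' : f' ≠ 0) (hcomp : f ∘ γ =ᶠ[𝓝[s] a] h) (ha : a ∈ s) :
    HasDerivWithinAt γ (h' / f') s a := by
  have hf_restrict := (hf.hasFDerivAt.restrictScalars 𝕜).hasFDerivWithinAt (s := univ)
  have hleft : Function.LeftInverse
      ((ContinuousLinearMap.toSpanSingleton 𝕜' f'⁻¹).restrictScalars 𝕜)
      ((ContinuousLinearMap.toSpanSingleton 𝕜' f').restrictScalars 𝕜) := fun w => by simp [hf']
  have hγ_deriv := hf_restrict.of_comp_of_leftInverse (by simpa using hγ.tendsto)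
    hh.hasFDerivWithinAt hcomp hleft ha
  simpa [div_eq_mul_inv] using hγ_deriv.hasDerivWithinAt

lemma inner_inv_pos_iff_re_mul_pos {v w : ℂ} : 0 < ⟪v, w⁻¹⟫ ↔ 0 < (v * w).re := by
  rcases eq_or_ne w 0 with rfl | hw
  · simp
  have hinner : ⟪v, w⁻¹⟫ = (v * w).re / normSq w := by
    simp only [Complex.inner, mul_re, inv_re, inv_im, conj_re, conj_im]
    ring
  rw [hinner, div_pos_iff_of_pos_right (normSq_pos.2 hw)]

lemma inner_eval_div_eval_derivative_pos {f : ℂ[X]} (hf : 0 < f.degree) {v z : ℂ}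
    (hroots : ∀ a, f.IsRoot a → 0 < ⟪v, z - a⟫) :
    0 < ⟪v, f.eval z / f.derivative.eval z⟫ := by
  have hfz : f.eval z ≠ 0 := fun hz => by simpa using hroots z hz
  have hsplits : f.Splits := IsAlgClosed.splits f
  have hterm : ∀ a ∈ f.roots, 0 < (v * (1 / (z - a))).re := fun a ha => by
    rw [one_div, ← inner_inv_pos_iff_re_mul_pos, inv_inv]
    exact hroots a (isRoot_of_mem_roots ha)
  have hne : f.roots ≠ 0 :=
    hsplits.roots_ne_zero (natDegree_pos_iff_degree_pos.2 hf).ne'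
  rw [← inv_div, inner_inv_pos_iff_re_mul_pos, hsplits.eval_derivative_div_eval_of_ne_zero hfz]
  calc 0 = (f.roots.map fun _ => (0 : ℝ)).sum := by simp
    _ < (f.roots.map fun a => (v * (1 / (z - a))).re).sum :=
      Multiset.sum_lt_sum_of_nonempty hne hterm
    _ = (v * (f.roots.map fun a => 1 / (z - a)).sum).re := by
      rw [← Multiset.sum_map_mul_left, ← coe_reAddGroupHom, map_multiset_sum, Multiset.map_map]
      rfl

section Lift

variable {f : ℂ[X]} {b : ℂ} {γ : ℝ → ℂ} {t₀ : ℝ}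

lemma degree_pos_of_eval_eq_mul (hroot : ¬ f.IsRoot (γ t₀))
    (hγf : ∀ t, t₀ ≤ t → f.eval (γ t) = t * b) : 0 < f.degree := by
  have hb : b ≠ 0 := by
    rintro rfl
    exact hroot (by rw [IsRoot, hγf t₀ le_rfl, mul_zero])
  by_contra! hdeg
  rw [eq_C_of_degree_le_zero hdeg] at hγf
  have h₀ := hγf t₀ le_rfl
  have h₁ := hγf (t₀ + 1) (by linarith)
  simp only [eval_C] at h₀ h₁
  push_cast at h₁
  exact hb (by linear_combination h₀ - h₁)

lemma hasDerivWithinAt_of_eval_eq_mul (hγ : ContinuousOn γ (Ici t₀))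
    (hγf : ∀ t, t₀ ≤ t → f.eval (γ t) = t * b) {t : ℝ} (ht : t₀ ≤ t) (ht' : t ≠ 0)
    (hd : f.derivative.eval (γ t) ≠ 0) :
    HasDerivWithinAt γ (t⁻¹ • (f.eval (γ t) / f.derivative.eval (γ t))) (Ici t) t := by
  have hline : HasDerivWithinAt (fun r : ℝ => (r : ℂ) * b) b (Ici t) t := by
    simpa only [ofRealCLM_apply, one_mul, ofReal_one]
      using (ofRealCLM.hasDerivWithinAt (s := Ici t) (x := t)).mul_const b
  have hquot : t⁻¹ • (f.eval (γ t) / f.derivative.eval (γ t)) = b / f.derivative.eval (γ t) := by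
    rw [hγf t ht, mul_div_assoc, ← real_smul, inv_smul_smul₀ ht']
  rw [hquot]
  have hcomp : EqOn ((fun z => f.eval z) ∘ γ) (fun r : ℝ => (r : ℂ) * b) (Ici t) :=
    fun r hr => hγf r (ht.trans hr)
  exact hasDerivWithinAt_of_comp_left ((hγ t ht).mono (Ici_subset_Ici.2 ht)) (f.hasDerivAt (γ t))
    hline hd hcomp.eventuallyEq_nhdsWithin self_mem_Ici

lemma inner_le_inner_of_eval_eq_mul (ht₀ : 0 < t₀) (hγ : ContinuousOn γ (Ici t₀))
    (hγf : ∀ t, t₀ ≤ t → f.eval (γ t) = t * b) {v : ℂ}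
    (hroots : ∀ a, f.IsRoot a → ⟪v, a⟫ < ⟪v, γ t₀⟫) {t : ℝ} (ht : t₀ ≤ t) :
    ⟪v, γ t₀⟫ ≤ ⟪v, γ t⟫ := by
  have hdeg : 0 < f.degree :=
    degree_pos_of_eval_eq_mul (fun hroot => (hroots _ hroot).false) hγf
  refine le_of_forall_le_imp_hasDerivWithinAt_pos (u := fun r => ⟪v, γ r⟫)
    (u' := fun r => ⟪v, r⁻¹ • (f.eval (γ r) / f.derivative.eval (γ r))⟫) ht
    (continuousOn_const.inner (hγ.mono Icc_subset_Ici_self)) fun r hr hle => ?_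
  have hr₀ : 0 < r := ht₀.trans_le hr.1
  have hnewton : 0 < ⟪v, f.eval (γ r) / f.derivative.eval (γ r)⟫ :=
    inner_eval_div_eval_derivative_pos hdeg fun a ha => by
      rw [inner_sub_right]
      exact sub_pos.2 ((hroots a ha).trans_le hle)
  have hd : f.derivative.eval (γ r) ≠ 0 := fun h => by simp [h] at hnewton
  constructor
  · simpa using (hasDerivWithinAt_const r (Ici r) v).inner ℝ
      (hasDerivWithinAt_of_eval_eq_mul hγ hγf hr.1 hr₀.ne' hd)
  · rw [real_inner_smul_right]
    positivity

theorem once_out_stays_out_general {K : Set ℂ} (hKconv : Convex ℝ K) (hKclosed : IsClosed K)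
    (hroots : ∀ a, f.IsRoot a → a ∈ K) (ht₀ : 0 < t₀) (hγ : ContinuousOn γ (Ici t₀))
    (hγf : ∀ t, t₀ ≤ t → f.eval (γ t) = t * b) (hout : γ t₀ ∉ K) {t : ℝ} (ht : t₀ ≤ t) :
    γ t ∉ K := by
  obtain ⟨φ, c, hφK, hφout⟩ := geometric_hahn_banach_closed_point hKconv hKclosed hout
  set v := (InnerProductSpace.toDual ℝ ℂ).symm φ
  have hv (z : ℂ) : ⟪v, z⟫ = φ z := InnerProductSpace.toDual_symm_apply
  have hφle : φ (γ t₀) ≤ φ (γ t) := by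
    simpa only [hv] using inner_le_inner_of_eval_eq_mul (v := v) ht₀ hγ hγf
      (fun a ha => by simpa only [hv] using (hφK a (hroots a ha)).trans hφout) ht
  exact fun hin => (hφK _ hin).not_ge (hφout.le.trans hφle)

end Lift

lemma mem_range_of_isRoot_prod_X_sub_C_pow {R ι : Type*} [CommRing R] [IsDomain R] [Fintype ι]
    {α : ι → R} {n : ι → ℕ} {z : R} (hz : (∏ j, (X - C (α j)) ^ n j).IsRoot z) :
    z ∈ range α := by
  rw [IsRoot, eval_prod, Finset.prod_eq_zero_iff] at hz
  obtain ⟨j, -, hj⟩ := hz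
  rw [eval_pow, eval_sub, eval_X, eval_C] at hj
  exact ⟨j, (sub_eq_zero.1 (eq_zero_of_pow_eq_zero hj)).symm⟩

/-- A path of steepest ascent for `|f|` (parameterized by a
lift `γ` of the line `t ↦ t • f β` on `[0, ∞)`) which leaves the convex hull
`K` of the roots of `f` never comes back to `K`. -/
theorem once_out_stays_out
    (s : ℕ) (hs : 2 ≤ s)
    (α : Fin s → ℂ) (hα : Function.Injective α)
    (n : Fin s → ℕ) (hn : ∀ j, 1 ≤ n j)
    (f : Polynomial ℂ) (hf : f = ∏ j, (X - C (α j)) ^ n j)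
    (K : Set ℂ) (hK : K = convexHull ℝ (Set.range α))
    (β : ℂ) (hβ : f.eval β ≠ 0)
    (γ : ℝ → ℂ)
    (hγcont : ContinuousOn γ (Set.Ici 0))
    (hγpc : ∀ b : ℝ, 0 < b → PiecewiseC1On γ 0 b)
    (hγf : ∀ t : ℝ, 0 ≤ t → f.eval (γ t) = (t : ℂ) * f.eval β)
    (t₀ : ℝ) (ht₀ : 0 < t₀) (hout : γ t₀ ∉ K) :
    ∀ t : ℝ, t₀ ≤ t → γ t ∉ K := by
  subst hf hK
  exact fun t ht => once_out_stays_out_general (convex_convexHull ℝ _)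
    ((finite_range α).isClosed_convexHull ℝ)
    (fun a ha => subset_convexHull ℝ _ (mem_range_of_isRoot_prod_X_sub_C_pow ha)) ht₀
    (hγcont.mono (Ici_subset_Ici.2 ht₀.le)) (fun t ht => hγf t (ht₀.le.trans ht)) hout ht
end
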